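/- Let K be an algebraically closed field of characteristic p > 0 and let F ∈ K[x,y,z] be a homogeneous polynomial of degree 3 such that R = K[x,y,z]/(F) is a normal integral domain. Then for every ideal I ⊆ R that is generated by homogeneous elements and whose radical equals the irrelevant maximal ideal R_+ (the image of (x,y,z)), the tight closure and the plus closure coincide: I^* = I^+. -/

import Mathlib

/-!
The plus closure of an ideal of a domain always lies in its tight closure: a nonzero `R`-linear form
on the module-finite extension carries the relations for `f ^ q` back to `R`
(`plusClosure_subset_tightClosure`). If `F = 0`, then `R` is a polynomial ring, in which every ideal
is tightly closed. The content is the other inclusion for `F ≠ 0`.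

*Test elements.* A normal cubic is smooth (`smooth`), so powers of the variables lie in its Jacobian
ideal. Partial derivatives of `F` are test elements (`pderiv_mul_pow_mem`). Hence `f ∈ I^*` yields
`X i ^ N * f ^ q ∈ I^[q]` with one `N` for all `q` (`exists_X_pow_mul_mem`), and these relations can be
split into homogeneous components.

*Curves.* After a linear change of coordinates with `F(0,0,1) ≠ 0` and `∂F/∂z ≠ 0`, one dehomogenizes
and works on the elliptic curve, covered by two affine charts `A` and `A'`. A `Level` is a curve with
trivial dualizing sheaf in this presentation, Serre duality being encoded by a residue functional `ρ`
on the overlap of the charts; for the plane cubic the residue is written down explicitly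
(`CubicField.level`). A section `Φ` that is not a combination of the sections `G i` is detected by a
function `h` on the overlap with `ρ (h * Φ) ≠ 0`, for which each `h * G i` splits into a part `P i`
on `A` and a part on `A'` (`exists_good`). The tight closure relations show: if all `P i` vanish at a
point, then some Frobenius pullback of the cohomology class of `h * Φ` is represented by a function
vanishing to high order there, and in particular is zero (`Good.pow_split`).

*Ordinary case.* If Frobenius is bijective on the first cohomology of the structure sheaf, then the
class of `h * Φ` itself vanishes when all `P i` vanish at a point. Thus the tuple `P` has no zero. An
Artin–Schreier covering, which is again an ordinary `Level`, kills the class. Repeating this on the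
covering, the tuples obtained stay linearly independent at every point, so the process stops after at
most as many steps as there are `G i`: on some covering `Φ` is a combination of the `G i`
(`exists_mem_W`).

*Supersingular case.* Frobenius kills the first cohomology. Write `v₀ ^ p = α + α'` with `α ∈ A`,
`α' ∈ A'`, where `v₀` generates the cohomology. The differential of `α` is not zero, since otherwise
`α` would be a `p`-th power and `v₀` would split; at a point where it does not vanish the same
independence argument works, with coverings replaced by Frobenius pullbacks (`exists_pow_mem_W`).

*Conclusion.* In both cases some `Φ ^ q` is a combination of the `G i ^ q` on a covering. The section
ring of the covering is finite over `R` by way of the `q`-th power map followed by pullback, and this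
module-finite extension shows that `f` lies in the plus closure (`mem_plusClosure_of_generic`).
-/

set_option autoImplicit false

/-- The Frobenius power `I^[q]` of an ideal. -/
def bracketPow {R : Type} [CommRing R] (I : Ideal R) (q : ℕ) : Ideal R :=
  Ideal.span ((fun a => a ^ q) '' (I : Set R))

/-- The tight closure of an ideal `I` in characteristic `p`. -/
def tightClosure {R : Type} [CommRing R] (p : ℕ) (I : Ideal R) : Set R :=
  {f | ∃ c : R, c ≠ 0 ∧ ∃ e₀ : ℕ, ∀ e ≥ e₀, c * f ^ p ^ e ∈ bracketPow I (p ^ e)}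

/-- The plus closure of an ideal `I`: all `f` contained in `IS` for some module-finite
extension of integral domains `R ⊆ S`. -/
def plusClosure (R : Type) [CommRing R] (I : Ideal R) : Set R :=
  {f | ∃ (S : Type) (_ : CommRing S) (_ : IsDomain S) (φ : R →+* S),
    Function.Injective φ ∧ φ.Finite ∧ φ f ∈ I.map φ}

/-! ### Frobenius powers, and plus closure inside tight closure -/

section

open MvPolynomial

lemma bracketPow_eq_map {R : Type} [CommRing R] (p : ℕ) [Fact p.Prime] [CharP R p] (I : Ideal R)
    (e : ℕ) : bracketPow I (p ^ e) = I.map (iterateFrobenius R p e) := by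
  unfold bracketPow Ideal.map
  congr 1

/-- A module-finite extension of domains has an `R`-linear form not vanishing at `1`. -/
lemma exists_linear_form {R S : Type} [CommRing R] [IsDomain R] [CommRing S] [IsDomain S]
    [Algebra R S] [FaithfulSMul R S] [Module.Finite R S] :
    ∃ θ : S →ₗ[R] R, θ 1 ≠ 0 := by
  classical
  let L := FractionRing R
  let E := FractionRing S
  letI : Algebra L E := FractionRing.liftAlgebra R E
  haveI : IsScalarTower R L E := FractionRing.isScalarTower_liftAlgebra R E
  obtain ⟨π, hπ⟩ := (Algebra.linearMap L E).exists_leftInverse_of_injective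
    (LinearMap.ker_eq_bot.mpr (algebraMap L E).injective)
  have hπ1 : π 1 = 1 := by
    have := LinearMap.congr_fun hπ 1
    simpa using this
  let ψ : S →ₗ[R] L := (π.restrictScalars R).comp (IsScalarTower.toAlgHom R S E).toLinearMap
  obtain ⟨G, hG⟩ := (Module.Finite.fg_top : (⊤ : Submodule R S).FG)
  obtain ⟨b, hb⟩ := IsLocalization.exist_integer_multiples_of_finset (nonZeroDivisors R)
    (G.image ψ)
  have hall : ∀ s : S, (b : R) • ψ s ∈ LinearMap.range (Algebra.linearMap R L) := by
    intro s
    have hs : s ∈ Submodule.span R (G : Set S) := by rw [hG]; trivial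
    induction hs using Submodule.span_induction with
    | mem x hx =>
      obtain ⟨r, hr⟩ := hb (ψ x) (Finset.mem_image_of_mem _ hx)
      exact ⟨r, hr⟩
    | zero => simp
    | add x y _ _ hx hy => rw [map_add, smul_add]; exact Submodule.add_mem _ hx hy
    | smul a x _ hx => rw [map_smul, smul_comm]; exact Submodule.smul_mem _ _ hx
  have hinj : Function.Injective (Algebra.linearMap R L) := IsFractionRing.injective R L
  let θ : S →ₗ[R] R := (LinearEquiv.ofInjective _ hinj).symm.toLinearMap.comp
    (((b : R) • ψ).codRestrict _ hall)
  refine ⟨θ, fun h => ?_⟩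
  have h2 : (((b : R) • ψ).codRestrict _ hall) 1 = 0 := by
    exact (LinearEquiv.ofInjective _ hinj).symm.map_eq_zero_iff.mp h
  have h3 := congrArg Subtype.val h2
  have h4 : ψ 1 = 1 := by simp [ψ, hπ1]
  simp only [LinearMap.codRestrict_apply, LinearMap.smul_apply, h4, ZeroMemClass.coe_zero,
    Algebra.smul_def, mul_one] at h3
  exact nonZeroDivisors.coe_ne_zero b (hinj (by simpa using h3))

lemma plusClosure_subset_tightClosure {R : Type} [CommRing R] [IsDomain R] (p : ℕ)
    [Fact p.Prime] [CharP R p] (I : Ideal R) : plusClosure R I ⊆ tightClosure p I := by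
  rintro f ⟨S, _, _, φ, hinj, hfin, hf⟩
  letI := φ.toAlgebra
  haveI : FaithfulSMul R S := (faithfulSMul_iff_algebraMap_injective R S).mpr hinj
  haveI : Module.Finite R S := hfin
  haveI : CharP S p := charP_of_injective_ringHom hinj p
  obtain ⟨θ, hθ⟩ := exists_linear_form (R := R) (S := S)
  refine ⟨θ 1, hθ, 0, fun e _ => ?_⟩
  have h1 : φ (f ^ p ^ e) ∈ (bracketPow I (p ^ e)).map φ := by
    rw [bracketPow_eq_map, Ideal.map_map]
    have h2 := Ideal.mem_map_of_mem (iterateFrobenius S p e) hf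
    rw [Ideal.map_map] at h2
    have hc : (iterateFrobenius S p e).comp φ = φ.comp (iterateFrobenius R p e) := by
      ext a; simp [iterateFrobenius_def]
    rw [hc] at h2
    simpa [iterateFrobenius_def] using h2
  have h2 : φ (f ^ p ^ e) ∈ ((bracketPow I (p ^ e)) • (⊤ : Submodule R S)) := by
    rw [Ideal.smul_top_eq_map]; exact h1
  have h3 := Submodule.mem_map_of_mem (f := θ) h2
  rw [Submodule.map_smul''] at h3
  have h4 : θ (φ (f ^ p ^ e)) = θ 1 * f ^ p ^ e := by
    have : φ (f ^ p ^ e) = (f ^ p ^ e) • (1 : S) := by rw [Algebra.smul_def, mul_one]; rfl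
    rw [this, map_smul, smul_eq_mul, mul_comm]
  rw [h4] at h3
  have h5 : bracketPow I (p ^ e) • Submodule.map θ ⊤ ≤ bracketPow I (p ^ e) :=
    Submodule.smul_le.mpr fun r hr n _ => Ideal.mul_mem_right n _ hr
  exact h5 h3

end

/-! ### Ideals of the polynomial ring are tightly closed -/

section

open MvPolynomial

/-- Additive extraction along the residue class `β` modulo `q = p ^ e`: the terms of
`h` with exponent congruent to `β` add up to `X ^ β * h' ^ q` for some `h'`. -/
lemma exists_extract {K : Type} [Field K] [IsAlgClosed K] {p : ℕ} [Fact p.Prime] [CharP K p]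
    (e : ℕ) (β : Fin 3 →₀ ℕ) (h : MvPolynomial (Fin 3) K) :
    ∃ h' : MvPolynomial (Fin 3) K, ∀ n,
      coeff n h' = (iterateFrobeniusEquiv K p e).symm (coeff (p ^ e • n + β) h) := by
  classical
  have hp : 0 < p ^ e := pow_pos (Fact.out : p.Prime).pos _
  have hinj : Function.Injective (fun n : Fin 3 →₀ ℕ => p ^ e • n + β) := by
    intro a b hab
    ext i
    have := DFunLike.congr_fun hab i
    simp only [Finsupp.coe_add, Finsupp.coe_smul, Pi.add_apply, Pi.smul_apply, smul_eq_mul,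
      add_left_inj] at this
    exact Nat.eq_of_mul_eq_mul_left hp this
  have hfin : ((fun n : Fin 3 →₀ ℕ => p ^ e • n + β) ⁻¹' (h.support : Set (Fin 3 →₀ ℕ))).Finite :=
    h.support.finite_toSet.preimage hinj.injOn
  refine ⟨∑ n ∈ hfin.toFinset, monomial n
    ((iterateFrobeniusEquiv K p e).symm (coeff (p ^ e • n + β) h)), fun n => ?_⟩
  rw [coeff_sum]
  simp only [coeff_monomial]
  rw [Finset.sum_ite_eq']
  split_ifs with hn
  · rfl
  · simp only [Set.Finite.mem_toFinset, Set.mem_preimage, Finset.mem_coe, mem_support_iff,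
      not_not] at hn
    rw [hn, map_zero]

/-- Elements of a polynomial ring are not in the tight closure of an ideal they do not belong
to. -/
lemma mem_of_tight_polynomial {K : Type} [Field K] [IsAlgClosed K] {p : ℕ} [Fact p.Prime]
    [CharP K p] (J : Ideal (MvPolynomial (Fin 3) K)) (c g : MvPolynomial (Fin 3) K) (hc : c ≠ 0)
    (e₀ : ℕ) (h : ∀ e ≥ e₀, c * g ^ p ^ e ∈ bracketPow J (p ^ e)) : g ∈ J := by
  classical
  obtain ⟨β, hβ⟩ := MvPolynomial.support_nonempty.mpr hc
  have hp1 : 1 < p := (Fact.out : p.Prime).one_lt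
  obtain ⟨e, hee, hed⟩ : ∃ e ≥ e₀, c.totalDegree < p ^ e := by
    refine ⟨max e₀ c.totalDegree, le_max_left _ _, ?_⟩
    exact (le_max_right _ _).trans_lt (Nat.lt_pow_self hp1)
  have hβq : ∀ i, β i < p ^ e := fun i =>
    lt_of_le_of_lt ((Finsupp.le_degree i β).trans (le_totalDegree hβ)) hed
  choose Φ hΦ using exists_extract (K := K) (p := p) e β
  have hadd : ∀ a b, Φ (a + b) = Φ a + Φ b := by
    intro a b; ext n; simp [hΦ]
  have hmul : ∀ g a, Φ (a * g ^ p ^ e) = Φ a * g := by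
    intro g
    induction g using MvPolynomial.induction_on' with
    | add g₁ g₂ h₁ h₂ => intro a; rw [add_pow_char_pow, mul_add, hadd, h₁, h₂, mul_add]
    | monomial m r =>
      intro a; ext n
      rw [hΦ, monomial_pow, coeff_mul_monomial', coeff_mul_monomial', hΦ]
      have hiff : p ^ e • m ≤ p ^ e • n + β ↔ m ≤ n := by
        constructor
        · intro hle i
          have h1 := hle i
          have h2 := hβq i
          simp only [Finsupp.coe_add, Finsupp.coe_smul, Pi.add_apply, Pi.smul_apply,
            smul_eq_mul] at h1
          by_contra hlt
          push Not at hlt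
          have : p ^ e * (n i + 1) ≤ p ^ e * m i := Nat.mul_le_mul_left _ hlt
          rw [mul_add, mul_one] at this
          omega
        · intro hle i
          have := Nat.mul_le_mul_left (p ^ e) (hle i)
          simp only [Finsupp.coe_add, Finsupp.coe_smul, Pi.add_apply, Pi.smul_apply,
            smul_eq_mul]
          omega
      by_cases hmn : m ≤ n
      · rw [if_pos (hiff.mpr hmn), if_pos hmn, map_mul]
        congr 1
        · congr 2
          ext i
          have := Nat.mul_le_mul_left (p ^ e) (hmn i)
          simp only [Finsupp.coe_add, Finsupp.coe_smul, Pi.add_apply, Pi.smul_apply,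
            smul_eq_mul, Finsupp.coe_tsub, Pi.sub_apply, Nat.mul_sub]
          omega
        · rw [RingEquiv.symm_apply_eq]; simp [iterateFrobenius_def]
      · rw [if_neg (fun hh => hmn (hiff.mp hh)), if_neg hmn, map_zero]
  have hJ : ∀ w ∈ bracketPow J (p ^ e), ∀ a, Φ (a * w) ∈ J := by
    intro w hw
    unfold bracketPow at hw
    induction hw using Submodule.span_induction with
    | mem x hx =>
      obtain ⟨b, hb, rfl⟩ := hx
      intro a; simp only [hmul]; exact J.mul_mem_left _ hb
    | zero =>
      intro a
      have : Φ 0 = 0 := by simpa using hadd 0 0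
      rw [mul_zero, this]; exact J.zero_mem
    | add x y _ _ hx hy => intro a; rw [mul_add, hadd]; exact J.add_mem (hx a) (hy a)
    | smul b x _ hx => intro a; rw [smul_eq_mul, ← mul_assoc]; exact hx _
  have h1 := hJ _ (h e hee) 1
  rw [one_mul, hmul] at h1
  have hΦc : Φ c = C ((iterateFrobeniusEquiv K p e).symm (coeff β c)) := by
    ext n
    rw [hΦ, coeff_C]
    split_ifs with hn
    · subst hn; simp
    · have : coeff (p ^ e • n + β) c = 0 := by
        apply coeff_eq_zero_of_totalDegree_lt
        obtain ⟨i, hi⟩ := Finsupp.ne_iff.mp (Ne.symm hn)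
        have h2 := Finsupp.le_degree i (p ^ e • n + β)
        refine lt_of_lt_of_le hed (le_trans ?_ h2)
        simp only [Finsupp.coe_add, Finsupp.coe_smul, Pi.add_apply, Pi.smul_apply, smul_eq_mul]
        have : 1 ≤ n i := Nat.one_le_iff_ne_zero.mpr (by simpa using hi)
        nlinarith [Nat.mul_le_mul_left (p ^ e) this]
      rw [this, map_zero]
  have hne : (iterateFrobeniusEquiv K p e).symm (coeff β c) ≠ 0 := by
    rw [Ne, map_eq_zero_iff _ (RingEquiv.injective _)]
    exact mem_support_iff.mp hβ
  have hu : IsUnit (Φ c) := by rw [hΦc]; exact (IsUnit.mk0 _ hne).map C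
  exact (Ideal.unit_mul_mem_iff_mem J hu).mp h1

end

/-! ### Translations and directional derivatives -/

section

open MvPolynomial

/-- The identity holds over any commutative ring, although comparing coefficients in
`(Φ ^ (n + 1))' = (n + 1) * Φ ^ n * Φ'` only gives it up to the factor `n + 1`: it is proved over a
polynomial ring over `ℤ`, where this factor can be cancelled, and specialised. -/
lemma coeff_pow_mul_derivative {A : Type} [CommRing A] (Φ : Polynomial A) (n : ℕ) :
    (Φ ^ n * Polynomial.derivative Φ).coeff n = (Φ ^ (n + 1)).coeff (n + 1) := by
  let π : MvPolynomial A ℤ →+* A := (aeval (R := ℤ) (id : A → A)).toRingHom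
  have hπ : Function.Surjective π := fun a => ⟨X a, by simp [π]⟩
  obtain ⟨Ψ, rfl⟩ := Polynomial.map_surjective π hπ Φ
  have key : (Ψ ^ n * Polynomial.derivative Ψ).coeff n = (Ψ ^ (n + 1)).coeff (n + 1) := by
    have h := congrArg (fun g => Polynomial.coeff g n) (Polynomial.derivative_pow_succ Ψ n)
    simp only [Polynomial.coeff_derivative, mul_assoc, Polynomial.coeff_C_mul] at h
    have hn : ((n : MvPolynomial A ℤ) + 1) ≠ 0 := by exact_mod_cast Nat.succ_ne_zero n
    rw [mul_comm] at h
    exact (mul_left_cancel₀ hn h).symm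
  rw [Polynomial.derivative_map, ← Polynomial.map_pow, ← Polynomial.map_mul, Polynomial.coeff_map,
    key, ← Polynomial.map_pow, Polynomial.coeff_map]

section Tau

variable {K : Type} [Field K]

/-- Translation by `T v`: the substitution `X i ↦ X i + v i * T`. -/
noncomputable def tau (v : Fin 3 → K) :
    MvPolynomial (Fin 3) K →ₐ[K] Polynomial (MvPolynomial (Fin 3) K) :=
  aeval fun i => Polynomial.C (X i) + Polynomial.C (C (v i)) * Polynomial.X

/-- The directional derivative in the direction `v`. -/
noncomputable def dirDeriv (v : Fin 3 → K) (g : MvPolynomial (Fin 3) K) :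
    MvPolynomial (Fin 3) K :=
  ∑ i, C (v i) * pderiv i g

lemma tau_X (v : Fin 3 → K) (i : Fin 3) : tau v (X i) =
    Polynomial.C (X i) + Polynomial.C (C (v i)) * Polynomial.X := by
  simp [tau]

lemma tau_C (v : Fin 3 → K) (a : K) : tau v (C a) = Polynomial.C (C a) := by
  have h := (tau v).commutes a
  rw [IsScalarTower.algebraMap_apply K (MvPolynomial (Fin 3) K)
    (Polynomial (MvPolynomial (Fin 3) K))] at h
  exact h

lemma tau_coeff_zero (v : Fin 3 → K) (g : MvPolynomial (Fin 3) K) : (tau v g).coeff 0 = g := by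
  induction g using MvPolynomial.induction_on with
  | C a => simp [tau_C]
  | add a b ha hb => rw [map_add, Polynomial.coeff_add, ha, hb]
  | mul_X a i ha => rw [map_mul, Polynomial.mul_coeff_zero, ha, tau_X]; simp

lemma derivative_tau (v : Fin 3 → K) (g : MvPolynomial (Fin 3) K) :
    Polynomial.derivative (tau v g) = tau v (dirDeriv v g) := by
  induction g using MvPolynomial.induction_on with
  | C a => simp [tau_C, dirDeriv]
  | add a b ha hb => simp only [map_add, ha, hb, dirDeriv, mul_add, Finset.sum_add_distrib]
  | mul_X a i ha =>
    have h : dirDeriv v (a * X i) = dirDeriv v a * X i + a * C (v i) := by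
      simp only [dirDeriv, Derivation.leibniz, pderiv_X, smul_eq_mul, mul_add,
        Finset.sum_add_distrib, Finset.sum_mul]
      rw [add_comm]
      congr 1
      · exact Finset.sum_congr rfl fun j _ => by ring
      · simp [Pi.single_apply, mul_comm]
    rw [h, map_mul, Polynomial.derivative_mul, ha, map_add (tau v), map_mul (tau v),
      map_mul (tau v), tau_X, tau_C]
    simp

lemma tau_coeff_one (v : Fin 3 → K) (g : MvPolynomial (Fin 3) K) :
    (tau v g).coeff 1 = dirDeriv v g := by
  have h := tau_coeff_zero v (dirDeriv v g)
  rw [← derivative_tau, Polynomial.coeff_derivative] at h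
  simpa using h

variable {p : ℕ} [Fact p.Prime] [CharP K p]

lemma coeff_mul_tau_pow (v : Fin 3 → K) (g : MvPolynomial (Fin 3) K)
    (h : Polynomial (MvPolynomial (Fin 3) K)) (e n : ℕ) (hn : n < p ^ e) :
    (h * tau v g ^ p ^ e).coeff n = h.coeff n * g ^ p ^ e := by
  have h1 : Polynomial.X ∣ tau v g - Polynomial.C g := by
    rw [Polynomial.X_dvd_iff]; simp [tau_coeff_zero]
  obtain ⟨r, hr⟩ := h1
  have h2 : tau v g ^ p ^ e = Polynomial.C (g ^ p ^ e) + Polynomial.X ^ p ^ e * r ^ p ^ e := by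
    rw [eq_add_of_sub_eq' hr, add_pow_char_pow, mul_pow, Polynomial.C_pow]
  rw [h2, mul_add, Polynomial.coeff_add, Polynomial.coeff_mul_C, mul_left_comm,
    Polynomial.coeff_X_pow_mul', if_neg (by omega), add_zero]

lemma coeff_tau_mem (v : Fin 3 → K) (J : Ideal (MvPolynomial (Fin 3) K)) (e n : ℕ)
    (hn : n < p ^ e) (w : MvPolynomial (Fin 3) K) (hw : w ∈ bracketPow J (p ^ e)) :
    (tau v w).coeff n ∈ bracketPow J (p ^ e) := by
  have key : ∀ a : MvPolynomial (Fin 3) K, (tau v (a * w)).coeff n ∈ bracketPow J (p ^ e) := by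
    unfold bracketPow at hw
    induction hw using Submodule.span_induction with
    | mem x hx =>
      obtain ⟨b, hb, rfl⟩ := hx
      intro a
      simp only [map_mul, map_pow]
      rw [coeff_mul_tau_pow v b _ e n hn]
      exact Ideal.mul_mem_left _ _ (Ideal.subset_span ⟨b, hb, rfl⟩)
    | zero => intro a; simp
    | add x y _ _ hx hy =>
      intro a; rw [mul_add, map_add, Polynomial.coeff_add]; exact Ideal.add_mem _ (hx a) (hy a)
    | smul b x _ hx => intro a; rw [smul_eq_mul, ← mul_assoc]; exact hx _
  simpa using key 1

/-- If `c` is invariant under translation by `v`, then `c` times `f ^ q` lying in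
`J^[q] + (F)` forces `c * (∂_v F * f) ^ q` to lie in `J^[q]`. -/
lemma mul_dirDeriv_pow_mem (v : Fin 3 → K) (J : Ideal (MvPolynomial (Fin 3) K))
    (F c f : MvPolynomial (Fin 3) K) (hFJ : F ∈ J) (hc : tau v c = Polynomial.C c) (e : ℕ)
    (h : c * f ^ p ^ e ∈ bracketPow J (p ^ e) ⊔ Ideal.span {F}) :
    c * (dirDeriv v F * f) ^ p ^ e ∈ bracketPow J (p ^ e) := by
  obtain ⟨n, hn⟩ : ∃ n, p ^ e = n + 1 :=
    ⟨p ^ e - 1, (Nat.succ_pred_eq_of_pos (pow_pos (Fact.out : p.Prime).pos e)).symm⟩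
  have hFq : F ^ p ^ e ∈ bracketPow J (p ^ e) := Ideal.subset_span ⟨F, hFJ, rfl⟩
  obtain ⟨a, ha, b, hb, hab⟩ := Submodule.mem_sup.mp h
  obtain ⟨d, rfl⟩ := Ideal.mem_span_singleton'.mp hb
  have h1 : c * (F ^ n * dirDeriv v F) * f ^ p ^ e ∈ bracketPow J (p ^ e) := by
    have : c * (F ^ n * dirDeriv v F) * f ^ p ^ e =
        (F ^ n * dirDeriv v F) * a + (dirDeriv v F * d) * F ^ p ^ e := by
      rw [mul_right_comm, ← hab, hn, pow_succ F]; ring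
    rw [this]
    exact Ideal.add_mem _ (Ideal.mul_mem_left _ _ ha) (Ideal.mul_mem_left _ _ hFq)
  have h2 := coeff_tau_mem v J e n (by omega) _ h1
  rw [map_mul, map_pow (tau v) f, coeff_mul_tau_pow v f _ e n (by omega), map_mul, hc, map_mul,
    map_pow, ← derivative_tau, Polynomial.coeff_C_mul, coeff_pow_mul_derivative, ← hn] at h2
  have h3 := coeff_mul_tau_pow (p := p) v F 1 e 0 (by omega)
  have h4 : (tau v F ^ p ^ e).coeff (p ^ e) = dirDeriv v F ^ p ^ e := by
    have h1 : Polynomial.X ∣ tau v F - Polynomial.C F := by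
      rw [Polynomial.X_dvd_iff]; simp [tau_coeff_zero]
    obtain ⟨r, hr⟩ := h1
    have h2 : tau v F = Polynomial.C F + Polynomial.X * r := eq_add_of_sub_eq' hr
    have h5 : r.coeff 0 = dirDeriv v F := by
      rw [← tau_coeff_one, h2, Polynomial.coeff_add, Polynomial.coeff_C, Polynomial.coeff_X_mul]
      simp
    rw [h2, add_pow_char_pow, mul_pow, ← Polynomial.C_pow, Polynomial.coeff_add,
      Polynomial.coeff_C, if_neg (pow_pos (Fact.out : p.Prime).pos e).ne', zero_add,
      Polynomial.coeff_X_pow_mul', if_pos le_rfl, Nat.sub_self, Polynomial.coeff_zero_eq_eval_zero,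
      Polynomial.eval_pow, ← Polynomial.coeff_zero_eq_eval_zero, h5]
  rw [h4] at h2
  rwa [mul_pow, ← mul_assoc]

end Tau

end

/-! ### Partial derivatives as test elements -/

section

open MvPolynomial

section TestElements

variable {K : Type} [Field K]

lemma tau_top_mul (v : Fin 3 → K) {g h : MvPolynomial (Fin 3) K} {m n : ℕ}
    (hg : (tau v g).natDegree ≤ m ∧ (tau v g).coeff m = C (eval v g))
    (hh : (tau v h).natDegree ≤ n ∧ (tau v h).coeff n = C (eval v h)) :
    (tau v (g * h)).natDegree ≤ m + n ∧ (tau v (g * h)).coeff (m + n) = C (eval v (g * h)) := by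
  rw [map_mul, map_mul, map_mul]
  exact ⟨Polynomial.natDegree_mul_le_of_le hg.1 hh.1, by
    rw [Polynomial.coeff_mul_add_eq_of_natDegree_le hg.1 hh.1, hg.2, hh.2]⟩

lemma tau_top_X_pow (v : Fin 3 → K) (i : Fin 3) (n : ℕ) :
    (tau v (X i ^ n)).natDegree ≤ n ∧ (tau v (X i ^ n)).coeff n = C (eval v (X i ^ n)) := by
  induction n with
  | zero => simp
  | succ n ih =>
    rw [pow_succ]
    refine tau_top_mul v ih ⟨?_, ?_⟩
    · rw [tau_X, add_comm]; exact Polynomial.natDegree_linear_le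
    · rw [tau_X]; simp [Polynomial.coeff_C]

/-- The coefficient of `T ^ n` in `g (X + T v)`, for `g` homogeneous of degree `n`. -/
lemma tau_top (v : Fin 3 → K) {g : MvPolynomial (Fin 3) K} {n : ℕ} (hg : g.IsHomogeneous n) :
    (tau v g).natDegree ≤ n ∧ (tau v g).coeff n = C (eval v g) := by
  have key : ∀ m ∈ g.support, (tau v (monomial m (coeff m g))).natDegree ≤ n ∧
      (tau v (monomial m (coeff m g))).coeff n = C (eval v (monomial m (coeff m g))) := by
    intro m hm
    have hdeg : n = 0 + (m 0 + m 1 + m 2) := by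
      have := hg (mem_support_iff.mp hm)
      rw [← this, Finsupp.weight_apply, Finsupp.sum_fintype _ _ (by simp), Fin.sum_univ_three]
      simp
    rw [monomial_eq, Finsupp.prod_fintype _ _ (by simp), Fin.prod_univ_three, hdeg]
    refine tau_top_mul v ⟨?_, ?_⟩ (tau_top_mul v (tau_top_mul v (tau_top_X_pow v 0 _)
      (tau_top_X_pow v 1 _)) (tau_top_X_pow v 2 _))
    · rw [tau_C]; simp
    · rw [tau_C]; simp
  constructor
  · rw [g.as_sum, map_sum]
    exact Polynomial.natDegree_sum_le_of_forall_le _ _ fun m hm => (key m hm).1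
  · conv_lhs => rw [g.as_sum, map_sum, Polynomial.finset_sum_coeff]
    conv_rhs => rw [g.as_sum, map_sum, map_sum]
    exact Finset.sum_congr rfl fun m hm => (key m hm).2

/-- If `F(v) ≠ 0`, then `K[x,y,z]/(F)` is integral over the ring of `v`-invariant polynomials, so
every nonzero element has a nonzero `v`-invariant multiple. -/
lemma exists_invariant_multiple {F : MvPolynomial (Fin 3) K} (hF : F.IsHomogeneous 3)
    (hdom : IsDomain (MvPolynomial (Fin 3) K ⧸ Ideal.span {F})) (v : Fin 3 → K)
    (hv : eval v F ≠ 0) (c : MvPolynomial (Fin 3) K ⧸ Ideal.span {F}) (hc : c ≠ 0) :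
    ∃ b : MvPolynomial (Fin 3) K, tau v b = Polynomial.C b ∧
      Ideal.Quotient.mk (Ideal.span {F}) b ≠ 0 ∧
      Ideal.Quotient.mk (Ideal.span {F}) b ∈ Ideal.span {c} := by
  let P := MvPolynomial (Fin 3) K
  let mkF := Ideal.Quotient.mk (Ideal.span {F})
  obtain ⟨i₀, hi₀⟩ : ∃ i, v i ≠ 0 := by
    by_contra! h
    have h0 : v = 0 := funext h
    rw [h0] at hv
    apply hv
    rw [eval_zero, constantCoeff_eq]
    exact hF.coeff_eq_zero (by simp)
  set s : P := C (v i₀)⁻¹ * X i₀ with hs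
  let B : Subalgebra K P := AlgHom.equalizer (tau v) (IsScalarTower.toAlgHom K P (Polynomial P))
  have hB : ∀ b, b ∈ B ↔ tau v b = Polynomial.C b := fun b => Iff.rfl
  have hw : ∀ i, X i - C (v i) * s ∈ B := by
    intro i
    rw [hB, map_sub, map_mul, hs, map_mul, tau_X, tau_X, tau_C, tau_C]
    have : Polynomial.C (C (v i₀)⁻¹ : P) * Polynomial.C (C (v i₀)) = 1 := by
      rw [← Polynomial.C_mul, ← C_mul, inv_mul_cancel₀ hi₀]; simp
    simp only [map_sub, map_mul]
    linear_combination (-Polynomial.C (C (v i)) * Polynomial.X) * this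
  let gB : P →ₐ[K] B := aeval fun i => (⟨X i - C (v i) * s, hw i⟩ : B)
  let ψ : B →+* (P ⧸ Ideal.span {F}) := mkF.comp B.subtype
  let χ : P →+* ψ.range := ψ.rangeRestrict.comp gB.toRingHom
  have hχ : ∀ g, ((χ g : ψ.range) : P ⧸ Ideal.span {F}) = mkF ((gB g : B) : P) := fun g => rfl
  have hsint : IsIntegral ψ.range (mkF s) := by
    refine ⟨Polynomial.C (χ (C (eval v F)⁻¹)) * (tau v F).map χ, ?_, ?_⟩
    · have h1 := tau_top v hF
      have h2 : Polynomial.coeff (Polynomial.C (χ (C (eval v F)⁻¹)) * (tau v F).map χ) 3 = 1 := by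
        rw [Polynomial.coeff_C_mul, Polynomial.coeff_map, h1.2, ← map_mul, ← C_mul,
          inv_mul_cancel₀ hv, C_1, map_one]
      refine Polynomial.monic_of_natDegree_le_of_coeff_eq_one 3 ?_ h2
      exact (Polynomial.natDegree_C_mul_le _ _).trans
        ((Polynomial.natDegree_map_le).trans h1.1)
    · rw [Polynomial.eval₂_mul, Polynomial.eval₂_map]
      have h3 : ∀ g : P, Polynomial.eval₂ ((algebraMap ψ.range (P ⧸ Ideal.span {F})).comp χ)
          (mkF s) (tau v g) = mkF g := by
        intro g
        induction g using MvPolynomial.induction_on with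
        | C a =>
          rw [tau_C, Polynomial.eval₂_C]
          change mkF ((gB (C a) : B) : P) = _
          have h5 : gB (C a) = algebraMap K B a := gB.commutes a
          rw [h5]; rfl
        | add a b ha hb => rw [map_add, Polynomial.eval₂_add, ha, hb, map_add]
        | mul_X a i ha =>
          rw [map_mul (tau v), Polynomial.eval₂_mul, ha, map_mul mkF a, tau_X]
          congr 1
          rw [Polynomial.eval₂_add, Polynomial.eval₂_mul, Polynomial.eval₂_C, Polynomial.eval₂_C,
            Polynomial.eval₂_X]
          change mkF ((gB (X i) : B) : P) + mkF ((gB (C (v i)) : B) : P) * mkF s = _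
          have h5 : gB (C (v i)) = algebraMap K B (v i) := gB.commutes (v i)
          have h6 : gB (X i) = ⟨X i - C (v i) * s, hw i⟩ := aeval_X _ _
          rw [h5, h6, ← map_mul, ← map_add]
          congr 1
          change X i - C (v i) * s + C (v i) * s = X i
          ring
      rw [h3]
      have : mkF F = 0 := Ideal.Quotient.eq_zero_iff_mem.mpr (Ideal.mem_span_singleton_self F)
      rw [this, mul_zero]
  have hBint : ∀ b ∈ B, IsIntegral ψ.range (mkF b) := fun b hb =>
    isIntegral_algebraMap (x := (⟨mkF b, ⟨⟨b, hb⟩, rfl⟩⟩ : ψ.range))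
  have hintg : ∀ g : P, IsIntegral ψ.range (mkF g) := by
    intro g
    induction g using MvPolynomial.induction_on with
    | C a => exact hBint _ (B.algebraMap_mem a)
    | add a b ha hb => rw [map_add]; exact ha.add hb
    | mul_X a i ha =>
      rw [map_mul]
      refine ha.mul ?_
      have h7 : X i = (X i - C (v i) * s) + C (v i) * s := by ring
      rw [h7, map_add, map_mul]
      exact (hBint _ (hw i)).add ((hBint _ (B.algebraMap_mem (v i))).mul hsint)
  obtain ⟨g, rfl⟩ := Ideal.Quotient.mk_surjective c
  have hne := Ideal.comap_ne_bot_of_integral_mem hc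
    (Ideal.mem_span_singleton_self _) (hintg g)
  obtain ⟨b, hb, hb0⟩ := Submodule.exists_mem_ne_zero_of_ne_bot hne
  obtain ⟨b, ⟨b', rfl⟩⟩ := b
  refine ⟨b', b'.2, fun h => hb0 (Subtype.ext h), hb⟩

variable {p : ℕ} [Fact p.Prime] [CharP K p]

lemma mk_mem_bracketPow {P : Type} [CommRing P] (F w : P) (q : ℕ) (I : Ideal (P ⧸ Ideal.span {F})) :
    Ideal.Quotient.mk (Ideal.span {F}) w ∈ bracketPow I q ↔
      w ∈ bracketPow (I.comap (Ideal.Quotient.mk (Ideal.span {F}))) q ⊔ Ideal.span {F} := by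
  have h1 : bracketPow I q = (bracketPow (I.comap (Ideal.Quotient.mk (Ideal.span {F}))) q).map
      (Ideal.Quotient.mk (Ideal.span {F})) := by
    unfold bracketPow
    rw [Ideal.map_span]
    congr 1
    ext r
    constructor
    · rintro ⟨a, ha, rfl⟩
      obtain ⟨b, rfl⟩ := Ideal.Quotient.mk_surjective a
      exact ⟨b ^ q, ⟨b, ha, rfl⟩, map_pow _ _ _⟩
    · rintro ⟨_, ⟨b, hb, rfl⟩, rfl⟩
      exact ⟨_, hb, (map_pow _ _ _).symm⟩
  rw [h1, ← Ideal.mem_comap, Ideal.comap_map_of_surjective' _ Ideal.Quotient.mk_surjective,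
    Ideal.mk_ker]

/-- In a direction `v` with `F(v) ≠ 0`, the directional derivative of `F` multiplies the tight closure
of every ideal into the ideal: after replacing the multiplier by a `v`-invariant one, the claim
becomes a tight closure relation in the polynomial ring, where every ideal is tightly closed. -/
lemma dirDeriv_mul_mem [IsAlgClosed K] {F : MvPolynomial (Fin 3) K} (hF : F.IsHomogeneous 3)
    (hdom : IsDomain (MvPolynomial (Fin 3) K ⧸ Ideal.span {F})) (v : Fin 3 → K)
    (hv : eval v F ≠ 0) (I : Ideal (MvPolynomial (Fin 3) K ⧸ Ideal.span {F}))
    (f : MvPolynomial (Fin 3) K ⧸ Ideal.span {F}) (hf : f ∈ tightClosure p I) :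
    Ideal.Quotient.mk (Ideal.span {F}) (dirDeriv v F) * f ∈ I := by
  obtain ⟨c, hc, e₀, h⟩ := hf
  obtain ⟨b, hb, hb0, hbc⟩ := exists_invariant_multiple hF hdom v hv c hc
  obtain ⟨f, rfl⟩ := Ideal.Quotient.mk_surjective f
  obtain ⟨d, hd⟩ := Ideal.mem_span_singleton'.mp hbc
  rw [← map_mul, ← Ideal.mem_comap]
  refine mem_of_tight_polynomial (p := p) _ b _ (fun h0 => hb0 (by rw [h0, map_zero])) e₀
    fun e he => ?_
  refine mul_dirDeriv_pow_mem v _ F b f ?_ hb e ?_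
  · rw [Ideal.mem_comap, Ideal.Quotient.eq_zero_iff_mem.mpr (Ideal.mem_span_singleton_self F)]
    exact I.zero_mem
  · rw [← mk_mem_bracketPow, map_mul, map_pow, ← hd, mul_assoc]
    exact Ideal.mul_mem_left _ _ (h e he)

lemma pow_mem_tightClosure {R : Type} [CommRing R] [CharP R p] (I : Ideal R) (f : R)
    (hf : f ∈ tightClosure p I) (e : ℕ) : f ^ p ^ e ∈ tightClosure p (bracketPow I (p ^ e)) := by
  obtain ⟨c, hc, e₀, h⟩ := hf
  refine ⟨c, hc, e₀, fun e' he' => ?_⟩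
  have h1 := h (e + e') (by omega)
  rw [bracketPow_eq_map] at h1
  rw [bracketPow_eq_map, bracketPow_eq_map, Ideal.map_map]
  have h2 : (iterateFrobenius R p e').comp (iterateFrobenius R p e) =
      iterateFrobenius R p (e + e') := by
    ext a; simp [iterateFrobenius_def, pow_add, pow_mul]
  rwa [h2, ← pow_mul, ← pow_add]

lemma exists_eval_ne_zero [Infinite K] {F : MvPolynomial (Fin 3) K} (hF0 : F ≠ 0) :
    ∃ v, eval v F ≠ 0 := by
  by_contra! h
  exact hF0 (MvPolynomial.funext fun v => by simpa using h v)

lemma exists_eval_add_ne_zero [Infinite K] {F : MvPolynomial (Fin 3) K} (hF : F.IsHomogeneous 3)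
    (v₀ v : Fin 3 → K) (hv₀ : eval v₀ F ≠ 0) : ∃ t : K, eval (v + t • v₀) F ≠ 0 := by
  have h1 : ∀ (t : K) (g : MvPolynomial (Fin 3) K),
      ((tau v₀ g).map (eval v)).eval t = eval (v + t • v₀) g := by
    intro t g
    induction g using MvPolynomial.induction_on with
    | C a => rw [tau_C]; simp
    | add a b ha hb => simp only [map_add, Polynomial.map_add, Polynomial.eval_add, ha, hb]
    | mul_X a i ha =>
      rw [map_mul, Polynomial.map_mul, Polynomial.eval_mul, ha, tau_X, map_mul]
      simp only [Polynomial.map_add, Polynomial.map_mul, Polynomial.map_C, Polynomial.map_X,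
        Polynomial.eval_add, Polynomial.eval_mul, Polynomial.eval_C, Polynomial.eval_X, eval_X,
        eval_C, Pi.add_apply, Pi.smul_apply, smul_eq_mul]
      ring
  by_contra! h
  have h2 : (tau v₀ F).map (eval v) = 0 :=
    Polynomial.funext fun t => by rw [h1, h, Polynomial.eval_zero]
  have h3 := congrArg (fun g => Polynomial.coeff g 3) h2
  simp only [Polynomial.coeff_map, (tau_top v₀ hF).2, eval_C, Polynomial.coeff_zero] at h3
  exact hv₀ h3

/-- The partial derivatives of `F` are test elements: the same multiplier works for every `q`. They
are differences of directional derivatives in directions in which `F` does not vanish. -/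
lemma pderiv_mul_pow_mem [IsAlgClosed K] {F : MvPolynomial (Fin 3) K} (hF : F.IsHomogeneous 3)
    (hF0 : F ≠ 0)
    (hdom : IsDomain (MvPolynomial (Fin 3) K ⧸ Ideal.span {F}))
    (I : Ideal (MvPolynomial (Fin 3) K ⧸ Ideal.span {F}))
    (f : MvPolynomial (Fin 3) K ⧸ Ideal.span {F}) (hf : f ∈ tightClosure p I) (i : Fin 3) (e : ℕ) :
    Ideal.Quotient.mk (Ideal.span {F}) (pderiv i F) * f ^ p ^ e ∈ bracketPow I (p ^ e) := by
  have hp : CharP (MvPolynomial (Fin 3) K ⧸ Ideal.span {F}) p :=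
    charP_of_injective_algebraMap (algebraMap K _).injective p
  have hf' := pow_mem_tightClosure (p := p) I f hf e
  have hinf : Infinite K := IsAlgClosed.instInfinite
  obtain ⟨v₀, hv₀⟩ := exists_eval_ne_zero hF0
  obtain ⟨t, ht⟩ := exists_eval_add_ne_zero hF v₀ (Pi.single i 1) hv₀
  have h1 := dirDeriv_mul_mem hF hdom v₀ hv₀ _ _ hf'
  have h2 := dirDeriv_mul_mem hF hdom _ ht _ _ hf'
  have h3 : pderiv i F = dirDeriv (Pi.single i 1 + t • v₀) F - C t * dirDeriv v₀ F := by
    simp only [dirDeriv, Pi.add_apply, Pi.smul_apply, smul_eq_mul, map_add, map_mul, add_mul,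
      Finset.sum_add_distrib, Finset.mul_sum, mul_assoc, add_sub_cancel_right]
    rw [Finset.sum_eq_single i] <;> simp +contextual [Pi.single_apply]
  rw [h3, map_sub, map_mul, sub_mul, mul_assoc]
  exact Ideal.sub_mem _ h2 (Ideal.mul_mem_left _ _ h1)

end TestElements

end

/-! ### Linear changes of coordinates -/

section

open MvPolynomial

section Coordinates

variable {K : Type} [Field K]

/-- The linear substitution `X i ↦ ∑ j, M i j * X j`. -/
noncomputable def linSubst (M : Matrix (Fin 3) (Fin 3) K) :
    MvPolynomial (Fin 3) K →ₐ[K] MvPolynomial (Fin 3) K :=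
  aeval fun i => ∑ j, C (M i j) * X j

lemma linSubst_X (M : Matrix (Fin 3) (Fin 3) K) (i : Fin 3) :
    linSubst M (X i) = ∑ j, C (M i j) * X j := by simp [linSubst]

lemma linSubst_C (M : Matrix (Fin 3) (Fin 3) K) (a : K) : linSubst M (C a) = C a :=
  (linSubst M).commutes a

lemma linSubst_linSubst (M N : Matrix (Fin 3) (Fin 3) K) (g : MvPolynomial (Fin 3) K) :
    linSubst M (linSubst N g) = linSubst (N * M) g := by
  have : (linSubst M).comp (linSubst N) = linSubst (N * M) := by
    apply MvPolynomial.algHom_ext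
    intro i
    simp only [AlgHom.comp_apply, linSubst_X, map_sum, map_mul, linSubst_C, Finset.mul_sum,
      Matrix.mul_apply, Finset.sum_mul]
    rw [Finset.sum_comm]
    simp only [mul_assoc]
  exact DFunLike.congr_fun this g

lemma linSubst_one (g : MvPolynomial (Fin 3) K) : linSubst 1 g = g := by
  have : linSubst (1 : Matrix (Fin 3) (Fin 3) K) = AlgHom.id K _ := by
    apply MvPolynomial.algHom_ext
    intro i
    rw [linSubst_X]
    simp [Matrix.one_apply]
  rw [this]; rfl

lemma eval_linSubst (M : Matrix (Fin 3) (Fin 3) K) (w : Fin 3 → K) (g : MvPolynomial (Fin 3) K) :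
    eval w (linSubst M g) = eval (M.mulVec w) g := by
  induction g using MvPolynomial.induction_on with
  | C a => rw [linSubst_C]; simp
  | add a b ha hb => simp only [map_add, ha, hb]
  | mul_X a i ha =>
    rw [map_mul, map_mul, ha, map_mul, linSubst_X]
    simp [Matrix.mulVec, dotProduct]

lemma pderiv_linSubst (M : Matrix (Fin 3) (Fin 3) K) (i : Fin 3) (g : MvPolynomial (Fin 3) K) :
    pderiv i (linSubst M g) = ∑ j, C (M j i) * linSubst M (pderiv j g) := by
  induction g using MvPolynomial.induction_on with
  | C a => rw [linSubst_C]; simp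
  | add a b ha hb => simp only [map_add, ha, hb, mul_add, Finset.sum_add_distrib]
  | mul_X a k ha =>
    have h1 : pderiv i (∑ j, C (M k j) * X j) = (C (M k i) : MvPolynomial (Fin 3) K) := by
      simp [Derivation.leibniz, pderiv_X, Pi.single_apply]
    rw [map_mul, Derivation.leibniz, linSubst_X, h1, ha, ← linSubst_X]
    simp only [Derivation.leibniz, pderiv_X, smul_eq_mul, map_add, map_mul, mul_add,
      Finset.sum_add_distrib, Finset.mul_sum]
    congr 1
    · rw [Finset.sum_eq_single k]
      · simp [mul_comm]
      · intro b _ hb; simp [Pi.single_apply, hb.symm]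
      · simp
    · exact Finset.sum_congr rfl fun j _ => by ring

lemma isHomogeneous_linSubst (M : Matrix (Fin 3) (Fin 3) K) {g : MvPolynomial (Fin 3) K} {n : ℕ}
    (hg : g.IsHomogeneous n) : (linSubst M g).IsHomogeneous n := by
  have := hg.aeval (fun i => ∑ j, C (M i j) * X j) (n := 1) (fun i => by
    apply IsHomogeneous.sum
    intro j _
    simpa using (isHomogeneous_C (Fin 3) (M i j)).mul (isHomogeneous_X K j))
  simpa [linSubst] using this

lemma exists_matrix_col (v : Fin 3 → K) (hv : v ≠ 0) : ∃ M N : Matrix (Fin 3) (Fin 3) K,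
    M * N = 1 ∧ N * M = 1 ∧ ∀ i, M i 2 = v i := by
  suffices ∃ M : Matrix (Fin 3) (Fin 3) K, IsUnit M.det ∧ ∀ i, M i 2 = v i by
    obtain ⟨M, hM, h⟩ := this
    exact ⟨M, M⁻¹, M.mul_nonsing_inv hM, M.nonsing_inv_mul hM, h⟩
  obtain ⟨i, hi⟩ := Function.ne_iff.mp hv
  simp only [Pi.zero_apply] at hi
  fin_cases i
  · refine ⟨!![0, 0, v 0; 1, 0, v 1; 0, 1, v 2], ?_, ?_⟩
    · rw [Matrix.det_fin_three]; simpa using hi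
    · intro i; fin_cases i <;> simp
  · refine ⟨!![1, 0, v 0; 0, 0, v 1; 0, 1, v 2], ?_, ?_⟩
    · rw [Matrix.det_fin_three]; simpa using hi
    · intro i; fin_cases i <;> simp
  · refine ⟨!![1, 0, v 0; 0, 1, v 1; 0, 0, v 2], ?_, ?_⟩
    · rw [Matrix.det_fin_three]; simpa using hi
    · intro i; fin_cases i <;> simp

/-- The coordinate change given by an invertible matrix. -/
noncomputable def linEquiv (M N : Matrix (Fin 3) (Fin 3) K) (h₁ : M * N = 1) (h₂ : N * M = 1) :
    MvPolynomial (Fin 3) K ≃+* MvPolynomial (Fin 3) K :=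
  RingEquiv.ofRingHom (linSubst M).toRingHom (linSubst N).toRingHom
    (RingHom.ext fun g => by
      change linSubst M (linSubst N g) = g
      rw [linSubst_linSubst, h₂, linSubst_one])
    (RingHom.ext fun g => by
      change linSubst N (linSubst M g) = g
      rw [linSubst_linSubst, h₁, linSubst_one])

lemma linEquiv_apply (M N : Matrix (Fin 3) (Fin 3) K) (h₁ : M * N = 1) (h₂ : N * M = 1)
    (g : MvPolynomial (Fin 3) K) : linEquiv M N h₁ h₂ g = linSubst M g := rfl

/-- The isomorphism of quotient rings induced by a linear coordinate change. -/
noncomputable def quotLinEquiv (M N : Matrix (Fin 3) (Fin 3) K) (h₁ : M * N = 1) (h₂ : N * M = 1)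
    (F : MvPolynomial (Fin 3) K) : (MvPolynomial (Fin 3) K ⧸ Ideal.span {F}) ≃+*
      (MvPolynomial (Fin 3) K ⧸ Ideal.span {linSubst M F}) :=
  Ideal.quotientEquiv _ _ (linEquiv M N h₁ h₂) (by
    rw [Ideal.map_span, Set.image_singleton]; rfl)

lemma quotLinEquiv_mk (M N : Matrix (Fin 3) (Fin 3) K) (h₁ : M * N = 1) (h₂ : N * M = 1)
    (F g : MvPolynomial (Fin 3) K) :
    quotLinEquiv M N h₁ h₂ F (Ideal.Quotient.mk _ g) = Ideal.Quotient.mk _ (linSubst M g) := rfl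

end Coordinates

lemma mem_tightClosure_map {R R' : Type} [CommRing R] [CommRing R'] (p : ℕ) [Fact p.Prime]
    [CharP R p] [CharP R' p] (φ : R ≃+* R') (I : Ideal R) (f : R) (hf : f ∈ tightClosure p I) :
    φ f ∈ tightClosure p (I.map φ.toRingHom) := by
  obtain ⟨c, hc, e₀, h⟩ := hf
  refine ⟨φ c, by simpa using hc, e₀, fun e he => ?_⟩
  have h1 := Ideal.mem_map_of_mem φ.toRingHom (h e he)
  rw [bracketPow_eq_map, Ideal.map_map] at h1
  rw [bracketPow_eq_map, Ideal.map_map]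
  have h2 : (iterateFrobenius R' p e).comp φ.toRingHom =
      φ.toRingHom.comp (iterateFrobenius R p e) := by
    ext a; simp [iterateFrobenius_def]
  rw [h2]
  simpa using h1

lemma mem_plusClosure_of_map {R R' : Type} [CommRing R] [CommRing R'] (φ : R ≃+* R')
    (I : Ideal R) (f : R) (hf : φ f ∈ plusClosure R' (I.map φ.toRingHom)) :
    f ∈ plusClosure R I := by
  obtain ⟨S, _, _, ψ, hinj, hfin, h⟩ := hf
  refine ⟨S, inferInstance, inferInstance, ψ.comp φ.toRingHom, hinj.comp φ.injective,
    hfin.comp (RingHom.Finite.of_surjective _ φ.surjective), ?_⟩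
  rw [Ideal.map_map] at h
  exact h

end

/-! ### Smoothness of normal cubics -/

section

open MvPolynomial

section Cubic

variable {K : Type} [Field K]

lemma cubic_expansion {F : MvPolynomial (Fin 3) K} (hF : F.IsHomogeneous 3) :
    ∃ a₀ a₁ a₂ a₃ a₄ a₅ a₆ a₇ a₈ a₉ : K, F =
      C a₀ * X 2 ^ 3 + (C a₁ * X 0 + C a₂ * X 1) * X 2 ^ 2 +
      (C a₃ * X 0 ^ 2 + C a₄ * (X 0 * X 1) + C a₅ * X 1 ^ 2) * X 2 +
      (C a₆ * X 0 ^ 3 + C a₇ * (X 0 ^ 2 * X 1) + C a₈ * (X 0 * X 1 ^ 2) + C a₉ * X 1 ^ 3) := by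
  rw [F.as_sum]
  refine Finset.sum_induction _ (fun G : MvPolynomial (Fin 3) K =>
    ∃ a₀ a₁ a₂ a₃ a₄ a₅ a₆ a₇ a₈ a₉ : K, G =
      C a₀ * X 2 ^ 3 + (C a₁ * X 0 + C a₂ * X 1) * X 2 ^ 2 +
      (C a₃ * X 0 ^ 2 + C a₄ * (X 0 * X 1) + C a₅ * X 1 ^ 2) * X 2 +
      (C a₆ * X 0 ^ 3 + C a₇ * (X 0 ^ 2 * X 1) + C a₈ * (X 0 * X 1 ^ 2) + C a₉ * X 1 ^ 3))
    ?_ ?_ ?_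
  · rintro _ _ ⟨a₀, a₁, a₂, a₃, a₄, a₅, a₆, a₇, a₈, a₉, rfl⟩ ⟨b₀, b₁, b₂, b₃, b₄, b₅, b₆, b₇, b₈, b₉, rfl⟩
    refine ⟨a₀ + b₀, a₁ + b₁, a₂ + b₂, a₃ + b₃, a₄ + b₄, a₅ + b₅, a₆ + b₆, a₇ + b₇, a₈ + b₈,
      a₉ + b₉, ?_⟩
    simp only [C_add]
    ring
  · exact ⟨0, 0, 0, 0, 0, 0, 0, 0, 0, 0, by simp⟩
  · intro m hm
    have hdeg : m 0 + m 1 + m 2 = 3 := by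
      have := hF (mem_support_iff.mp hm)
      rw [Finsupp.weight_apply, Finsupp.sum_fintype _ _ (by simp), Fin.sum_univ_three] at this
      simpa using this
    rw [monomial_eq, Finsupp.prod_fintype _ _ (by simp), Fin.prod_univ_three]
    generalize coeff m F = a
    generalize m 0 = i at *
    generalize m 1 = j at *
    generalize m 2 = k at *
    have hi : i ≤ 3 := by omega
    have hj : j ≤ 3 := by omega
    interval_cases i <;> interval_cases j <;> first | (exfalso; omega) | skip
    · obtain rfl : k = 3 := by omega
      exact ⟨a, 0, 0, 0, 0, 0, 0, 0, 0, 0, by simp only [C_0]; ring⟩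
    · obtain rfl : k = 2 := by omega
      exact ⟨0, 0, a, 0, 0, 0, 0, 0, 0, 0, by simp only [C_0]; ring⟩
    · obtain rfl : k = 1 := by omega
      exact ⟨0, 0, 0, 0, 0, a, 0, 0, 0, 0, by simp only [C_0]; ring⟩
    · obtain rfl : k = 0 := by omega
      exact ⟨0, 0, 0, 0, 0, 0, 0, 0, 0, a, by simp only [C_0]; ring⟩
    · obtain rfl : k = 2 := by omega
      exact ⟨0, a, 0, 0, 0, 0, 0, 0, 0, 0, by simp only [C_0]; ring⟩
    · obtain rfl : k = 1 := by omega
      exact ⟨0, 0, 0, 0, a, 0, 0, 0, 0, 0, by simp only [C_0]; ring⟩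
    · obtain rfl : k = 0 := by omega
      exact ⟨0, 0, 0, 0, 0, 0, 0, 0, a, 0, by simp only [C_0]; ring⟩
    · obtain rfl : k = 1 := by omega
      exact ⟨0, 0, 0, a, 0, 0, 0, 0, 0, 0, by simp only [C_0]; ring⟩
    · obtain rfl : k = 0 := by omega
      exact ⟨0, 0, 0, 0, 0, 0, 0, a, 0, 0, by simp only [C_0]; ring⟩
    · obtain rfl : k = 0 := by omega
      exact ⟨0, 0, 0, 0, 0, 0, a, 0, 0, 0, by simp only [C_0]; ring⟩

lemma eq_zero_of_dvd_of_totalDegree_lt {F g : MvPolynomial (Fin 3) K} (hF : F.IsHomogeneous 3)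
    (hF0 : F ≠ 0) (hg : g.totalDegree < 3)
    (h : Ideal.Quotient.mk (Ideal.span {F}) g = 0) : g = 0 := by
  rw [Ideal.Quotient.eq_zero_iff_dvd] at h
  obtain ⟨s, rfl⟩ := h
  by_contra hne
  have hs : s ≠ 0 := right_ne_zero_of_mul hne
  rw [totalDegree_mul_of_isDomain hF0 hs, hF.totalDegree hF0] at hg
  omega

/-- A normal cubic has no singular point at `(0 : 0 : 1)`: otherwise
`F = x² A + x y B + y² D`, and `D y / x` is integral over the coordinate ring. -/
lemma smooth_at_e₂ {F : MvPolynomial (Fin 3) K} (hF : F.IsHomogeneous 3) (hF0 : F ≠ 0)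
    (hdom : IsDomain (MvPolynomial (Fin 3) K ⧸ Ideal.span {F}))
    (hnorm : IsIntegrallyClosed (MvPolynomial (Fin 3) K ⧸ Ideal.span {F}))
    (h₀ : eval (Pi.single 2 1) F = 0) (h₁ : ∀ i, eval (Pi.single 2 1) (pderiv i F) = 0) :
    False := by
  obtain ⟨a₀, a₁, a₂, a₃, a₄, a₅, a₆, a₇, a₈, a₉, hexp⟩ := cubic_expansion hF
  have ha₀ : a₀ = 0 := by
    rw [hexp] at h₀; simpa [Pi.single_apply] using h₀
  have ha₁ : a₁ = 0 := by
    have := h₁ 0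
    rw [hexp] at this; simpa [Derivation.leibniz, pderiv_X, Pi.single_apply] using this
  have ha₂ : a₂ = 0 := by
    have := h₁ 1
    rw [hexp] at this; simpa [Derivation.leibniz, pderiv_X, Pi.single_apply] using this
  subst ha₀ ha₁ ha₂
  let mkF : MvPolynomial (Fin 3) K →+* MvPolynomial (Fin 3) K ⧸ Ideal.span {F} := Ideal.Quotient.mk (Ideal.span {F})
  set A : MvPolynomial (Fin 3) K := C a₃ * X 2 + C a₆ * X 0 + C a₇ * X 1 with hA
  set B : MvPolynomial (Fin 3) K := C a₄ * X 2 + C a₈ * X 1 with hB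
  set D : MvPolynomial (Fin 3) K := C a₅ * X 2 + C a₉ * X 1 with hD
  have hFABD : F = X 0 ^ 2 * A + X 0 * X 1 * B + X 1 ^ 2 * D := by
    rw [hexp, hA, hB, hD]; simp only [C_0]; ring
  have htd1 : ∀ (a : K) (i : Fin 3), (C a * X i : MvPolynomial (Fin 3) K).totalDegree ≤ 1 := fun a i =>
    (totalDegree_mul _ _).trans (by simp)
  have hx : mkF (X 0) ≠ 0 := fun h => by
    have := eq_zero_of_dvd_of_totalDegree_lt hF hF0 (by simp) h
    exact X_ne_zero _ this
  -- `u = D y / x` lies in the ring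
  obtain ⟨r, hr⟩ : ∃ r : MvPolynomial (Fin 3) K ⧸ Ideal.span {F}, mkF (X 0) * r = mkF (D * X 1) := by
    let R := MvPolynomial (Fin 3) K ⧸ Ideal.span {F}
    let L := FractionRing R
    let ι := algebraMap R L
    have hιx : ι (mkF (X 0)) ≠ 0 := by
      rw [Ne, map_eq_zero_iff _ (IsFractionRing.injective R L)]; exact hx
    have hF' : mkF (X 0 ^ 2 * A + X 0 * X 1 * B + X 1 ^ 2 * D) = 0 := by
      rw [← hFABD]; exact Ideal.Quotient.eq_zero_iff_mem.mpr (Ideal.mem_span_singleton_self F)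
    have hF'' := congrArg ι hF'
    simp only [map_add, map_mul, map_pow, map_zero] at hF''
    set u : L := ι (mkF D) * ι (mkF (X 1)) / ι (mkF (X 0)) with hu
    have hux : u * ι (mkF (X 0)) = ι (mkF D) * ι (mkF (X 1)) := div_mul_cancel₀ _ hιx
    have hintg : IsIntegral R u := by
      refine ⟨Polynomial.X ^ 2 + Polynomial.C (mkF B) * Polynomial.X +
        Polynomial.C (mkF (A * D)), ?_, ?_⟩
      · monicity!
      · simp only [Polynomial.eval₂_add, Polynomial.eval₂_mul, Polynomial.eval₂_pow,
          Polynomial.eval₂_X, Polynomial.eval₂_C]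
        change u ^ 2 + ι (mkF B) * u + ι (mkF (A * D)) = 0
        rw [map_mul, map_mul]
        refine mul_left_cancel₀ (pow_ne_zero 2 hιx) ?_
        linear_combination (u * ι (mkF (X 0)) + ι (mkF D) * ι (mkF (X 1)) +
          ι (mkF B) * ι (mkF (X 0))) * hux + (ι (mkF D)) * hF''
    obtain ⟨r, hr⟩ := IsIntegrallyClosed.isIntegral_iff.mp hintg
    refine ⟨r, IsFractionRing.injective R L ?_⟩
    rw [map_mul, hr]
    change ι (mkF (X 0)) * u = ι _
    rw [mul_comm, hux, map_mul, map_mul]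
  obtain ⟨r, rfl⟩ := Ideal.Quotient.mk_surjective r
  have h2 : mkF (D * X 1 - X 0 * r) = 0 := by
    rw [map_sub, map_mul mkF (X 0), ← hr, sub_self]
  obtain ⟨s, hs⟩ := Ideal.Quotient.eq_zero_iff_dvd _ _ |>.mp h2
  -- setting `x = 0`
  let φ : MvPolynomial (Fin 3) K →ₐ[K] MvPolynomial (Fin 3) K := aeval ![0, X 1, X 2]
  have hφ0 : φ (X 0) = 0 := by simp [φ]
  have hφ1 : φ (X 1) = X 1 := by simp [φ]
  have hφ2 : φ (X 2) = X 2 := by simp [φ]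
  have hφC : ∀ a, φ (C a) = C a := fun a => φ.commutes a
  have hφD : φ D = D := by rw [hD]; simp only [map_add, map_mul, hφC, hφ1, hφ2]
  have h3 := congrArg φ hs
  rw [hFABD] at h3
  simp only [map_sub, map_mul, map_add, map_pow, hφ0, hφ1, hφD] at h3
  have hD0 : D = 0 := by
    by_contra hD0
    have h4 : (D * X 1) * (X 1 * φ s) = (D * X 1) * 1 := by linear_combination -h3
    have h5 : X 1 * φ s = 1 := mul_left_cancel₀ (mul_ne_zero hD0 (X_ne_zero _)) h4
    have h6 := congrArg (eval (0 : Fin 3 → K)) h5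
    simp at h6
  rw [hD0, mul_zero, add_zero] at hFABD
  have h7 : mkF (X 0) * mkF (X 0 * A + X 1 * B) = 0 := by
    rw [← map_mul]
    have : X 0 * (X 0 * A + X 1 * B) = F := by rw [hFABD]; ring
    rw [this]; exact Ideal.Quotient.eq_zero_iff_mem.mpr (Ideal.mem_span_singleton_self F)
  have h8 := (mul_eq_zero.mp h7).resolve_left hx
  have hAB : ∀ i (G : MvPolynomial (Fin 3) K), G.totalDegree ≤ 1 → (X i * G).totalDegree ≤ 2 := fun i G hG =>
    (totalDegree_mul _ _).trans (by rw [totalDegree_X]; omega)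
  have hAd : A.totalDegree ≤ 1 := (totalDegree_add _ _).trans
    (max_le ((totalDegree_add _ _).trans (max_le (htd1 _ _) (htd1 _ _))) (htd1 _ _))
  have hBd : B.totalDegree ≤ 1 := (totalDegree_add _ _).trans (max_le (htd1 _ _) (htd1 _ _))
  have h9 : X 0 * A + X 1 * B = 0 := by
    refine eq_zero_of_dvd_of_totalDegree_lt hF hF0 ?_ h8
    exact lt_of_le_of_lt ((totalDegree_add _ _).trans (max_le (hAB _ _ hAd) (hAB _ _ hBd)))
      (by norm_num)
  apply hF0
  rw [hFABD]
  linear_combination X 0 * h9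

/-- A normal cubic has no singular point; a coordinate change moves the point to `(0 : 0 : 1)`. -/
lemma smooth {F : MvPolynomial (Fin 3) K} (hF : F.IsHomogeneous 3) (hF0 : F ≠ 0)
    (hdom : IsDomain (MvPolynomial (Fin 3) K ⧸ Ideal.span {F}))
    (hnorm : IsIntegrallyClosed (MvPolynomial (Fin 3) K ⧸ Ideal.span {F}))
    (v : Fin 3 → K) (hv : v ≠ 0)
    (h₀ : eval v F = 0) (h₁ : ∀ i, eval v (pderiv i F) = 0) : False := by
  obtain ⟨M, N, hMN, hNM, hM⟩ := exists_matrix_col v hv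
  let φ := quotLinEquiv M N hMN hNM F
  have hMv : M.mulVec (Pi.single 2 1) = v := by
    ext i; simp [hM]
  refine smooth_at_e₂ (isHomogeneous_linSubst M hF) ?_ ?_ ?_ ?_ ?_
  · intro h
    apply hF0
    have := linSubst_linSubst N M F
    rw [h, map_zero, hMN, linSubst_one] at this
    exact this.symm
  · exact φ.symm.toMulEquiv.isDomain _
  · exact IsIntegrallyClosed.of_equiv φ
  · rw [eval_linSubst, hMv, h₀]
  · intro i
    rw [pderiv_linSubst, map_sum]
    refine Finset.sum_eq_zero fun j _ => ?_
    rw [map_mul, eval_linSubst, hMv, h₁, mul_zero]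

/-- Powers of the variables lie in the Jacobian ideal of a normal cubic. -/
lemma exists_X_pow_mem_jacobian [IsAlgClosed K] {F : MvPolynomial (Fin 3) K}
    (hF : F.IsHomogeneous 3) (hF0 : F ≠ 0)
    (hdom : IsDomain (MvPolynomial (Fin 3) K ⧸ Ideal.span {F}))
    (hnorm : IsIntegrallyClosed (MvPolynomial (Fin 3) K ⧸ Ideal.span {F})) :
    ∃ N : ℕ, ∀ i, X i ^ N ∈ Ideal.span (insert F (Set.range fun j => pderiv j F)) := by
  set J := Ideal.span (insert F (Set.range fun j => pderiv j F)) with hJ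
  have h1 : ∀ i, (X i : MvPolynomial (Fin 3) K) ∈ J.radical := by
    intro i
    rw [← MvPolynomial.vanishingIdeal_zeroLocus_eq_radical (K := K) J, mem_vanishingIdeal_iff]
    intro v hv
    rw [mem_zeroLocus_iff] at hv
    by_cases hv0 : v = 0
    · simp [hv0]
    · exfalso
      refine smooth hF hF0 hdom hnorm v hv0 ?_ fun j => ?_
      · exact hv F (Ideal.subset_span (Set.mem_insert _ _))
      · exact hv _ (Ideal.subset_span (Set.mem_insert_of_mem _ ⟨j, rfl⟩))
  choose n hn using h1
  refine ⟨n 0 + n 1 + n 2, fun i => ?_⟩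
  refine Ideal.pow_mem_of_pow_mem _ (hn i) ?_
  fin_cases i <;> simp <;> omega

/-- A fixed power of each variable is a multiplier for the tight closure of every ideal and for
every `q`. -/
lemma exists_X_pow_mul_mem [IsAlgClosed K] {p : ℕ} [Fact p.Prime] [CharP K p]
    {F : MvPolynomial (Fin 3) K} (hF : F.IsHomogeneous 3) (hF0 : F ≠ 0)
    (hdom : IsDomain (MvPolynomial (Fin 3) K ⧸ Ideal.span {F}))
    (hnorm : IsIntegrallyClosed (MvPolynomial (Fin 3) K ⧸ Ideal.span {F})) :
    ∃ N : ℕ, ∀ (I : Ideal (MvPolynomial (Fin 3) K ⧸ Ideal.span {F})),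
      ∀ f ∈ tightClosure p I, ∀ (i : Fin 3) (e : ℕ),
      Ideal.Quotient.mk (Ideal.span {F}) (X i ^ N) * f ^ p ^ e ∈ bracketPow I (p ^ e) := by
  obtain ⟨N, hN⟩ := exists_X_pow_mem_jacobian hF hF0 hdom hnorm
  refine ⟨N, fun I f hf i e => ?_⟩
  have key : ∀ g ∈ Ideal.span (insert F (Set.range fun j => pderiv j F)),
      Ideal.Quotient.mk (Ideal.span {F}) g * f ^ p ^ e ∈ bracketPow I (p ^ e) := by
    intro g hg
    induction hg using Submodule.span_induction with
    | mem x hx =>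
      rcases hx with rfl | ⟨j, rfl⟩
      · rw [Ideal.Quotient.eq_zero_iff_mem.mpr (Ideal.mem_span_singleton_self _), zero_mul]
        exact Ideal.zero_mem _
      · exact pderiv_mul_pow_mem hF hF0 hdom I f hf j e
    | zero => rw [map_zero, zero_mul]; exact Ideal.zero_mem _
    | add x y _ _ hx hy => rw [map_add, add_mul]; exact Ideal.add_mem _ hx hy
    | smul b x _ hx => rw [smul_eq_mul, map_mul, mul_assoc]; exact Ideal.mul_mem_left _ _ hx
  exact key _ (hN i)

end Cubic

end

/-! ### Homogeneous components -/

section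

open MvPolynomial

section Graded

variable {K : Type} [Field K]

lemma homogeneousComponent_mul_right (n : ℕ) {h : MvPolynomial (Fin 3) K} {m : ℕ}
    (hh : h.IsHomogeneous m) (g : MvPolynomial (Fin 3) K) :
    homogeneousComponent n (g * h) = if m ≤ n then homogeneousComponent (n - m) g * h else 0 := by
  induction g using MvPolynomial.induction_on' with
  | add a b ha hb =>
    rw [add_mul, map_add, ha, hb]
    split_ifs
    · rw [map_add, add_mul]
    · simp
  | monomial u a =>
    have h1 : (monomial u a : MvPolynomial (Fin 3) K).IsHomogeneous u.degree :=
      isHomogeneous_monomial a rfl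
    have h2 := h1.mul hh
    rw [homogeneousComponent_of_mem ((mem_homogeneousSubmodule _ _).mpr h2),
      homogeneousComponent_of_mem ((mem_homogeneousSubmodule _ _).mpr h1)]
    by_cases hmn : m ≤ n
    · rw [if_pos hmn]
      by_cases h3 : n = u.degree + m
      · rw [if_pos h3, if_pos (by omega)]
      · rw [if_neg h3, if_neg (by omega), zero_mul]
    · rw [if_neg hmn, if_neg (by omega)]

lemma homogeneousComponent_pow {p : ℕ} [Fact p.Prime] [CharP K p] (d e : ℕ)
    (f : MvPolynomial (Fin 3) K) :
    homogeneousComponent (p ^ e * d) (f ^ p ^ e) = homogeneousComponent d f ^ p ^ e := by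
  induction f using MvPolynomial.induction_on' with
  | add a b ha hb => rw [add_pow_char_pow, map_add, ha, hb, map_add, add_pow_char_pow]
  | monomial u a =>
    have hp : 0 < p ^ e := pow_pos (Fact.out : p.Prime).pos _
    have h1 : (monomial u a : MvPolynomial (Fin 3) K).IsHomogeneous u.degree :=
      isHomogeneous_monomial a rfl
    have h2 := h1.pow (p ^ e)
    rw [homogeneousComponent_of_mem ((mem_homogeneousSubmodule _ _).mpr h2),
      homogeneousComponent_of_mem ((mem_homogeneousSubmodule _ _).mpr h1)]
    by_cases h3 : d = u.degree
    · rw [if_pos h3, if_pos (by rw [h3, mul_comm])]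
    · rw [if_neg h3, zero_pow hp.ne', if_neg]
      intro h4
      rw [mul_comm] at h4
      exact h3 (Nat.eq_of_mul_eq_mul_right hp h4)

/-- An ideal generated by homogeneous elements is generated by finitely many of them. -/
lemma exists_finite_generators {F : MvPolynomial (Fin 3) K}
    (I : Ideal (MvPolynomial (Fin 3) K ⧸ Ideal.span {F})) (S : Set (MvPolynomial (Fin 3) K))
    (hS : ∀ g ∈ S, ∃ dg, g.IsHomogeneous dg)
    (hI : I = Ideal.span (Ideal.Quotient.mk (Ideal.span {F}) '' S)) :
    ∃ (r : ℕ) (G : Fin r → MvPolynomial (Fin 3) K) (d : Fin r → ℕ),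
      (∀ i, (G i).IsHomogeneous (d i)) ∧
      I = Ideal.span (Set.range fun i => Ideal.Quotient.mk (Ideal.span {F}) (G i)) := by
  classical
  have hfg : (Ideal.span (Ideal.Quotient.mk (Ideal.span {F}) '' S)).FG :=
    IsNoetherian.noetherian _
  obtain ⟨T, hT, hTs⟩ := Submodule.fg_span_iff_fg_span_finset_subset _ |>.mp hfg
  have hch : ∀ t : T, ∃ g ∈ S, Ideal.Quotient.mk (Ideal.span {F}) g = t := fun t => hT t.2
  choose g hgS hgt using hch
  choose dg hdg using hS
  let ε := T.equivFin
  refine ⟨T.card, fun i => g (ε.symm i), fun i => dg _ (hgS (ε.symm i)), fun i => hdg _ _, ?_⟩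
  rw [hI]
  refine hTs.trans ?_
  congr 1
  ext r
  simp only [Set.mem_range, hgt]
  constructor
  · intro hr; exact ⟨ε ⟨r, hr⟩, by simp⟩
  · rintro ⟨i, rfl⟩; exact (ε.symm i).2

/-- The relations `X^N f^q ∈ I^[q]`, split into homogeneous components. -/
lemma homogeneous_relation {p : ℕ} [Fact p.Prime] [CharP K p] {F : MvPolynomial (Fin 3) K}
    (hF : F.IsHomogeneous 3)
    {r : ℕ} (G : Fin r → MvPolynomial (Fin 3) K) (d : Fin r → ℕ)
    (hG : ∀ i, (G i).IsHomogeneous (d i)) (f : MvPolynomial (Fin 3) K) (N e : ℕ) (j : Fin 3)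
    (h : Ideal.Quotient.mk (Ideal.span {F}) (X j ^ N) *
        (Ideal.Quotient.mk (Ideal.span {F}) f) ^ p ^ e ∈
      bracketPow (Ideal.span (Set.range fun i => Ideal.Quotient.mk (Ideal.span {F}) (G i)))
        (p ^ e)) (n : ℕ) :
    ∃ s : Fin r → MvPolynomial (Fin 3) K,
      (∀ i, s i = 0 ∨ ∃ m, m + p ^ e * d i = p ^ e * n + N ∧ (s i).IsHomogeneous m) ∧
      Ideal.Quotient.mk (Ideal.span {F}) (X j ^ N * homogeneousComponent n f ^ p ^ e) =
        Ideal.Quotient.mk (Ideal.span {F}) (∑ i, s i * G i ^ p ^ e) := by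
  have hch : CharP (MvPolynomial (Fin 3) K ⧸ Ideal.span {F}) p ∨
      Subsingleton (MvPolynomial (Fin 3) K ⧸ Ideal.span {F}) := by
    rcases subsingleton_or_nontrivial (MvPolynomial (Fin 3) K ⧸ Ideal.span {F}) with h | h
    · exact Or.inr h
    · exact Or.inl (charP_of_injective_algebraMap (algebraMap K _).injective p)
  rcases hch with hch | hch
  swap
  · exact ⟨fun _ => 0, fun i => Or.inl rfl, Subsingleton.elim _ _⟩
  rw [bracketPow_eq_map, Ideal.map_span, ← Set.range_comp, Ideal.mem_span_range_iff_exists_fun] at h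
  obtain ⟨t, ht⟩ := h
  choose t' ht' using fun i => Ideal.Quotient.mk_surjective (t i)
  have h1 : Ideal.Quotient.mk (Ideal.span {F}) (X j ^ N * f ^ p ^ e - ∑ i, t' i * G i ^ p ^ e)
      = 0 := by
    rw [map_sub, map_mul, map_pow _ f, ← ht, map_sum, sub_eq_zero]
    refine Finset.sum_congr rfl fun i _ => ?_
    rw [map_mul, ht', map_pow]
    rfl
  obtain ⟨w, hw⟩ := (Ideal.Quotient.eq_zero_iff_dvd _ _).mp h1
  refine ⟨fun i => if p ^ e * d i ≤ p ^ e * n + N then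
    homogeneousComponent (p ^ e * n + N - p ^ e * d i) (t' i) else 0, fun i => ?_, ?_⟩
  · dsimp only
    split_ifs with h2
    · exact Or.inr ⟨_, by omega, homogeneousComponent_isHomogeneous _ _⟩
    · exact Or.inl rfl
  · rw [← sub_eq_zero, ← map_sub, Ideal.Quotient.eq_zero_iff_dvd]
    have h3 := congrArg (homogeneousComponent (p ^ e * n + N)) hw
    rw [map_sub, mul_comm (X j ^ N),
      homogeneousComponent_mul_right _ (isHomogeneous_X_pow j N), if_pos (by omega),
      Nat.add_sub_cancel, homogeneousComponent_pow, map_sum, mul_comm F,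
      homogeneousComponent_mul_right _ hF] at h3
    have h4 : ∀ i, homogeneousComponent (p ^ e * n + N) (t' i * G i ^ p ^ e) =
        (if p ^ e * d i ≤ p ^ e * n + N then
          homogeneousComponent (p ^ e * n + N - p ^ e * d i) (t' i) else 0) * G i ^ p ^ e := by
      intro i
      have := (hG i).pow (p ^ e)
      rw [mul_comm] at this
      rw [homogeneousComponent_mul_right _ this, ite_mul, zero_mul]
    simp only [h4] at h3
    rw [mul_comm (X j ^ N), h3]
    split_ifs
    · exact dvd_mul_left _ _
    · exact dvd_zero _

end Graded

end

/-! ### Curves with trivial dualizing sheaf -/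

section

open MvPolynomial

/-- A smooth projective curve with trivial dualizing sheaf, presented through its function field `k`
and a finite map `ξ` to the projective line. `A` and `A'` are the coordinate rings of the two
affine charts `ξ ≠ ∞` and `ξ ≠ 0`. The functional `ρ` is the residue pairing: it vanishes on `A` and
`A'`, hence lives on the first cohomology of the structure sheaf, and `repr`, `dual`, `dual'`
express that multiplication followed by `ρ` is a perfect pairing on the ring `A[ξ⁻¹]`. -/
structure Level (K : Type) [Field K] (k : Type) [Field k] [Algebra K k] where
  ξ : k
  ξ_ne : ξ ≠ 0
  A : Subalgebra K k
  A' : Subalgebra K k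
  ξ_mem : ξ ∈ A
  ξ_inv_mem : ξ⁻¹ ∈ A'
  int : ∀ a : k, IsIntegral A a → a ∈ A
  int' : ∀ a : k, IsIntegral A' a → a ∈ A'
  fg : A.FG
  loc : ∀ a ∈ A, ∃ m : ℕ, ξ⁻¹ ^ m * a ∈ A'
  loc' : ∀ a ∈ A', ∃ m : ℕ, ξ ^ m * a ∈ A
  const : ∀ a ∈ A, a ∈ A' → ∃ c : K, algebraMap K k c = a
  fd : ∀ n : ℤ, FiniteDimensional K
    (↥(A.toSubmodule ⊓ A'.toSubmodule.comap (LinearMap.mulLeft K (ξ ^ (-n)))))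
  ρ : k →ₗ[K] K
  ρ_A : ∀ a ∈ A, ρ a = 0
  ρ_A' : ∀ a ∈ A', ρ a = 0
  ρ_one : ∃ v, (∃ m : ℕ, ξ ^ m * v ∈ A) ∧ ρ v = 1
  repr : ∀ (ν : k →ₗ[K] K) (m : ℕ), (∀ a ∈ A, ν (ξ ^ m * a) = 0) →
    (∀ a ∈ A', ν (ξ⁻¹ ^ m * a) = 0) →
    ∃ h, (∃ m : ℕ, ξ ^ m * h ∈ A) ∧ ∀ w, (∃ m : ℕ, ξ ^ m * w ∈ A) → ν w = ρ (h * w)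
  dual : ∀ h, (∃ m : ℕ, ξ ^ m * h ∈ A) → (∀ a ∈ A, ρ (h * a) = 0) → h ∈ A
  dual' : ∀ h, (∃ m : ℕ, ξ ^ m * h ∈ A) → (∀ a ∈ A', ρ (h * a) = 0) → h ∈ A'

namespace Level

variable {K : Type} [Field K] {k : Type} [Field k] [Algebra K k] (E : Level K k)

/-- The coordinate ring of the intersection of the two charts. -/
def N : Subalgebra K k where
  carrier := {v | ∃ m : ℕ, E.ξ ^ m * v ∈ E.A}
  mul_mem' := by
    rintro a b ⟨m, hm⟩ ⟨n, hn⟩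
    exact ⟨m + n, by
      have := E.A.mul_mem hm hn
      rwa [mul_mul_mul_comm, ← pow_add] at this⟩
  add_mem' := by
    rintro a b ⟨m, hm⟩ ⟨n, hn⟩
    refine ⟨m + n, ?_⟩
    have h1 := E.A.mul_mem (E.A.pow_mem E.ξ_mem n) hm
    have h2 := E.A.mul_mem (E.A.pow_mem E.ξ_mem m) hn
    have := E.A.add_mem h1 h2
    convert this using 1
    ring
  algebraMap_mem' := fun r => ⟨0, by simp⟩

/-- Global sections of the `n`-th power of the line bundle of the divisor at infinity of `ξ`. -/
def S (n : ℤ) : Submodule K k :=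
  E.A.toSubmodule ⊓ E.A'.toSubmodule.comap (LinearMap.mulLeft K (E.ξ ^ (-n)))

lemma mem_S {n : ℤ} {a : k} : a ∈ E.S n ↔ a ∈ E.A ∧ E.ξ ^ (-n) * a ∈ E.A' := by
  simp [S]

lemma mem_N {v : k} : v ∈ E.N ↔ ∃ m : ℕ, E.ξ ^ m * v ∈ E.A := Iff.rfl

lemma A_le_N : E.A ≤ E.N := fun a ha => ⟨0, by simpa using ha⟩

lemma A'_le_N : E.A' ≤ E.N := fun a ha => E.loc' a ha

lemma zpow_mem_N (n : ℤ) : E.ξ ^ n ∈ E.N := by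
  obtain ⟨m, rfl | rfl⟩ := n.eq_nat_or_neg
  · rw [zpow_natCast]; exact E.A_le_N (E.A.pow_mem E.ξ_mem m)
  · refine ⟨m, ?_⟩
    rw [zpow_neg, zpow_natCast, mul_inv_cancel₀ (pow_ne_zero _ E.ξ_ne)]; exact E.A.one_mem

lemma pow_mem_A (n : ℤ) (hn : 0 ≤ n) : E.ξ ^ n ∈ E.A := by
  obtain ⟨m, rfl⟩ := Int.eq_ofNat_of_zero_le hn
  rw [zpow_natCast]; exact E.A.pow_mem E.ξ_mem m

lemma zpow_mem_A' (n : ℤ) (hn : n ≤ 0) : E.ξ ^ n ∈ E.A' := by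
  obtain ⟨m, hm⟩ := Int.eq_ofNat_of_zero_le (neg_nonneg.mpr hn)
  obtain rfl : n = -(m : ℤ) := by omega
  rw [zpow_neg, zpow_natCast, ← inv_pow]; exact E.A'.pow_mem E.ξ_inv_mem m

lemma ξ_notMem : E.ξ ∉ E.A' := by
  intro h
  obtain ⟨v, ⟨m, hm⟩, hv⟩ := E.ρ_one
  obtain ⟨j, hj⟩ := E.loc _ hm
  have h1 := E.A'.mul_mem (E.A'.pow_mem E.ξ_inv_mem m) (E.A'.mul_mem (E.A'.pow_mem h j) hj)
  have h2 : E.ξ⁻¹ ^ m * (E.ξ ^ j * (E.ξ⁻¹ ^ j * (E.ξ ^ m * v))) = v := by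
    have := E.ξ_ne
    simp only [inv_pow]
    field_simp
  rw [h2] at h1
  rw [E.ρ_A' v h1] at hv
  exact zero_ne_one hv

/-- Line bundles of negative degree have no sections. -/
lemma S_neg {n : ℤ} (hn : n < 0) {a : k} (ha : a ∈ E.S n) : a = 0 := by
  rw [mem_S] at ha
  obtain ⟨h1, h2⟩ := ha
  have h3 := E.A'.mul_mem (E.zpow_mem_A' n hn.le) h2
  rw [← mul_assoc, ← zpow_add₀ E.ξ_ne, add_neg_cancel, zpow_zero, one_mul] at h3
  obtain ⟨c, rfl⟩ := E.const a h1 h3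
  by_contra hc
  have hc0 : c ≠ 0 := fun h => hc (by rw [h, map_zero])
  have h4 := E.A'.mul_mem h2 (E.A'.algebraMap_mem c⁻¹)
  rw [mul_assoc, ← map_mul, mul_inv_cancel₀ hc0, map_one, mul_one] at h4
  have h5 := E.A'.mul_mem h4 (E.zpow_mem_A' (n + 1) (by omega))
  rw [← zpow_add₀ E.ξ_ne] at h5
  apply E.ξ_notMem
  convert h5 using 1
  rw [show -n + (n + 1) = 1 by ring, zpow_one]

/-- Serre duality: `h` is a sum of sections over the two charts if it pairs to zero with all
global sections of the dual bundle. -/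
lemma exists_split (n : ℤ) (h : k) (hN : h ∈ E.N) (hρ : ∀ s ∈ E.S n, E.ρ (h * s) = 0) :
    ∃ a ∈ E.A, ∃ b ∈ E.A', h = a + E.ξ ^ (-n) * b := by
  -- `φ` is `a ↦ ρ (h a)` on `A` modulo the sections vanishing on `S n`
  let p : Submodule K k := E.A'.toSubmodule.comap (LinearMap.mulLeft K (E.ξ ^ (-n)))
  have hp : ∀ w, w ∈ p ↔ E.ξ ^ (-n) * w ∈ E.A' := fun w => by simp [p]
  let φ : E.A.toSubmodule →ₗ[K] K := (E.ρ ∘ₗ LinearMap.mulLeft K h).domRestrict _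
  let π : E.A.toSubmodule →ₗ[K] (k ⧸ p) := p.mkQ.domRestrict _
  have hker : LinearMap.ker π ≤ LinearMap.ker φ := by
    intro a ha
    rw [LinearMap.mem_ker] at ha ⊢
    have ha' : (a : k) ∈ p := (Submodule.Quotient.mk_eq_zero p).mp ha
    exact hρ a (E.mem_S.mpr ⟨a.2, (hp _).mp ha'⟩)
  obtain ⟨ν₀, hν₀⟩ : ∃ ν₀ : (k ⧸ p) →ₗ[K] K, ∀ a, ν₀ (π a) = φ a := by
    obtain ⟨g, hg⟩ := LinearMap.exists_extend
      (((LinearMap.ker π).liftQ φ hker).comp (π.quotKerEquivRange.symm.toLinearMap))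
    refine ⟨g, fun a => ?_⟩
    have h1 := LinearMap.congr_fun hg ⟨π a, LinearMap.mem_range_self π a⟩
    simp only [LinearMap.comp_apply, LinearEquiv.coe_coe] at h1
    have h2 : π.quotKerEquivRange.symm ⟨π a, LinearMap.mem_range_self π a⟩ =
        (LinearMap.ker π).mkQ a := by
      rw [LinearEquiv.symm_apply_eq]; rfl
    rw [h2, Submodule.mkQ_apply, Submodule.liftQ_apply] at h1
    exact h1
  let ν : k →ₗ[K] K := ν₀ ∘ₗ p.mkQ
  have hνA : ∀ a ∈ E.A, ν a = E.ρ (h * a) := fun a ha => hν₀ ⟨a, ha⟩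
  have hνA' : ∀ w, E.ξ ^ (-n) * w ∈ E.A' → ν w = 0 := by
    intro w hw
    have : p.mkQ w = 0 := (Submodule.Quotient.mk_eq_zero p).mpr ((hp w).mpr hw)
    simp only [ν, LinearMap.comp_apply, this, map_zero]
  obtain ⟨m, hm⟩ := hN
  obtain ⟨h₁, hh₁N, hh₁⟩ := E.repr ν (m + n.natAbs) (by
    intro a ha
    rw [hνA _ (E.A.mul_mem (E.A.pow_mem E.ξ_mem _) ha)]
    apply E.ρ_A
    have := E.A.mul_mem hm (E.A.mul_mem (E.A.pow_mem E.ξ_mem n.natAbs) ha)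
    convert this using 1
    ring) (by
    intro a ha
    apply hνA'
    rw [← mul_assoc]
    refine E.A'.mul_mem ?_ ha
    rw [inv_pow, ← zpow_natCast, ← zpow_neg, ← zpow_add₀ E.ξ_ne]
    exact E.zpow_mem_A' _ (by have := neg_abs_le n; push_cast; linarith))
  have h1 : h - h₁ ∈ E.A := by
    refine E.dual _ (E.N.sub_mem ⟨m, hm⟩ hh₁N) fun a ha => ?_
    rw [sub_mul, map_sub, ← hνA a ha, ← hh₁ a (E.A_le_N ha), sub_self]
  have h2 : h₁ * E.ξ ^ n ∈ E.A' := by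
    refine E.dual' _ (E.N.mul_mem hh₁N (E.zpow_mem_N n)) fun a ha => ?_
    rw [mul_assoc, ← hh₁ _ (E.N.mul_mem (E.zpow_mem_N n) (E.A'_le_N ha))]
    apply hνA'
    rwa [← mul_assoc, ← zpow_add₀ E.ξ_ne, neg_add_cancel, zpow_zero, one_mul]
  refine ⟨h - h₁, h1, h₁ * E.ξ ^ n, h2, ?_⟩
  rw [mul_left_comm, ← zpow_add₀ E.ξ_ne, neg_add_cancel, zpow_zero]
  ring

lemma exists_split_of_ρ_eq_zero (v : k) (hN : v ∈ E.N) (hv : E.ρ v = 0) :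
    ∃ a ∈ E.A, ∃ b ∈ E.A', v = a + b := by
  obtain ⟨a, ha, b, hb, h⟩ := E.exists_split 0 v hN (by
    intro s hs
    rw [mem_S] at hs
    obtain ⟨c, rfl⟩ := E.const s hs.1 (by simpa using hs.2)
    rw [mul_comm, ← Algebra.smul_def, map_smul, hv, smul_zero])
  exact ⟨a, ha, b, hb, by simpa using h⟩

/-- The first cohomology of a line bundle of positive degree vanishes. -/
lemma exists_split_pos (n : ℤ) (hn : 0 < n) (v : k) (hN : v ∈ E.N) :
    ∃ a ∈ E.A, ∃ b ∈ E.A', v = a + E.ξ ^ n * b := by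
  obtain ⟨a, ha, b, hb, h⟩ := E.exists_split (-n) v hN (by
    intro s hs
    rw [E.S_neg (by omega) hs, mul_zero, map_zero])
  exact ⟨a, ha, b, hb, by simpa using h⟩

lemma S_mul {m n : ℤ} {a b : k} (ha : a ∈ E.S m) (hb : b ∈ E.S n) : a * b ∈ E.S (m + n) := by
  rw [mem_S] at *
  refine ⟨E.A.mul_mem ha.1 hb.1, ?_⟩
  have := E.A'.mul_mem ha.2 hb.2
  rwa [mul_mul_mul_comm, ← zpow_add₀ E.ξ_ne, ← neg_add] at this

/-- Above degree two the section ring is generated by its two elements `1` and `ξ` of degree one. -/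
lemma S_succ (m : ℤ) (hm : 2 ≤ m) (s : k) (hs : s ∈ E.S (m + 1)) :
    ∃ s₀ ∈ E.S m, ∃ s₁ ∈ E.S m, s = s₀ + E.ξ * s₁ := by
  have hs' := E.mem_S.mp hs
  have hξ := E.ξ_ne
  obtain ⟨t, ht, b, hb, h⟩ := E.exists_split_pos (m - 1) (by omega) (E.ξ⁻¹ * s)
    (E.N.mul_mem (E.A'_le_N E.ξ_inv_mem) (E.A_le_N hs'.1))
  have h1 : s = E.ξ * t + E.ξ ^ m * b := by
    have h2 : s = E.ξ * (E.ξ⁻¹ * s) := by field_simp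
    rw [h2, h, mul_add, ← mul_assoc E.ξ (E.ξ ^ (m - 1)), ← zpow_one_add₀ hξ,
      show 1 + (m - 1) = m by ring]
  refine ⟨s - E.ξ * t, E.mem_S.mpr ⟨E.A.sub_mem hs'.1 (E.A.mul_mem E.ξ_mem ht), ?_⟩, t,
    E.mem_S.mpr ⟨ht, ?_⟩, by ring⟩
  · have : E.ξ ^ (-m) * (s - E.ξ * t) = b := by
      rw [h1, add_sub_cancel_left, ← mul_assoc, ← zpow_add₀ hξ, neg_add_cancel, zpow_zero, one_mul]
    rw [this]; exact hb
  · have : E.ξ ^ (-m) * t = E.ξ ^ (-(m + 1)) * s - E.ξ⁻¹ * b := by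
      rw [h1, mul_add, ← mul_assoc, ← mul_assoc, ← zpow_add₀ hξ, ← zpow_add_one₀ hξ]
      rw [show -(m + 1) + 1 = -m by ring, show -(m + 1) + m = -1 by ring, zpow_neg_one]
      ring
    rw [this]
    exact E.A'.sub_mem hs'.2 (E.A'.mul_mem E.ξ_inv_mem hb)

end Level

end

/-! ### Cohomology classes and tight closure relations -/

section

open MvPolynomial

/-- A finite-dimensional space of elements of a Noetherian domain meets high powers of a proper
ideal trivially. -/
lemma exists_pow_disjoint {K A : Type} [Field K] [CommRing A] [IsDomain A] [Algebra K A]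
    [IsNoetherianRing A] (V : Submodule K A) [FiniteDimensional K V] (I : Ideal A) (hI : I ≠ ⊤) :
    ∃ n₀ : ℕ, ∀ n ≥ n₀, ∀ x ∈ V, x ∈ I ^ n → x = 0 := by
  let f : ℕ →o (Submodule K V)ᵒᵈ :=
    ⟨fun n => OrderDual.toDual (((I ^ n).restrictScalars K).comap V.subtype), by
      intro m n hmn x hx
      exact Ideal.pow_le_pow_right hmn hx⟩
  obtain ⟨n₀, h⟩ := IsArtinian.monotone_stabilizes f
  refine ⟨n₀, fun n hn x hx hxn => ?_⟩
  have h1 : x ∈ ⨅ i : ℕ, I ^ i := by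
    rw [Ideal.mem_iInf]
    intro i
    have h2 : (⟨x, hx⟩ : V) ∈ ((I ^ n₀).restrictScalars K).comap V.subtype :=
      Ideal.pow_le_pow_right hn hxn
    rcases le_total i n₀ with hi | hi
    · exact Ideal.pow_le_pow_right hi h2
    · have h3 := congrArg OrderDual.ofDual (h i hi)
      have h4 : (⟨x, hx⟩ : V) ∈ ((I ^ i).restrictScalars K).comap V.subtype := by
        have h5 : ((I ^ n₀).restrictScalars K).comap V.subtype =
          ((I ^ i).restrictScalars K).comap V.subtype := h3
        rw [← h5]; exact h2
      exact h4
  rw [Ideal.iInf_pow_eq_bot_of_isDomain I hI] at h1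
  exact h1

lemma exists_algHom (K B : Type) [Field K] [IsAlgClosed K] [CommRing B] [Nontrivial B] [Algebra K B]
    [Algebra.FiniteType K B] : Nonempty (B →ₐ[K] K) := by
  obtain ⟨M, hM⟩ := Ideal.exists_maximal B
  letI := Ideal.Quotient.field M
  haveI : Module.Finite K (B ⧸ M) := finite_of_finite_type_of_isJacobsonRing K (B ⧸ M)
  have hb : Function.Bijective (algebraMap K (B ⧸ M)) :=
    IsAlgClosed.algebraMap_bijective_of_isIntegral
  exact ⟨((AlgEquiv.ofBijective (Algebra.ofId K (B ⧸ M)) hb).symm.toAlgHom).comp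
    (Ideal.Quotient.mkₐ K M)⟩

lemma exists_algHom_ne_zero (K B : Type) [Field K] [IsAlgClosed K] [CommRing B] [IsDomain B]
    [Algebra K B] [Algebra.FiniteType K B] (g : B) (hg : g ≠ 0) :
    ∃ ev : B →ₐ[K] K, ev g ≠ 0 := by
  haveI : IsDomain (Localization.Away g) := IsLocalization.isDomain_localization
    (powers_le_nonZeroDivisors_of_noZeroDivisors hg)
  haveI : Algebra.FiniteType B (Localization.Away g) :=
    IsLocalization.finiteType_of_monoid_fg (Submonoid.powers g) _
  haveI : Algebra.FiniteType K (Localization.Away g) := Algebra.FiniteType.trans (S := B)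
    inferInstance inferInstance
  obtain ⟨ev⟩ := exists_algHom K (Localization.Away g)
  refine ⟨ev.comp (IsScalarTower.toAlgHom K B _), ?_⟩
  have := (IsLocalization.Away.algebraMap_isUnit (S := Localization.Away g) g).map ev
  exact this.ne_zero

namespace Level

variable {K : Type} [Field K] {k : Type} [Field k] [Algebra K k] (E : Level K k)

/-- The sections of degree `d` that are linear combinations of the sections `G i` of degree `δ i`
with coefficients of degree `d - δ i`. -/
def W {r : ℕ} (d : ℤ) (δ : Fin r → ℤ) (G : Fin r → k) : Submodule K k where
  carrier := {Φ | ∃ s : Fin r → k, (∀ i, s i ∈ E.S (d - δ i)) ∧ Φ = ∑ i, s i * G i}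
  add_mem' := by
    rintro _ _ ⟨s, hs, rfl⟩ ⟨t, ht, rfl⟩
    exact ⟨fun i => s i + t i, fun i => (E.S _).add_mem (hs i) (ht i), by
      simp only [add_mul, Finset.sum_add_distrib]⟩
  zero_mem' := ⟨0, fun i => (E.S _).zero_mem, by simp⟩
  smul_mem' := by
    rintro c _ ⟨s, hs, rfl⟩
    exact ⟨fun i => c • s i, fun i => (E.S _).smul_mem c (hs i), by
      simp only [smul_mul_assoc, Finset.smul_sum]⟩

/-- The first cohomology class represented by `h` is killed by every `G i`: each `h * G i` splits
as a section `P i` over the first chart plus a twisted section over the second one. Such an `h`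
represents a linear form on the sections of degree `d` that vanishes on `W d δ G`. -/
def Good {r : ℕ} (d : ℤ) (δ : Fin r → ℤ) (G : Fin r → k) (h : k) (P : Fin r → E.A) : Prop :=
  h ∈ E.N ∧ ∀ i, ∃ b ∈ E.A', h * G i = P i + E.ξ ^ (δ i - d) * b

/-- A section outside the span of the `G i` is detected by a class in cohomology, which duality
represents by a function `h`. -/
lemma exists_good {r : ℕ} (d : ℤ) (δ : Fin r → ℤ) (G : Fin r → k) (Φ : k)
    (hG : ∀ i, G i ∈ E.S (δ i)) (hΦ : Φ ∈ E.S d) (hW : Φ ∉ E.W d δ G) :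
    ∃ h P, E.Good d δ G h P ∧ E.ρ (h * Φ) ≠ 0 := by
  have hξ := E.ξ_ne
  have hWS : E.W d δ G ≤ E.S d := by
    rintro _ ⟨s, hs, rfl⟩
    refine Submodule.sum_mem _ fun i _ => ?_
    have := E.S_mul (hs i) (hG i)
    rwa [sub_add_cancel] at this
  let m : ℕ := d.natAbs + 1
  have hm : d < m := by
    have := le_abs_self d
    simp only [m]; push_cast; linarith
  let U : Submodule K k := E.W d δ G ⊔ (E.A.toSubmodule.map (LinearMap.mulLeft K (E.ξ ^ m)) ⊔
    E.A'.toSubmodule.map (LinearMap.mulLeft K (E.ξ⁻¹ ^ m)))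
  have hU : Φ ∉ U := by
    intro hmem
    obtain ⟨w, hw, t, ht, rfl⟩ := Submodule.mem_sup.mp hmem
    obtain ⟨_, ⟨a, ha, rfl⟩, _, ⟨b, hb, rfl⟩, rfl⟩ := Submodule.mem_sup.mp ht
    simp only [LinearMap.mulLeft_apply] at *
    have ha : a ∈ E.A := ha
    have hb : b ∈ E.A' := hb
    have hs := (E.S d).sub_mem hΦ (hWS hw)
    rw [add_sub_cancel_left] at hs
    have h1 : E.ξ⁻¹ ^ m * b ∈ E.S (-(m : ℤ)) := by
      rw [mem_S]
      constructor
      · have := E.A.sub_mem (E.mem_S.mp hs).1 (E.A.mul_mem (E.A.pow_mem E.ξ_mem m) ha)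
        rwa [add_sub_cancel_left] at this
      · rw [neg_neg, zpow_natCast, ← mul_assoc, ← mul_pow, mul_inv_cancel₀ hξ, one_pow, one_mul]
        exact hb
    have h2 := E.S_neg (by simp only [m]; push_cast; have := abs_nonneg d; linarith) h1
    rw [h2, add_zero] at hs
    have h3 : a ∈ E.S (d - m) := by
      rw [mem_S]
      refine ⟨ha, ?_⟩
      have := (E.mem_S.mp hs).2
      rw [← mul_assoc, ← zpow_natCast, ← zpow_add₀ hξ] at this
      rwa [show -(d - (m : ℤ)) = -d + m by ring]
    have h4 := E.S_neg (by omega) h3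
    apply hW
    rw [h2, h4, mul_zero, add_zero, add_zero]
    exact hw
  obtain ⟨ν, hν, hUν⟩ := Submodule.exists_le_ker_of_notMem hU
  have hν0 : ∀ u ∈ U, ν u = 0 := fun u hu => hUν hu
  obtain ⟨h, hh, hrep⟩ := E.repr ν m
    (fun a ha => hν0 _ (Submodule.mem_sup_right (Submodule.mem_sup_left ⟨a, ha, rfl⟩)))
    (fun a ha => hν0 _ (Submodule.mem_sup_right (Submodule.mem_sup_right ⟨a, ha, rfl⟩)))
  have hsplit : ∀ i, ∃ a : E.A, ∃ b ∈ E.A', h * G i = a + E.ξ ^ (δ i - d) * b := by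
    intro i
    obtain ⟨a, ha, b, hb, hab⟩ := E.exists_split (d - δ i) (h * G i)
      (E.N.mul_mem hh (E.A_le_N (E.mem_S.mp (hG i)).1)) (by
      intro s hs
      rw [mul_assoc, ← hrep]
      · refine hν0 _ (Submodule.mem_sup_left ⟨Pi.single i s, fun j => ?_, ?_⟩)
        · rcases eq_or_ne j i with rfl | hj
          · rwa [Pi.single_eq_same]
          · rw [Pi.single_eq_of_ne hj]; exact Submodule.zero_mem _
        · rw [Finset.sum_eq_single i]
          · rw [Pi.single_eq_same, mul_comm]
          · intro j _ hj
            rw [Pi.single_eq_of_ne hj, zero_mul]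
          · simp
      · exact E.N.mul_mem (E.A_le_N (E.mem_S.mp (hG i)).1) (E.A_le_N (E.mem_S.mp hs).1))
    exact ⟨⟨a, ha⟩, b, hb, by rw [hab, neg_sub]⟩
  choose P hP using hsplit
  refine ⟨h, P, ⟨hh, hP⟩, ?_⟩
  rw [← hrep Φ (E.A_le_N (E.mem_S.mp hΦ).1)]
  exact hν

/-- The relations witnessing that `Φ` lies in the tight closure of the `G i`, dehomogenized. The two
multipliers, `n`-th powers of two variables, become the sections `ξ ^ n` and `1` of degree `n`. -/
def Tight (p : ℕ) {r : ℕ} (d : ℤ) (δ : Fin r → ℤ) (G : Fin r → k) (Φ : k) : Prop :=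
  ∃ n : ℕ, ∀ e : ℕ, ∃ s s' : Fin r → k,
    (∀ i, s i ∈ E.S ((p : ℤ) ^ e * (d - δ i) + n)) ∧
    (∀ i, s' i ∈ E.S ((p : ℤ) ^ e * (d - δ i) + n)) ∧
    E.ξ ^ n * Φ ^ p ^ e = ∑ i, s i * G i ^ p ^ e ∧ Φ ^ p ^ e = ∑ i, s' i * G i ^ p ^ e

variable {E} in
/-- The splittings of the `h * G i` turn a combination of the `G i ^ q` into a splitting whose part on
the first chart lies in `J ^ q` as soon as all `P i` lie in `J`. -/
lemma Good.relation {p : ℕ} [Fact p.Prime] [CharP k p] {r : ℕ} {d : ℤ} {δ : Fin r → ℤ}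
    {G : Fin r → k} {h : k} {P : Fin r → E.A} (hg : E.Good d δ G h P) (J : Ideal E.A)
    (hP : ∀ i, P i ∈ J) (e n : ℕ) (s : Fin r → k)
    (hs : ∀ i, s i ∈ E.S ((p : ℤ) ^ e * (d - δ i) + n)) :
    ∃ a ∈ J ^ p ^ e, ∃ b ∈ E.A',
      h ^ p ^ e * ∑ i, s i * G i ^ p ^ e = (a : E.A) + E.ξ ^ n * b := by
  choose b hb hPb using hg.2
  have hξ := E.ξ_ne
  refine ⟨∑ i, (⟨s i, (E.mem_S.mp (hs i)).1⟩ : E.A) * P i ^ p ^ e,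
    Ideal.sum_mem _ fun i _ => Ideal.mul_mem_left _ _ (Ideal.pow_mem_pow (hP i) _),
    ∑ i, (E.ξ ^ (-((p : ℤ) ^ e * (d - δ i) + n)) * s i) * b i ^ p ^ e,
    Subalgebra.sum_mem _ fun i _ => E.A'.mul_mem (E.mem_S.mp (hs i)).2 (E.A'.pow_mem (hb i) _), ?_⟩
  rw [AddSubmonoidClass.coe_finsetSum, Finset.mul_sum, Finset.mul_sum, ← Finset.sum_add_distrib]
  refine Finset.sum_congr rfl fun i _ => ?_
  rw [mul_left_comm, ← mul_pow, hPb, add_pow_char_pow, mul_add, mul_pow]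
  congr 1
  rw [← zpow_natCast (E.ξ ^ (δ i - d)), ← zpow_mul, ← zpow_natCast E.ξ n]
  have h1 : E.ξ ^ ((δ i - d) * ((p ^ e : ℕ) : ℤ)) =
      E.ξ ^ (n : ℤ) * E.ξ ^ (-((p : ℤ) ^ e * (d - δ i) + n)) := by
    rw [← zpow_add₀ hξ]; congr 1; push_cast; ring
  rw [h1]; ring

lemma isNoetherianRing : IsNoetherianRing E.A := by
  haveI : Algebra.FiniteType K E.A := E.A.fg_iff_finiteType.mp E.fg
  exact Algebra.FiniteType.isNoetherianRing K E.A

/-- If all the `P i` vanish at a point of the first chart then the Frobenius pullbacks of the class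
of `h Φ` become representable by functions vanishing to high order there. -/
lemma Good.pow_split {p : ℕ} [Fact p.Prime] [CharP k p] {r : ℕ} {d : ℤ} {δ : Fin r → ℤ}
    {G : Fin r → k} {Φ h : k} {P : Fin r → E.A} (hT : E.Tight p d δ G Φ)
    (hg : E.Good d δ G h P) (ev : E.A →ₐ[K] K) (hP : ∀ i, ev (P i) = 0) :
    ∃ e₀, ∀ e ≥ e₀, ∃ a ∈ (RingHom.ker ev) ^ p ^ e, ∃ b ∈ E.A',
      (h * Φ) ^ p ^ e = (a : E.A) + b := by
  obtain ⟨n, hn⟩ := hT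
  have hξ := E.ξ_ne
  haveI := E.isNoetherianRing
  let V : Submodule K E.A := (E.S (2 * n)).comap E.A.val.toLinearMap
  haveI : FiniteDimensional K V := by
    haveI : FiniteDimensional K (E.S (2 * n)) := E.fd (2 * n)
    let g : V →ₗ[K] E.S (2 * n) := E.A.val.toLinearMap.restrict (fun x hx => hx)
    refine FiniteDimensional.of_injective g ?_
    intro x y hxy
    have : ((x : E.A) : k) = (y : E.A) := congrArg (Subtype.val : E.S (2 * n) → k) hxy
    exact Subtype.ext (Subtype.ext this)
  obtain ⟨n₀, hn₀⟩ := exists_pow_disjoint V (RingHom.ker ev) (RingHom.ker_ne_top _)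
  refine ⟨n₀, fun e he => ?_⟩
  obtain ⟨s, s', hs, hs', h1, h2⟩ := hn e
  obtain ⟨a, ha, b, hb, hab⟩ := hg.relation (RingHom.ker ev) hP e n s hs
  obtain ⟨a', ha', b', hb', hab'⟩ := hg.relation (RingHom.ker ev) hP e n s' hs'
  rw [← h1] at hab
  rw [← h2] at hab'
  rw [mul_left_comm] at hab
  have hq : n₀ ≤ p ^ e := he.trans (Nat.lt_pow_self (Fact.out : p.Prime).one_lt).le
  let x : E.A := ⟨E.ξ, E.ξ_mem⟩
  have hz : x ^ n * a' - a = 0 := by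
    refine hn₀ _ hq _ ?_ (Ideal.sub_mem _ (Ideal.mul_mem_left _ _ ha') ha)
    change E.ξ ^ n * (a' : k) - a ∈ E.S (2 * n)
    have h3 : E.ξ ^ n * (a' : k) - a = E.ξ ^ n * b - E.ξ ^ (2 * n) * b' := by
      rw [hab', mul_add] at hab
      linear_combination hab
    rw [mem_S]
    refine ⟨E.A.sub_mem (E.A.mul_mem (E.A.pow_mem E.ξ_mem n) a'.2) a.2, ?_⟩
    rw [h3]
    have h4 : E.ξ ^ (-(2 * (n : ℤ))) * (E.ξ ^ n * b - E.ξ ^ (2 * n) * b') =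
        E.ξ ^ (-(n : ℤ)) * b - b' := by
      rw [← zpow_natCast, ← zpow_natCast, mul_sub, ← mul_assoc, ← mul_assoc, ← zpow_add₀ hξ,
        ← zpow_add₀ hξ]
      push_cast
      rw [show -(2 * (n : ℤ)) + n = -n by ring, neg_add_cancel, zpow_zero, one_mul]
    rw [h4]
    exact E.A'.sub_mem (E.A'.mul_mem (E.zpow_mem_A' _ (by omega)) hb) hb'
  have hz' : E.ξ ^ n * (a' : k) - a = 0 := congrArg Subtype.val hz
  have h5 : E.ξ ^ n * b' = b := by
    have h6 : E.ξ ^ n * (E.ξ ^ n * b' - b) = 0 := by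
      rw [hab', mul_add] at hab
      linear_combination hab - hz'
    rcases mul_eq_zero.mp h6 with h7 | h7
    · exact absurd h7 (pow_ne_zero _ hξ)
    · exact sub_eq_zero.mp h7
  exact ⟨a', ha', b, hb, by rw [mul_pow, hab', h5]⟩

/-- Frobenius acts on the first cohomology of the structure sheaf by the `p`-th power map with
respect to the basis dual to `ρ`. -/
def Ordinary (p : ℕ) : Prop := ∀ v ∈ E.N, E.ρ (v ^ p) = E.ρ v ^ p

/-- On an ordinary curve a class `h Φ` whose components `P i` vanish at a point is zero, because some
Frobenius pullback of it is and Frobenius is injective on cohomology. -/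
lemma Good.ρ_eq_zero {p : ℕ} [Fact p.Prime] [CharP k p] (hord : E.Ordinary p)
    {r : ℕ} {d : ℤ} {δ : Fin r → ℤ}
    {G : Fin r → k} {Φ h : k} {P : Fin r → E.A} (hT : E.Tight p d δ G Φ) (hΦ : Φ ∈ E.S d)
    (hg : E.Good d δ G h P) (ev : E.A →ₐ[K] K) (hP : ∀ i, ev (P i) = 0) :
    E.ρ (h * Φ) = 0 := by
  obtain ⟨e, he⟩ := Good.pow_split E hT hg ev hP
  obtain ⟨a, -, b, hb, hab⟩ := he e le_rfl
  have hN : h * Φ ∈ E.N := E.N.mul_mem hg.1 (E.A_le_N (E.mem_S.mp hΦ).1)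
  have h1 : ∀ e : ℕ, E.ρ ((h * Φ) ^ p ^ e) = E.ρ (h * Φ) ^ p ^ e := by
    intro e
    induction e with
    | zero => simp
    | succ e ih => rw [pow_succ, pow_mul, hord _ (E.N.pow_mem hN _), ih, pow_mul]
  have h2 := h1 e
  rw [hab, map_add, E.ρ_A _ a.2, E.ρ_A' _ hb, add_zero] at h2
  exact eq_zero_of_pow_eq_zero h2.symm

variable {E} in
lemma Good.sub_sum {r m : ℕ} {d : ℤ} {δ : Fin r → ℤ} {G : Fin r → k} {h : k} {P : Fin r → E.A}
    (hg : E.Good d δ G h P) (h' : Fin m → k) (P' : Fin m → Fin r → E.A)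
    (hg' : ∀ l, E.Good d δ G (h' l) (P' l)) (c : Fin m → K) :
    E.Good d δ G (h - ∑ l, c l • h' l) (P - ∑ l, c l • P' l) := by
  refine ⟨E.N.sub_mem hg.1 (Subalgebra.sum_mem _ fun l _ => E.N.smul_mem (hg' l).1 _), fun i => ?_⟩
  obtain ⟨b, hb, h1⟩ := hg.2 i
  choose b' hb' h2 using fun l => (hg' l).2 i
  refine ⟨b - ∑ l, c l • b' l, E.A'.sub_mem hb
    (Subalgebra.sum_mem _ fun l _ => E.A'.smul_mem (hb' l) _), ?_⟩
  have h3 : (((P - ∑ l, c l • P' l) i : E.A) : k) = P i - ∑ l, c l • (P' l i : k) := by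
    simp [Finset.sum_apply]
  rw [h3, sub_mul, h1, mul_sub, Finset.sum_mul, Finset.mul_sum]
  simp only [smul_mul_assoc, h2, smul_add, Finset.sum_add_distrib, mul_smul_comm]
  ring

lemma exists_ev [IsAlgClosed K] : Nonempty (E.A →ₐ[K] K) := by
  haveI : Algebra.FiniteType K E.A := E.A.fg_iff_finiteType.mp E.fg
  exact exists_algHom K E.A

end Level

end

/-! ### Artin–Schreier extensions -/

section ArtinSchreier

open Polynomial in
/-- An Artin–Schreier polynomial without roots is irreducible: the sum of the roots of a factor of
degree `d < p` differs from `d` times a root by a constant. -/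
lemma artinSchreier_irreducible {k : Type} [Field k] (p : ℕ) [Fact p.Prime] [CharP k p] (α : k)
    (h : ∀ a : k, a ^ p - a ≠ α) : Irreducible (X ^ p - X - C α : k[X]) := by
  have hp : 1 < p := (Fact.out : p.Prime).one_lt
  have hdeg : (X ^ p - X - C α : k[X]).natDegree = p := by
    compute_degree!
    · simp [hp.ne, (zero_lt_one.trans hp).ne']
    · exact hp.le
  have hmon : (X ^ p - X - C α : k[X]).Monic := by
    rw [Polynomial.Monic, leadingCoeff, hdeg]
    simp [coeff_X, coeff_C, hp.ne, (zero_lt_one.trans hp).ne']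
  let Ω := AlgebraicClosure k
  haveI : CharP Ω p := charP_of_injective_algebraMap (algebraMap k Ω).injective p
  obtain ⟨u, hu⟩ := IsAlgClosed.exists_aeval_eq_zero Ω (X ^ p - X - C α : k[X]) (by
    rw [degree_eq_natDegree hmon.ne_zero, hdeg]; exact_mod_cast (zero_lt_one.trans hp).ne')
  have hintg : IsIntegral k u := ⟨_, hmon, by simpa [aeval_def] using hu⟩
  have hdvd := minpoly.dvd k u hu
  have hle : (minpoly k u).natDegree ≤ p := hdeg ▸ natDegree_le_of_dvd hdvd hmon.ne_zero
  have hu' : u ^ p = u + algebraMap k Ω α := by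
    simp at hu
    linear_combination hu
  rcases hle.eq_or_lt with heq | hlt
  · have h1 : X ^ p - X - C α = minpoly k u := by
      refine eq_of_monic_of_dvd_of_natDegree_le (minpoly.monic hintg) hmon hdvd ?_
      rw [hdeg, heq]
    rw [h1]
    exact minpoly.irreducible hintg
  · exfalso
    have hpos := minpoly.natDegree_pos hintg
    have hs : ((minpoly k u).map (algebraMap k Ω)).Splits := IsAlgClosed.splits _
    have hsum := hs.nextCoeff_eq_neg_sum_roots_of_monic ((minpoly.monic hintg).map _)
    have hcard := hs.natDegree_eq_card_roots
    rw [natDegree_map] at hcard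
    have hroot : ∀ r ∈ ((minpoly k u).map (algebraMap k Ω)).roots,
        ∃ c : k, r = u + algebraMap k Ω c := by
      intro r hr
      have h1 : aeval r (minpoly k u) = 0 := by
        have := isRoot_of_mem_roots hr
        rwa [IsRoot, eval_map_algebraMap] at this
      have h2 : aeval r (X ^ p - X - C α : k[X]) = 0 := by
        obtain ⟨g, hg⟩ := hdvd
        rw [hg, map_mul, h1, zero_mul]
      simp at h2
      have h3 : (r - u) ^ p = r - u := by
        rw [sub_pow_char, hu']; linear_combination h2
      rw [← Subfield.mem_bot_iff_pow_eq_self (F := Ω) p] at h3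
      have h4 : (⊥ : Subfield Ω) ≤ (algebraMap k Ω).fieldRange := bot_le
      obtain ⟨c, hc⟩ := h4 h3
      exact ⟨c, by rw [hc]; ring⟩
    have hms : ∀ s : Multiset Ω, (∀ r ∈ s, ∃ c : k, r = u + algebraMap k Ω c) →
        ∃ c : k, s.sum = (s.card : Ω) * u + algebraMap k Ω c := by
      intro s
      induction s using Multiset.induction_on with
      | empty => exact fun _ => ⟨0, by simp⟩
      | cons a s ih =>
        intro hh
        obtain ⟨c, hc⟩ := ih (fun r hr => hh r (Multiset.mem_cons_of_mem hr))
        obtain ⟨c', hc'⟩ := hh a (Multiset.mem_cons_self _ _)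
        refine ⟨c + c', ?_⟩
        rw [Multiset.sum_cons, hc, hc', Multiset.card_cons, map_add]
        push_cast; ring
    obtain ⟨c, hc⟩ := hms _ hroot
    rw [← hcard] at hc
    rw [hc, nextCoeff_map_eq] at hsum
    set d := (minpoly k u).natDegree with hd
    have hd0 : (d : k) ≠ 0 := by
      intro h0
      rw [CharP.cast_eq_zero_iff k p] at h0
      exact absurd (Nat.le_of_dvd hpos h0) (by omega)
    have hd0' : (d : Ω) ≠ 0 := by
      rw [← map_natCast (algebraMap k Ω)]
      exact fun h0 => hd0 ((algebraMap k Ω).injective (by rw [h0, map_zero]))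
    have hu2 : u = algebraMap k Ω ((-(minpoly k u).nextCoeff - c) / d) := by
      rw [map_div₀, map_sub, map_neg, map_natCast, hsum]
      rw [eq_div_iff hd0']
      ring
    apply h ((-(minpoly k u).nextCoeff - c) / d)
    apply (algebraMap k Ω).injective
    rw [map_sub, map_pow, ← hu2, hu']
    ring

/-- The data of an Artin–Schreier extension `k' = k(u)` with `u ^ p - u = α`; `t` is the negative
of the trace. -/
structure ASData (p : ℕ) (k k' : Type) [Field k] [Field k'] [Algebra k k'] where
  u : k'
  α : k
  eqn : u ^ p = u + algebraMap k k' α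
  t : k' →ₗ[k] k
  t_pow : ∀ i < p, t (u ^ i) = if i = p - 1 then 1 else 0
  span : Submodule.span k (Set.range fun i : Fin p => u ^ (i : ℕ)) = ⊤
  t_int : ∀ (B : Type) [CommRing B] [Algebra B k] [Algebra B k'] [IsScalarTower B k k'] (b : k'),
    IsIntegral B b → IsIntegral B (t b)

open Polynomial in
/-- The Artin–Schreier extension of a field for an equation without roots. -/
lemma exists_ASData {k : Type} [Field k] (p : ℕ) [Fact p.Prime] [CharP k p] (α : k)
    (h : ∀ a : k, a ^ p - a ≠ α) :
    ∃ (k' : Type) (_ : Field k') (_ : Algebra k k') (D : ASData p k k'), D.α = α := by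
  have hp : 1 < p := (Fact.out : p.Prime).one_lt
  have hirr := artinSchreier_irreducible p α h
  set f : k[X] := X ^ p - X - C α with hf
  have hdeg : f.natDegree = p := by
    rw [hf]
    compute_degree!
    · simp [hp.ne, (zero_lt_one.trans hp).ne']
    · exact hp.le
  haveI : Fact (Irreducible f) := ⟨hirr⟩
  let pb := AdjoinRoot.powerBasis hirr.ne_zero
  let b : Module.Basis (Fin p) k (AdjoinRoot f) := pb.basis.reindex (finCongr hdeg)
  have hb : ∀ i, b i = AdjoinRoot.root f ^ (i : ℕ) := by
    intro i
    simp [b, pb]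
    rfl
  set u := AdjoinRoot.root f with hu
  have heqn : u ^ p = u + algebraMap k (AdjoinRoot f) α := by
    have h1 := AdjoinRoot.eval₂_root f
    rw [hf] at h1
    simp only [eval₂_sub, eval₂_pow, eval₂_X, eval₂_C] at h1
    rw [AdjoinRoot.algebraMap_eq]
    rw [hu]
    linear_combination h1
  haveI : FiniteDimensional k (AdjoinRoot f) := pb.finite
  have hrep : ∀ i (hi : i < p) (j : Fin p), b.repr (u ^ i) j = if i = j then 1 else 0 := by
    intro i hi j
    have : u ^ i = b ⟨i, hi⟩ := by rw [hb]
    rw [this, Module.Basis.repr_self, Finsupp.single_apply]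
    simp [Fin.ext_iff]
  refine ⟨AdjoinRoot f, inferInstance, inferInstance, ⟨u, α, heqn,
    -(Algebra.trace k (AdjoinRoot f)), ?_, ?_, ?_⟩, rfl⟩
  · intro i hi
    rw [LinearMap.neg_apply, Algebra.trace_eq_matrix_trace b, Matrix.trace]
    simp only [Matrix.diag_apply, Algebra.leftMulMatrix_eq_repr_mul, hb, ← pow_add]
    have key : ∀ j : Fin p, b.repr (u ^ (i + (j : ℕ))) j =
        if i = 0 then 1 else if i = p - 1 ∧ j ≠ ⟨0, by omega⟩ then 1 else 0 := by
      intro j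
      rcases lt_or_ge (i + (j : ℕ)) p with hlt | hge
      · rw [hrep _ hlt]
        by_cases hi0 : i = 0
        · simp [hi0]
        · rw [if_neg (by omega), if_neg hi0, if_neg]
          rintro ⟨h1, h2⟩
          apply h2
          ext
          show (j : ℕ) = 0
          omega
      · have h1 : u ^ (i + (j : ℕ)) = u ^ (i + j + 1 - p) + α • u ^ (i + j - p) := by
          have h2 : i + (j : ℕ) = (i + j - p) + p := by omega
          rw [show i + (j : ℕ) + 1 - p = (i + j - p) + 1 by omega]
          conv_lhs => rw [h2]
          rw [pow_add, heqn, Algebra.smul_def]; ring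
        have hj := j.2
        rw [h1, map_add, map_smul, Finsupp.add_apply, Finsupp.smul_apply,
          hrep _ (by omega), hrep _ (by omega), if_neg (show ¬ (i + (j : ℕ) - p = j) by omega)]
        rw [if_neg (show ¬ i = 0 by omega)]
        simp only [smul_zero, add_zero]
        by_cases hi1 : i = p - 1
        · rw [if_pos (by omega), if_pos]
          refine ⟨hi1, fun h0 => ?_⟩
          have : (j : ℕ) = 0 := congrArg Fin.val h0
          omega
        · rw [if_neg (by omega), if_neg (fun h0 => hi1 h0.1)]
    rw [Finset.sum_congr rfl fun j _ => key j]
    by_cases hi0 : i = 0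
    · simp only [hi0, if_true]
      rw [if_neg (by omega)]
      simp
    · by_cases hi1 : i = p - 1
      · simp only [hi0, if_false, hi1, true_and, if_true]
        have hp1 : p - 1 ≠ 0 := by omega
        simp only [hp1, if_false]
        rw [Finset.sum_ite, Finset.sum_const_zero, add_zero, Finset.sum_const,
          Finset.filter_ne' Finset.univ, Finset.card_erase_of_mem (Finset.mem_univ _)]
        simp [Nat.cast_sub hp.le]
      · simp [hi0, hi1]
  · rw [← b.span_eq]
    congr 1
    ext x
    simp [hb]
  · intro B _ _ _ _ x hx
    exact (Algebra.isIntegral_trace hx).neg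

end ArtinSchreier

/-! ### Traces and integral closures in Artin–Schreier extensions -/

namespace ASData

variable {p : ℕ} [Fact p.Prime] {k k' : Type} [Field k] [Field k'] [Algebra k k']
  (D : ASData p k k') [CharP k p]

/-- The other generators `u + c` of the Artin–Schreier extension. -/
def w (c : k) : k' := D.u + algebraMap k k' c

lemma w_zero : D.w 0 = D.u := by simp [w]

/-- The right-hand side of the Artin–Schreier equation of `w c`. -/
def β (c : k) : k := D.α + c ^ p - c

lemma w_eqn (c : k) : D.w c ^ p = D.w c + algebraMap k k' (D.β c) := by
  haveI : CharP k' p := charP_of_injective_algebraMap (algebraMap k k').injective p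
  rw [w, β, add_pow_char, D.eqn]
  simp only [map_sub, map_add, map_pow]
  ring

lemma w_eq_add (c c' : k) : D.w c = D.w c' + algebraMap k k' (c - c') := by
  simp only [w, map_sub]; ring

lemma t_mul (a : k) (b : k') : D.t (algebraMap k k' a * b) = a * D.t b := by
  rw [← Algebra.smul_def, map_smul, smul_eq_mul]

/-- Change of generator in the moments `t (b * w ^ i)`. -/
lemma moment (c c' : k) (b : k') (i : ℕ) : D.t (b * D.w c ^ i) =
    ∑ j ∈ Finset.range (i + 1), (c - c') ^ (i - j) * (i.choose j) * D.t (b * D.w c' ^ j) := by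
  rw [D.w_eq_add c c', add_pow, Finset.mul_sum, map_sum]
  refine Finset.sum_congr rfl fun j _ => ?_
  rw [← D.t_mul]
  congr 1
  rw [map_mul, map_pow, map_natCast]
  ring

lemma t_w_pow (c : k) (i : ℕ) (hi : i < p) : D.t (D.w c ^ i) = if i = p - 1 then 1 else 0 := by
  have h := D.moment c 0 1 i
  simp only [one_mul] at h
  rw [h, Finset.sum_range_succ, Finset.sum_eq_zero, zero_add]
  · rw [D.w_zero, D.t_pow i hi]; simp
  · intro j hj
    have := Finset.mem_range.mp hj
    rw [D.w_zero, D.t_pow j (by omega), if_neg (by omega), mul_zero]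

lemma t_w_pow' (c : k) (n : ℕ) (hn : n ≤ 2 * p - 2) :
    D.t (D.w c ^ n) = if n = p - 1 ∨ n = 2 * p - 2 then 1 else 0 := by
  have hp : 1 < p := (Fact.out : p.Prime).one_lt
  rcases lt_or_ge n p with h | h
  · rw [D.t_w_pow c n h]
    by_cases h1 : n = p - 1
    · rw [if_pos h1, if_pos (Or.inl h1)]
    · rw [if_neg h1, if_neg]
      rintro (h2 | h2) <;> omega
  · have h1 : D.w c ^ n = D.w c ^ (n + 1 - p) + algebraMap k k' (D.β c) * D.w c ^ (n - p) := by
      have h2 : n = (n - p) + p := by omega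
      rw [show n + 1 - p = (n - p) + 1 by omega]
      conv_lhs => rw [h2]
      rw [pow_add, w_eqn]; ring
    rw [h1, map_add, t_mul, D.t_w_pow c _ (by omega), D.t_w_pow c _ (by omega),
      if_neg (show ¬ n - p = p - 1 by omega), mul_zero, add_zero]
    by_cases h2 : n = 2 * p - 2
    · rw [if_pos (by omega), if_pos (Or.inr h2)]
    · rw [if_neg (by omega), if_neg]
      rintro (h3 | h3) <;> omega

/-- The basis dual to the powers of `w` with respect to the pairing given by `t`. -/
def es (p : ℕ) {R : Type} [CommRing R] (w : R) (i : ℕ) : R :=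
  if i = 0 then w ^ (p - 1) - 1 else w ^ (p - 1 - i)

lemma w_span (c : k) : Submodule.span k (Set.range fun i : Fin p => D.w c ^ (i : ℕ)) = ⊤ := by
  have hp : 1 < p := (Fact.out : p.Prime).one_lt
  set V := Submodule.span k (Set.range fun i : Fin p => D.w c ^ (i : ℕ)) with hV
  have hmem : ∀ i < p, D.w c ^ i ∈ V := fun i hi => Submodule.subset_span ⟨⟨i, hi⟩, rfl⟩
  have hw : ∀ x ∈ V, x * D.w c ∈ V := by
    intro x hx
    induction hx using Submodule.span_induction with
    | mem x hx =>
      obtain ⟨i, rfl⟩ := hx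
      simp only [← pow_succ]
      rcases Nat.lt_or_ge ((i : ℕ) + 1) p with h | h
      · exact hmem _ h
      · have hi := i.2
        rw [show (i : ℕ) + 1 = p by omega, w_eqn]
        refine V.add_mem (by simpa using hmem 1 hp) ?_
        have := V.smul_mem (D.β c) (hmem 0 (by omega))
        rwa [pow_zero, Algebra.smul_def, mul_one] at this
    | zero => simp
    | add x y _ _ hx hy => rw [add_mul]; exact V.add_mem hx hy
    | smul a x _ hx => rw [smul_mul_assoc]; exact V.smul_mem _ hx
  have hu : ∀ i : ℕ, D.u ^ i ∈ V := by
    intro i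
    induction i with
    | zero => simpa using hmem 0 (by omega)
    | succ i ih =>
      have h1 : D.u ^ (i + 1) = D.u ^ i * D.w c - c • D.u ^ i := by
        rw [w, Algebra.smul_def]; ring
      rw [h1]
      exact V.sub_mem (hw _ ih) (V.smul_mem _ ih)
  rw [eq_top_iff, ← D.span, Submodule.span_le]
  rintro _ ⟨i, rfl⟩
  exact hu i

/-- Expansion with respect to the basis dual to the powers of `w`. -/
lemma recon (c : k) (b : k') :
    b = ∑ i ∈ Finset.range p, algebraMap k k' (D.t (b * D.w c ^ i)) * es p (D.w c) i := by
  have hp : 1 < p := (Fact.out : p.Prime).one_lt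
  have hb : b ∈ Submodule.span k (Set.range fun i : Fin p => D.w c ^ (i : ℕ)) := by
    rw [w_span]; trivial
  induction hb using Submodule.span_induction with
  | mem x hx =>
    obtain ⟨⟨j, hj⟩, rfl⟩ := hx
    simp only [← pow_add]
    have key : ∀ i ∈ Finset.range p, algebraMap k k' (D.t (D.w c ^ (j + i))) * es p (D.w c) i =
        (if i = p - 1 - j then es p (D.w c) i else 0) +
          (if i = p - 1 then (if j = p - 1 then 1 else 0) else 0) := by
      intro i hi
      have hi := Finset.mem_range.mp hi
      rw [D.t_w_pow' c _ (by omega)]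
      by_cases h1 : j + i = p - 1
      · rw [if_pos (Or.inl h1), if_pos (by omega), map_one, one_mul]
        by_cases h2 : i = p - 1
        · rw [if_pos h2, if_neg (by omega), add_zero]
        · rw [if_neg h2, add_zero]
      · rw [if_neg (show ¬ i = p - 1 - j by omega), zero_add]
        by_cases h2 : j + i = 2 * p - 2
        · rw [if_pos (Or.inr h2), if_pos (by omega), if_pos (by omega), es, if_neg (by omega)]
          rw [show p - 1 - i = 0 by omega]; simp
        · rw [if_neg (by omega)]
          by_cases h3 : i = p - 1
          · rw [if_pos h3, if_neg (by omega)]; simp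
          · rw [if_neg h3]; simp
    rw [Finset.sum_congr rfl key, Finset.sum_add_distrib, Finset.sum_ite_eq', Finset.sum_ite_eq',
      if_pos (Finset.mem_range.mpr (by omega)), if_pos (Finset.mem_range.mpr (by omega)), es]
    by_cases h1 : j = p - 1
    · rw [if_pos (by omega), if_pos h1, h1]; ring
    · rw [if_neg (by omega), if_neg h1, add_zero, show p - 1 - (p - 1 - j) = j by omega]
  | zero => simp
  | add x y _ _ hx hy =>
    conv_lhs => rw [hx, hy]
    rw [← Finset.sum_add_distrib]
    refine Finset.sum_congr rfl fun i _ => ?_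
    rw [add_mul, map_add, map_add, add_mul]
  | smul a x _ hx =>
    conv_lhs => rw [hx, Finset.smul_sum]
    refine Finset.sum_congr rfl fun i _ => ?_
    rw [smul_mul_assoc, map_smul, smul_eq_mul, map_mul (algebraMap k k'), Algebra.smul_def, mul_assoc]

lemma t_es (c : k) (i : ℕ) (hi : i < p) : D.t (es p (D.w c) i) = if i = 0 then 1 else 0 := by
  have hp : 1 < p := (Fact.out : p.Prime).one_lt
  rw [es]
  split_ifs with h
  · rw [map_sub, D.t_w_pow c _ (by omega), if_pos rfl, ← pow_zero (D.w c),
      D.t_w_pow c 0 (by omega), if_neg (by omega), sub_zero]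
  · rw [D.t_w_pow c _ (by omega), if_neg (by omega)]

/-- The functional `t` commutes with Frobenius. -/
lemma t_frob (b : k') : D.t (b ^ p) = D.t b ^ p := by
  have hp : 1 < p := (Fact.out : p.Prime).one_lt
  haveI : CharP k' p := charP_of_injective_algebraMap (algebraMap k k').injective p
  have hu : D.u ^ p = D.w D.α := D.eqn
  have hes : ∀ i, es p D.u i ^ p = es p (D.w D.α) i := by
    intro i
    unfold es
    split_ifs
    · rw [sub_pow_char, one_pow, ← pow_mul, mul_comm, pow_mul, hu]
    · rw [← pow_mul, mul_comm, pow_mul, hu]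
  have h := D.recon 0 b
  conv_lhs => rw [h]
  rw [sum_pow_char, map_sum, Finset.sum_eq_single 0]
  · rw [mul_pow, ← map_pow, t_mul, w_zero, hes, D.t_es _ 0 (by omega)]
    simp
  · intro i hi hi0
    rw [mul_pow, ← map_pow, t_mul, w_zero, hes, D.t_es _ i (Finset.mem_range.mp hi), if_neg hi0,
      mul_zero]
  · intro h0
    exact absurd (Finset.mem_range.mpr (by omega)) h0

/-- The integral closure in `k'` of a subalgebra of `k`. -/
def ic {K : Type} [Field K] [Algebra K k] (k' : Type) [Field k'] [Algebra k k'] [Algebra K k']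
    [IsScalarTower K k k'] (B : Subalgebra K k) : Subalgebra K k' :=
  (integralClosure B k').restrictScalars K

variable {K : Type} [Field K] [Algebra K k] [Algebra K k'] [IsScalarTower K k k']

lemma mem_ic_iff (B : Subalgebra K k) (b : k') : b ∈ ic k' B ↔ IsIntegral B b := Iff.rfl

lemma algebraMap_mem_ic {B : Subalgebra K k} {a : k} (ha : a ∈ B) : algebraMap k k' a ∈ ic k' B :=
  isIntegral_algebraMap (R := B) (A := k') (x := ⟨a, ha⟩)

lemma ic_int (B : Subalgebra K k) (a : k') (ha : IsIntegral (ic k' B) a) : a ∈ ic k' B := by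
  have : IsIntegral (integralClosure B k') a := ha
  exact isIntegral_trans (R := B) a this

lemma w_mem_ic {B : Subalgebra K k} {c : k} (hc : D.β c ∈ B) : D.w c ∈ ic k' B := by
  have hp : 1 < p := (Fact.out : p.Prime).one_lt
  refine ⟨Polynomial.X ^ p - (Polynomial.X + Polynomial.C (⟨D.β c, hc⟩ : B)), ?_, ?_⟩
  · apply Polynomial.monic_X_pow_sub
    rw [Polynomial.degree_X_add_C]
    exact_mod_cast hp
  · simp only [Polynomial.eval₂_sub, Polynomial.eval₂_pow, Polynomial.eval₂_X, Polynomial.eval₂_add,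
      Polynomial.eval₂_C]
    rw [w_eqn]
    exact sub_self _

lemma es_mem {R : Type} [CommRing R] [Algebra K R] (C : Subalgebra K R) {w : R} (hw : w ∈ C)
    (i : ℕ) : es p w i ∈ C := by
  unfold es
  split_ifs
  · exact C.sub_mem (C.pow_mem hw _) C.one_mem
  · exact C.pow_mem hw _

/-- The covering is étale over any normal chart on which some right-hand side `β c` is regular:
integrality is tested by moments. -/
lemma mem_ic {B : Subalgebra K k} (hB : ∀ a : k, IsIntegral B a → a ∈ B) {c : k}
    (hc : D.β c ∈ B) (b : k') : b ∈ ic k' B ↔ ∀ i < p, D.t (b * D.w c ^ i) ∈ B := by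
  constructor
  · intro hb i _
    exact hB _ (D.t_int B _ ((ic k' B).mul_mem hb ((ic k' B).pow_mem (D.w_mem_ic hc) i)))
  · intro h
    rw [D.recon c b]
    exact Subalgebra.sum_mem _ fun i hi => (ic k' B).mul_mem
      (algebraMap_mem_ic (h i (Finset.mem_range.mp hi))) (es_mem _ (D.w_mem_ic hc) i)

end ASData

/-! ### Artin–Schreier coverings of curves -/

lemma exists_uniform_pow {K k : Type} [Field K] [Field k] [Algebra K k] (B : Subalgebra K k)
    {x : k} (hx : x ∈ B) (g : ℕ → k) (p : ℕ) (h : ∀ i < p, ∃ m : ℕ, x ^ m * g i ∈ B) :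
    ∃ M : ℕ, ∀ i < p, x ^ M * g i ∈ B := by
  induction p with
  | zero => exact ⟨0, fun i hi => absurd hi (by omega)⟩
  | succ p ih =>
    obtain ⟨M, hM⟩ := ih (fun i hi => h i (by omega))
    obtain ⟨m, hm⟩ := h p (by omega)
    refine ⟨M + m, fun i hi => ?_⟩
    rcases (Nat.lt_succ_iff.mp hi).eq_or_lt with rfl | hi
    · rw [pow_add, mul_assoc]; exact B.mul_mem (B.pow_mem hx _) hm
    · rw [add_comm, pow_add, mul_assoc]; exact B.mul_mem (B.pow_mem hx _) (hM i hi)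

namespace Level

open ASData

section

variable {K : Type} [Field K] {k : Type} [Field k] [Algebra K k] (E : Level K k)

lemma exists_pow_mul_mem_A' {n : k} (hn : n ∈ E.N) : ∃ m : ℕ, E.ξ⁻¹ ^ m * n ∈ E.A' := by
  obtain ⟨m, hm⟩ := hn
  obtain ⟨j, hj⟩ := E.loc _ hm
  refine ⟨m + j, ?_⟩
  have := E.A'.mul_mem (E.A'.pow_mem E.ξ_inv_mem (2 * m)) hj
  convert this using 1
  have hξ := E.ξ_ne
  simp only [inv_pow]
  field_simp
  ring

lemma mem_N_of_pow_mul {n : k} {m : ℕ} (h : E.ξ⁻¹ ^ m * n ∈ E.A') : n ∈ E.N := by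
  have := E.N.mul_mem (E.A_le_N (E.A.pow_mem E.ξ_mem m)) (E.A'_le_N h)
  rwa [← mul_assoc, ← mul_pow, mul_inv_cancel₀ E.ξ_ne, one_pow, one_mul] at this

end

variable {p : ℕ} [Fact p.Prime] {K : Type} [Field K] {k : Type} [Field k] [CharP k p] [Algebra K k]
  (E : Level K k) {k' : Type} [Field k'] [Algebra k k'] [Algebra K k'] [IsScalarTower K k k']
  (D : ASData p k k')

lemma moment_mem_N {c c' : k} (hc : c ∈ E.N) (hc' : c' ∈ E.N) {b : k'}
    (h : ∀ i < p, D.t (b * D.w c ^ i) ∈ E.N) (i : ℕ) (hi : i < p) : D.t (b * D.w c' ^ i) ∈ E.N := by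
  rw [D.moment c' c]
  refine Subalgebra.sum_mem _ fun j hj => ?_
  have := Finset.mem_range.mp hj
  exact E.N.mul_mem (E.N.mul_mem (E.N.pow_mem (E.N.sub_mem hc' hc) _) (natCast_mem E.N _))
    (h j (by omega))

lemma mem_N₁ (h0 : D.β 0 ∈ E.A) (b : k') :
    (∃ m : ℕ, algebraMap k k' E.ξ ^ m * b ∈ ic k' E.A) ↔ ∀ i < p, D.t (b * D.w 0 ^ i) ∈ E.N := by
  constructor
  · rintro ⟨m, hm⟩ i hi
    rw [D.mem_ic E.int h0] at hm
    have := hm i hi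
    rw [mul_assoc, ← map_pow, D.t_mul] at this
    exact ⟨m, this⟩
  · intro h
    obtain ⟨M, hM⟩ := exists_uniform_pow E.A E.ξ_mem _ p h
    refine ⟨M, (D.mem_ic E.int h0 _).mpr fun i hi => ?_⟩
    rw [mul_assoc, ← map_pow, D.t_mul]
    exact hM i hi

lemma mem_N₁' {c : k} (hc : c ∈ E.N) (h1 : D.β c ∈ E.A') (b : k') :
    (∃ m : ℕ, (algebraMap k k' E.ξ)⁻¹ ^ m * b ∈ ic k' E.A') ↔
      ∀ i < p, D.t (b * D.w 0 ^ i) ∈ E.N := by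
  constructor
  · rintro ⟨m, hm⟩
    refine E.moment_mem_N D hc E.N.zero_mem fun i hi => ?_
    rw [D.mem_ic E.int' h1] at hm
    have := hm i hi
    rw [mul_assoc, ← map_inv₀, ← map_pow, D.t_mul] at this
    exact E.mem_N_of_pow_mul this
  · intro h
    have h' := E.moment_mem_N D E.N.zero_mem hc h
    obtain ⟨M, hM⟩ := exists_uniform_pow E.A' E.ξ_inv_mem _ p
      (fun i hi => E.exists_pow_mul_mem_A' (h' i hi))
    refine ⟨M, (D.mem_ic E.int' h1 _).mpr fun i hi => ?_⟩
    rw [mul_assoc, ← map_inv₀, ← map_pow, D.t_mul]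
    exact hM i hi

/-- The only global functions on the Artin–Schreier covering are constants, because `v` does not
split over the two charts. -/
lemma const₁ [CharP K p] {v : k} (hv : E.ρ v = 1) (h0 : D.β 0 ∈ E.A)
    (h1 : D.β (-v) ∈ E.A') (a : k') (ha : a ∈ ic k' E.A) (ha' : a ∈ ic k' E.A') :
    ∃ c : K, algebraMap K k' c = a := by
  have hp : 1 < p := (Fact.out : p.Prime).one_lt
  rw [D.mem_ic E.int h0] at ha
  rw [D.mem_ic E.int' h1] at ha'
  have hz : ∀ i, i < p - 1 → D.t (a * D.w 0 ^ i) = 0 := by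
    intro i
    induction i using Nat.strong_induction_on with
    | _ i ih =>
    intro hi
    have e1 : D.t (a * D.w (-v) ^ i) = D.t (a * D.w 0 ^ i) := by
      rw [D.moment (-v) 0, Finset.sum_range_succ, Finset.sum_eq_zero]
      · simp
      · intro j hj
        have hj := Finset.mem_range.mp hj
        rw [ih j hj (by omega), mul_zero]
    have e2 : D.t (a * D.w (-v) ^ (i + 1)) =
        D.t (a * D.w 0 ^ (i + 1)) - v * (i + 1 : ℕ) * D.t (a * D.w 0 ^ i) := by
      rw [D.moment (-v) 0, Finset.sum_range_succ, Finset.sum_range_succ, Finset.sum_eq_zero]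
      · simp; ring
      · intro j hj
        have hj := Finset.mem_range.mp hj
        rw [ih j hj (by omega), mul_zero]
    obtain ⟨lam, hlam⟩ := E.const _ (ha i (by omega)) (e1 ▸ ha' i (by omega))
    have e3 := congrArg E.ρ e2
    rw [map_sub, E.ρ_A _ (ha _ (by omega)), E.ρ_A' _ (ha' _ (by omega)), ← hlam] at e3
    have e4 : v * ((i + 1 : ℕ) : k) * algebraMap K k lam = (((i + 1 : ℕ) : K) * lam) • v := by
      rw [Algebra.smul_def, map_mul, map_natCast]; ring
    rw [e4, map_smul, hv, smul_eq_mul, mul_one, zero_sub, eq_comm, neg_eq_zero] at e3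
    rcases mul_eq_zero.mp e3 with h | h
    · rw [CharP.cast_eq_zero_iff K p] at h
      exact absurd (Nat.le_of_dvd (by omega) h) (by omega)
    · rw [← hlam, h, map_zero]
  have hrec := D.recon 0 a
  have htop : D.t (a * D.w (-v) ^ (p - 1)) = D.t (a * D.w 0 ^ (p - 1)) := by
    rw [D.moment (-v) 0, Finset.sum_range_succ, Finset.sum_eq_zero]
    · simp
    · intro j hj
      have hj := Finset.mem_range.mp hj
      rw [hz j hj, mul_zero]
  obtain ⟨lam, hlam⟩ := E.const _ (ha (p - 1) (by omega)) (htop ▸ ha' (p - 1) (by omega))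
  refine ⟨lam, ?_⟩
  rw [hrec, Finset.sum_eq_single (p - 1)]
  · rw [← hlam, es, if_neg (by omega), Nat.sub_self, pow_zero, mul_one,
      ← IsScalarTower.algebraMap_apply]
  · intro i hi hne
    have := Finset.mem_range.mp hi
    rw [hz i (by omega), map_zero, zero_mul]
  · intro h
    exact absurd (Finset.mem_range.mpr (by omega)) h

lemma fg₁ (h0 : D.β 0 ∈ E.A) : (ic k' E.A).FG := by
  classical
  obtain ⟨s, hs⟩ := E.fg
  refine ⟨insert (D.w 0) (s.image (algebraMap k k')), ?_⟩
  apply le_antisymm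
  · rw [Algebra.adjoin_le_iff]
    intro x hx
    rw [Finset.mem_coe, Finset.mem_insert, Finset.mem_image] at hx
    rcases hx with rfl | ⟨a, ha, rfl⟩
    · exact D.w_mem_ic h0
    · exact algebraMap_mem_ic (hs ▸ Algebra.subset_adjoin ha)
  · intro b hb
    rw [D.mem_ic E.int h0] at hb
    rw [D.recon 0 b]
    set C := Algebra.adjoin K (↑(insert (D.w 0) (s.image (algebraMap k k'))) : Set k') with hC
    have hA : ∀ a ∈ E.A, algebraMap k k' a ∈ C := by
      intro a ha
      have : E.A ≤ C.comap (IsScalarTower.toAlgHom K k k') := by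
        rw [← hs, Algebra.adjoin_le_iff]
        intro x hx
        exact Algebra.subset_adjoin (by
          rw [Finset.mem_coe, Finset.mem_insert, Finset.mem_image]
          exact Or.inr ⟨x, hx, rfl⟩)
      exact this ha
    exact Subalgebra.sum_mem _ fun i hi => C.mul_mem (hA _ (hb i (Finset.mem_range.mp hi)))
      (es_mem _ (Algebra.subset_adjoin (by simp)) i)

lemma fd₁ {v : k} (hvN : v ∈ E.N) (h0 : D.β 0 ∈ E.A) (h1 : D.β (-v) ∈ E.A') (n : ℤ) :
    FiniteDimensional K (↥((ic k' E.A).toSubmodule ⊓ (ic k' E.A').toSubmodule.comap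
      (LinearMap.mulLeft K (algebraMap k k' E.ξ ^ (-n))))) := by
  obtain ⟨M, hM⟩ := exists_uniform_pow E.A' E.ξ_inv_mem (fun i => v ^ i) p
    (fun i hi => E.exists_pow_mul_mem_A' (E.N.pow_mem hvN i))
  let T : k' →ₗ[K] k := D.t.restrictScalars K
  let g₀ : k' →ₗ[K] (Fin p → k) := LinearMap.pi fun i =>
    T ∘ₗ LinearMap.mulRight K (D.w 0 ^ (i : ℕ))
  have hg₀ : ∀ b i, g₀ b i = D.t (b * D.w 0 ^ (i : ℕ)) := fun b i => rfl
  set V := (ic k' E.A).toSubmodule ⊓ (ic k' E.A').toSubmodule.comap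
      (LinearMap.mulLeft K (algebraMap k k' E.ξ ^ (-n))) with hV
  have hmem : ∀ b ∈ V, ∀ i, g₀ b i ∈ E.S (n + M) := by
    rintro b ⟨hb, hb'⟩ ⟨i, hi⟩
    have hb : b ∈ ic k' E.A := hb
    have hb' : algebraMap k k' E.ξ ^ (-n) * b ∈ ic k' E.A' := hb'
    rw [D.mem_ic E.int h0] at hb
    rw [D.mem_ic E.int' h1] at hb'
    rw [hg₀, mem_S]
    refine ⟨hb i hi, ?_⟩
    rw [D.moment 0 (-v), Finset.mul_sum]
    refine Subalgebra.sum_mem _ fun j hj => ?_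
    have hj := Finset.mem_range.mp hj
    have h2 := hb' j (by omega)
    rw [mul_assoc, ← map_zpow₀, D.t_mul] at h2
    have h3 := E.A'.mul_mem (E.A'.mul_mem (hM (i - j) (by omega)) (natCast_mem E.A' (i.choose j))) h2
    convert h3 using 1
    rw [neg_add, zpow_add₀ E.ξ_ne, zpow_neg E.ξ (M : ℤ), zpow_natCast, inv_pow]
    simp only [zero_sub, neg_neg]
    ring
  haveI : FiniteDimensional K (E.S (n + M)) := E.fd (n + M)
  let g : V →ₗ[K] (Fin p → E.S (n + M)) := LinearMap.pi fun i =>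
    ((LinearMap.proj i ∘ₗ g₀).domRestrict V).codRestrict _ (fun b => hmem b b.2 i)
  have hg : ∀ b i, ((g b i : E.S (n + M)) : k) = D.t ((b : k') * D.w 0 ^ (i : ℕ)) := fun b i => rfl
  refine FiniteDimensional.of_injective g ?_
  rw [injective_iff_map_eq_zero]
  intro b hb
  apply Subtype.ext
  rw [D.recon 0 (b : k')]
  refine Finset.sum_eq_zero fun i hi => ?_
  rw [← hg b ⟨i, Finset.mem_range.mp hi⟩, hb]
  simp

/-- The étale covering of degree `p` defined by an Artin–Schreier equation. -/
noncomputable def artinSchreier [CharP K p] {v : k} (hvN : v ∈ E.N) (hv : E.ρ v = 1)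
    (h0 : D.β 0 ∈ E.A) (h1 : D.β (-v) ∈ E.A') : Level K k' where
  ξ := algebraMap k k' E.ξ
  ξ_ne := fun h => E.ξ_ne ((algebraMap k k').injective (by rw [h, map_zero]))
  A := ic k' E.A
  A' := ic k' E.A'
  ξ_mem := algebraMap_mem_ic E.ξ_mem
  ξ_inv_mem := by rw [← map_inv₀]; exact algebraMap_mem_ic E.ξ_inv_mem
  int := ic_int _
  int' := ic_int _
  fg := E.fg₁ D h0
  loc := fun a ha => (E.mem_N₁' D (E.N.neg_mem hvN) h1 a).mpr
    ((E.mem_N₁ D h0 a).mp ⟨0, by simpa using ha⟩)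
  loc' := fun a ha => (E.mem_N₁ D h0 a).mpr
    ((E.mem_N₁' D (E.N.neg_mem hvN) h1 a).mp ⟨0, by simpa using ha⟩)
  const := E.const₁ D hv h0 h1
  fd := E.fd₁ D hvN h0 h1
  ρ := E.ρ ∘ₗ D.t.restrictScalars K
  ρ_A := by
    intro a ha
    have := (D.mem_ic E.int h0 a).mp ha 0 (Fact.out : p.Prime).pos
    rw [pow_zero, mul_one] at this
    exact E.ρ_A _ this
  ρ_A' := by
    intro a ha
    have := (D.mem_ic E.int' h1 a).mp ha 0 (Fact.out : p.Prime).pos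
    rw [pow_zero, mul_one] at this
    exact E.ρ_A' _ this
  ρ_one := by
    have hp : 1 < p := (Fact.out : p.Prime).one_lt
    obtain ⟨m, hm⟩ := hvN
    refine ⟨algebraMap k k' v * D.w 0 ^ (p - 1), ⟨m, ?_⟩, ?_⟩
    · rw [← mul_assoc, ← map_pow, ← map_mul]
      exact (ic k' E.A).mul_mem (algebraMap_mem_ic hm)
        ((ic k' E.A).pow_mem (D.w_mem_ic h0) _)
    · change E.ρ (D.t _) = 1
      rw [D.t_mul, D.t_w_pow 0 _ (by omega), if_pos rfl, mul_one, hv]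
  repr := by
    intro ν m hA hA'
    have hi : ∀ i, ∃ h ∈ E.N, ∀ x ∈ E.N, ν (algebraMap k k' x * es p (D.w 0) i) = E.ρ (h * x) := by
      intro i
      have hes : es p (D.w 0) i ∈ ic k' E.A := es_mem _ (D.w_mem_ic h0) i
      obtain ⟨M, hM⟩ := (E.mem_N₁' D (E.N.neg_mem hvN) h1 _).mpr
        ((E.mem_N₁ D h0 (es p (D.w 0) i)).mp ⟨0, by simpa using hes⟩)
      obtain ⟨h, hh, hrep⟩ := E.repr
        (ν ∘ₗ LinearMap.mulRight K (es p (D.w 0) i) ∘ₗ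
          (IsScalarTower.toAlgHom K k k').toLinearMap) (m + M) (by
        intro a ha
        have := hA _ ((ic k' E.A).mul_mem (algebraMap_mem_ic
          (E.A.mul_mem (E.A.pow_mem E.ξ_mem M) ha)) hes)
        refine Eq.trans (congrArg ν ?_) this
        simp only [LinearMap.comp_apply, LinearMap.mulRight_apply, AlgHom.toLinearMap_apply,
          IsScalarTower.coe_toAlgHom', map_mul, map_pow]
        ring) (by
        intro a ha
        have := hA' _ ((ic k' E.A').mul_mem (algebraMap_mem_ic ha) hM)
        refine Eq.trans (congrArg ν ?_) this
        simp only [LinearMap.comp_apply, LinearMap.mulRight_apply, AlgHom.toLinearMap_apply,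
          IsScalarTower.coe_toAlgHom', map_mul, map_pow, map_inv₀]
        ring)
      exact ⟨h, hh, fun x hx => hrep x hx⟩
    choose h hN hrep using hi
    refine ⟨∑ i ∈ Finset.range p, algebraMap k k' (h i) * D.w 0 ^ i, ?_, ?_⟩
    · have hH : ∀ i < p, ∃ m : ℕ, algebraMap k k' E.ξ ^ m * (algebraMap k k' (h i) * D.w 0 ^ i) ∈
          ic k' E.A := by
        intro i _
        obtain ⟨m, hm⟩ := hN i
        refine ⟨m, ?_⟩
        rw [← mul_assoc, ← map_pow, ← map_mul]
        exact (ic k' E.A).mul_mem (algebraMap_mem_ic hm)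
          ((ic k' E.A).pow_mem (D.w_mem_ic h0) _)
      obtain ⟨M, hM⟩ := exists_uniform_pow (ic k' E.A) (algebraMap_mem_ic E.ξ_mem) _ p hH
      refine ⟨M, ?_⟩
      rw [Finset.mul_sum]
      exact Subalgebra.sum_mem _ fun i hi => hM i (Finset.mem_range.mp hi)
    · intro b hb
      have hb' := (E.mem_N₁ D h0 b).mp hb
      change ν b = E.ρ (D.t _)
      rw [Finset.sum_mul, map_sum, map_sum]
      conv_lhs => rw [D.recon 0 b]
      rw [map_sum]
      refine Finset.sum_congr rfl fun i hi => ?_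
      rw [hrep i _ (hb' i (Finset.mem_range.mp hi)), mul_assoc, D.t_mul, mul_comm b]
  dual := by
    intro h hN hz
    have hN' := (E.mem_N₁ D h0 h).mp hN
    refine (D.mem_ic E.int h0 h).mpr fun i hi => E.dual _ (hN' i hi) fun a ha => ?_
    have := hz _ ((ic k' E.A).mul_mem (algebraMap_mem_ic ha)
      ((ic k' E.A).pow_mem (D.w_mem_ic h0) i))
    change E.ρ (D.t _) = 0 at this
    rwa [mul_left_comm, D.t_mul, mul_comm a] at this
  dual' := by
    intro h hN hz
    have hN' := E.moment_mem_N D E.N.zero_mem (E.N.neg_mem hvN) ((E.mem_N₁ D h0 h).mp hN)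
    refine (D.mem_ic E.int' h1 h).mpr fun i hi => E.dual' _ (hN' i hi) fun a ha => ?_
    have := hz _ ((ic k' E.A').mul_mem (algebraMap_mem_ic ha)
      ((ic k' E.A').pow_mem (D.w_mem_ic h1) i))
    change E.ρ (D.t _) = 0 at this
    rwa [mul_left_comm, D.t_mul, mul_comm a] at this

end Level

/-! ### The ordinary case -/

namespace Level

/-- A dominant map of curves compatible with the maps to the projective line. -/
structure Ext {K : Type} [Field K] {k k' : Type} [Field k] [Algebra K k] [Field k'] [Algebra K k']
    (E : Level K k) (E' : Level K k') (f : k →ₐ[K] k') : Prop where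
  ξ : f E.ξ = E'.ξ
  A : ∀ a ∈ E.A, f a ∈ E'.A
  A' : ∀ a ∈ E.A', f a ∈ E'.A'

section

variable {K : Type} [Field K] {k k' : Type} [Field k] [Algebra K k] [Field k'] [Algebra K k']
  {E : Level K k} {E' : Level K k'} {f : k →ₐ[K] k'}

lemma Ext.refl (E : Level K k) : Ext E E (AlgHom.id K k) := ⟨rfl, fun _ h => h, fun _ h => h⟩

lemma Ext.trans (hf : Ext E E' f) {k'' : Type} [Field k''] [Algebra K k''] {E'' : Level K k''}
    {g : k' →ₐ[K] k''} (hg : Ext E' E'' g) : Ext E E'' (g.comp f) :=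
  ⟨by rw [AlgHom.comp_apply, hf.ξ, hg.ξ], fun a ha => hg.A _ (hf.A a ha),
    fun a ha => hg.A' _ (hf.A' a ha)⟩

lemma Ext.zpow (hf : Ext E E' f) (n : ℤ) : f (E.ξ ^ n) = E'.ξ ^ n := by rw [map_zpow₀, hf.ξ]

lemma Ext.S (hf : Ext E E' f) {n : ℤ} {a : k} (ha : a ∈ E.S n) : f a ∈ E'.S n := by
  rw [mem_S] at *
  refine ⟨hf.A a ha.1, ?_⟩
  rw [← hf.zpow, ← map_mul]
  exact hf.A' _ ha.2

lemma Ext.N (hf : Ext E E' f) {a : k} (ha : a ∈ E.N) : f a ∈ E'.N := by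
  obtain ⟨m, hm⟩ := ha
  refine ⟨m, ?_⟩
  rw [← hf.ξ, ← map_pow, ← map_mul]
  exact hf.A _ hm

lemma Ext.W (hf : Ext E E' f) {r : ℕ} {d : ℤ} {δ : Fin r → ℤ} {G : Fin r → k} {Φ : k}
    (h : Φ ∈ E.W d δ G) : f Φ ∈ E'.W d δ (fun i => f (G i)) := by
  obtain ⟨s, hs, rfl⟩ := h
  exact ⟨fun i => f (s i), fun i => hf.S (hs i), by simp⟩

lemma Ext.tight (hf : Ext E E' f) {p r : ℕ} {d : ℤ} {δ : Fin r → ℤ} {G : Fin r → k} {Φ : k}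
    (h : E.Tight p d δ G Φ) : E'.Tight p d δ (fun i => f (G i)) (f Φ) := by
  obtain ⟨n, hn⟩ := h
  refine ⟨n, fun e => ?_⟩
  obtain ⟨s, s', hs, hs', h1, h2⟩ := hn e
  refine ⟨fun i => f (s i), fun i => f (s' i), fun i => hf.S (hs i), fun i => hf.S (hs' i), ?_, ?_⟩
  · rw [← hf.ξ, ← map_pow, ← map_pow, ← map_mul, h1]; simp
  · rw [← map_pow, h2]; simp

lemma Ext.good (hf : Ext E E' f) {r : ℕ} {d : ℤ} {δ : Fin r → ℤ} {G : Fin r → k} {h : k}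
    {P : Fin r → E.A} (hg : E.Good d δ G h P) :
    E'.Good d δ (fun i => f (G i)) (f h) (fun i => ⟨f (P i), hf.A _ (P i).2⟩) := by
  refine ⟨hf.N hg.1, fun i => ?_⟩
  obtain ⟨b, hb, h1⟩ := hg.2 i
  exact ⟨f b, hf.A' b hb, by rw [← map_mul, h1, map_add, map_mul, hf.zpow]⟩

end

/-- On an ordinary curve the class dual to `ρ` is fixed by Frobenius, so it is killed by an
Artin–Schreier covering; the covering is again ordinary. -/
theorem exists_ext {p : ℕ} [Fact p.Prime] {K : Type} [Field K] [CharP K p] {k : Type} [Field k]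
    [Algebra K k] (E : Level K k) (hord : E.Ordinary p) :
    ∃ (k' : Type) (_ : Field k') (_ : Algebra K k') (E' : Level K k') (f : k →ₐ[K] k'),
      E'.Ordinary p ∧ Ext E E' f ∧ ∀ v, E'.ρ (f v) = 0 := by
  have hp : 1 < p := (Fact.out : p.Prime).one_lt
  haveI : CharP k p := charP_of_injective_algebraMap (algebraMap K k).injective p
  obtain ⟨v, hvN, hv⟩ := E.ρ_one
  have hvN : v ∈ E.N := hvN
  obtain ⟨a, ha, b, hb, hab⟩ := E.exists_split_of_ρ_eq_zero (v ^ p - v)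
    (E.N.sub_mem (E.N.pow_mem hvN p) hvN) (by rw [map_sub, hord v hvN, hv]; simp)
  have hmonic : ∀ (B : Subalgebra K k) (x c : k), c ∈ B → x ^ p - x = c → IsIntegral B x := by
    intro B x c hc hx
    refine ⟨Polynomial.X ^ p - (Polynomial.X + Polynomial.C (⟨c, hc⟩ : B)), ?_, ?_⟩
    · apply Polynomial.monic_X_pow_sub
      rw [Polynomial.degree_X_add_C]
      exact_mod_cast hp
    · simp only [Polynomial.eval₂_sub, Polynomial.eval₂_pow, Polynomial.eval₂_X,
        Polynomial.eval₂_add, Polynomial.eval₂_C]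
      have : algebraMap B k ⟨c, hc⟩ = c := rfl
      rw [this, ← hx]; ring
  obtain ⟨k', _, _, D, hD⟩ := exists_ASData p a (by
    intro c hc
    have h1 := E.int c (hmonic E.A c a ha hc)
    have h2 := E.int' (v - c) (hmonic E.A' (v - c) b hb (by
      rw [sub_pow_char]; linear_combination hab - hc))
    have h3 : E.ρ v = 0 := by
      rw [show v = c + (v - c) by ring, map_add, E.ρ_A _ h1, E.ρ_A' _ h2, add_zero]
    rw [h3] at hv
    exact zero_ne_one hv)
  letI : Algebra K k' := ((algebraMap k k').comp (algebraMap K k)).toAlgebra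
  haveI : IsScalarTower K k k' := IsScalarTower.of_algebraMap_eq' rfl
  have h0 : D.β 0 ∈ E.A := by
    rw [ASData.β, hD, zero_pow (by omega)]; simpa using ha
  have h1 : D.β (-v) ∈ E.A' := by
    have h2 : (-v) ^ p = -v ^ p := by
      have := map_neg (frobenius k p) v
      simpa [frobenius_def] using this
    rw [ASData.β, hD, h2]
    have : a + -v ^ p - -v = -b := by linear_combination -hab
    rw [this]
    exact E.A'.neg_mem hb
  let E' := E.artinSchreier D hvN hv h0 h1
  refine ⟨k', inferInstance, inferInstance, E', IsScalarTower.toAlgHom K k k', ?_,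
    ⟨rfl, fun a ha => ASData.algebraMap_mem_ic ha, fun a ha => ASData.algebraMap_mem_ic ha⟩, ?_⟩
  · intro b hb
    have h2 := (E.mem_N₁ D h0 b).mp hb 0 (by omega)
    rw [pow_zero, mul_one] at h2
    change E.ρ (D.t _) = E.ρ (D.t _) ^ p
    rw [D.t_frob, hord _ h2]
  · intro x
    change E.ρ (D.t (algebraMap k k' x)) = 0
    have h2 := D.t_mul x 1
    rw [mul_one, ← pow_zero (D.w 0), D.t_w_pow 0 0 (by omega), if_neg (by omega), mul_zero] at h2
    rw [h2, map_zero]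

/-- Each class detecting that `Φ` is not a combination of the `G i` is killed by an Artin–Schreier
covering and raises the number of tuples `P l` that are linearly independent at every point; this
number is bounded by the number of the `G i`. -/
theorem exists_mem_W_aux {p : ℕ} [Fact p.Prime] {K : Type} [Field K] [IsAlgClosed K] [CharP K p]
    {r : ℕ} (d : ℤ) (δ : Fin r → ℤ) (n : ℕ) :
    ∀ (k : Type) [Field k] [Algebra K k] (E : Level K k) (_ : E.Ordinary p)
      (G : Fin r → k) (Φ : k) (_ : ∀ i, G i ∈ E.S (δ i)) (_ : Φ ∈ E.S d)
      (_ : E.Tight p d δ G Φ) (m : ℕ) (_ : m + n = r + 1) (h : Fin m → k)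
      (P : Fin m → Fin r → E.A) (_ : ∀ l, E.Good d δ G (h l) (P l)) (_ : ∀ l, E.ρ (h l * Φ) = 0)
      (_ : ∀ ev : E.A →ₐ[K] K, LinearIndependent K (fun l i => ev (P l i))),
      ∃ (k' : Type) (_ : Field k') (_ : Algebra K k') (E' : Level K k') (f : k →ₐ[K] k'),
        E'.Ordinary p ∧ Ext E E' f ∧ f Φ ∈ E'.W d δ (fun i => f (G i)) := by
  induction n with
  | zero =>
    intro k _ _ E _ G Φ _ _ _ m hm h P _ _ hind
    obtain ⟨ev⟩ := E.exists_ev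
    have := (hind ev).fintype_card_le_finrank
    simp at this
    omega
  | succ n ih =>
    intro k _ _ E hord G Φ hG hΦ hT m hm h P hgood hρ hind
    haveI : CharP k p := charP_of_injective_algebraMap (algebraMap K k).injective p
    by_cases hW : Φ ∈ E.W d δ G
    · exact ⟨k, inferInstance, inferInstance, E, AlgHom.id K k, hord, Ext.refl E, hW⟩
    obtain ⟨h', P', hg', hρ'⟩ := E.exists_good d δ G Φ hG hΦ hW
    -- On the covering the classes of all `h l * Φ`, including the new one, vanish.
    obtain ⟨k₁, _, _, E₁, f, hord₁, hf, hf0⟩ := E.exists_ext hord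
    let H : Fin (m + 1) → k := Fin.cons h' h
    let Q : Fin (m + 1) → Fin r → E.A := Fin.cons P' P
    have hHQ : ∀ l, E.Good d δ G (H l) (Q l) := by
      intro l
      refine Fin.cases ?_ (fun l => ?_) l
      · exact hg'
      · exact hgood l
    have hQ : ∀ ev : E.A →ₐ[K] K, LinearIndependent K (fun l i => ev (Q l i)) := by
      intro ev
      have hcons : (fun l i => ev (Q l i)) =
          (Fin.cons (fun i => ev (P' i)) (fun l i => ev (P l i)) : Fin (m + 1) → Fin r → K) := by
        funext l
        refine Fin.cases ?_ (fun l => ?_) l <;> rfl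
      rw [hcons, linearIndependent_finCons]
      -- If `P'` were dependent at the point, a correction of `h'` would have components vanishing
      -- there, hence zero class; but the correction does not change the class of `h' * Φ`.
      refine ⟨hind ev, fun hspan => hρ' ?_⟩
      obtain ⟨c, hc⟩ := (Submodule.mem_span_range_iff_exists_fun K).mp hspan
      have h1 := Good.ρ_eq_zero E hord hT hΦ (hg'.sub_sum h P hgood c) ev (by
        intro i
        have h2 := congrFun hc i
        simp only [Finset.sum_apply, Pi.smul_apply] at h2
        simp [Finset.sum_apply, ← h2])
      rw [sub_mul, map_sub, Finset.sum_mul, map_sum, Finset.sum_eq_zero, sub_zero] at h1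
      · exact h1
      · intro l _
        rw [smul_mul_assoc, map_smul, hρ l, smul_zero]
    let fA : E.A →ₐ[K] E₁.A := (f.comp E.A.val).codRestrict E₁.A (fun a => hf.A _ a.2)
    obtain ⟨k₂, _, _, E₂, g, hord₂, hg, hmem⟩ := ih k₁ E₁ hord₁ (fun i => f (G i)) (f Φ)
      (fun i => hf.S (hG i)) (hf.S hΦ) (hf.tight hT) (m + 1) (by omega) (fun l => f (H l))
      (fun l i => fA (Q l i)) (fun l => hf.good (hHQ l))
      (fun l => by rw [← map_mul]; exact hf0 _)
      (fun ev => hQ (ev.comp fA))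
    exact ⟨k₂, inferInstance, inferInstance, E₂, g.comp f, hord₂, hf.trans hg, hmem⟩

/-- On an ordinary curve, tight closure relations become honest relations on a covering. -/
theorem exists_mem_W {p : ℕ} [Fact p.Prime] {K : Type} [Field K] [IsAlgClosed K] [CharP K p]
    {k : Type} [Field k] [Algebra K k] (E : Level K k) (hord : E.Ordinary p)
    {r : ℕ} (d : ℤ) (δ : Fin r → ℤ) (G : Fin r → k) (Φ : k) (hG : ∀ i, G i ∈ E.S (δ i))
    (hΦ : Φ ∈ E.S d) (hT : E.Tight p d δ G Φ) :
    ∃ (k' : Type) (_ : Field k') (_ : Algebra K k') (E' : Level K k') (f : k →ₐ[K] k'),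
      E'.Ordinary p ∧ Ext E E' f ∧ f Φ ∈ E'.W d δ (fun i => f (G i)) :=
  exists_mem_W_aux d δ (r + 1) k E hord G Φ hG hΦ hT 0 (by omega) Fin.elim0 Fin.elim0
    (fun l => l.elim0) (fun l => l.elim0) (fun _ => linearIndependent_empty_type)

/-- The version of `exists_mem_W` for finitely many sections at once. -/
theorem exists_mem_W_list {p : ℕ} [Fact p.Prime] {K : Type} [Field K] [IsAlgClosed K] [CharP K p]
    {r : ℕ} (δ : Fin r → ℤ) (n : ℕ) :
    ∀ (k : Type) [Field k] [Algebra K k] (E : Level K k) (_ : E.Ordinary p) (G : Fin r → k)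
      (_ : ∀ i, G i ∈ E.S (δ i)) (Φ : ℕ → k) (_ : ∀ d : ℕ, Φ d ∈ E.S d)
      (_ : ∀ d : ℕ, E.Tight p d δ G (Φ d)),
      ∃ (k' : Type) (_ : Field k') (_ : Algebra K k') (E' : Level K k') (f : k →ₐ[K] k'),
        E'.Ordinary p ∧ Ext E E' f ∧ ∀ d < n, f (Φ d) ∈ E'.W d δ (fun i => f (G i)) := by
  induction n with
  | zero =>
    intro k _ _ E hord G _ Φ _ _
    exact ⟨k, inferInstance, inferInstance, E, AlgHom.id K k, hord, Ext.refl E,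
      fun d hd => absurd hd (by omega)⟩
  | succ n ih =>
    intro k _ _ E hord G hG Φ hΦ hT
    obtain ⟨k₁, _, _, E₁, f, hord₁, hf, h1⟩ := ih k E hord G hG Φ hΦ hT
    obtain ⟨k₂, _, _, E₂, g, hord₂, hg, h2⟩ := E₁.exists_mem_W hord₁ n δ (fun i => f (G i))
      (f (Φ n)) (fun i => hf.S (hG i)) (hf.S (hΦ n)) (hf.tight (hT n))
    refine ⟨k₂, inferInstance, inferInstance, E₂, g.comp f, hord₂, hf.trans hg, fun d hd => ?_⟩
    rcases (Nat.lt_succ_iff.mp hd).eq_or_lt with rfl | hd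
    · exact h2
    · exact hg.W (h1 d hd)

end Level

/-! ### The supersingular case -/

lemma mem_of_pow_mem_pow {A : Type} [CommRing A] [IsDedekindDomain A] (J : Ideal A) (x : A) (n : ℕ)
    (hn : n ≠ 0) (h : x ^ n ∈ J ^ n) : x ∈ J := by
  rw [← Ideal.span_singleton_le_iff_mem, ← Ideal.dvd_iff_le] at *
  rw [← Ideal.span_singleton_pow] at h
  exact (UniqueFactorizationMonoid.pow_dvd_pow_iff_dvd hn).mp h

namespace Level

variable {p : ℕ} [Fact p.Prime] {K : Type} [Field K] [CharP K p] {k : Type} [Field k]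
  [Algebra K k] (E : Level K k)

lemma S_pow {n : ℤ} {a : k} (ha : a ∈ E.S n) (m : ℕ) : a ^ m ∈ E.S (m * n) := by
  rw [mem_S] at *
  refine ⟨E.A.pow_mem ha.1 m, ?_⟩
  have := E.A'.pow_mem ha.2 m
  rw [mul_pow, ← zpow_natCast, ← zpow_mul] at this
  rwa [show -((m : ℤ) * n) = -n * m by ring]

lemma W_pow {r : ℕ} {d : ℤ} {δ : Fin r → ℤ} {G : Fin r → k} {Φ : k} (h : Φ ∈ E.W d δ G) :
    Φ ^ p ∈ E.W (p * d) (fun i => p * δ i) (fun i => G i ^ p) := by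
  haveI : CharP k p := charP_of_injective_algebraMap (algebraMap K k).injective p
  obtain ⟨s, hs, rfl⟩ := h
  refine ⟨fun i => s i ^ p, fun i => ?_, ?_⟩
  · rw [← mul_sub]; exact E.S_pow (hs i) p
  · rw [sum_pow_char]
    exact Finset.sum_congr rfl fun i _ => mul_pow _ _ _

lemma Tight.pow {r : ℕ} {d : ℤ} {δ : Fin r → ℤ} {G : Fin r → k} {Φ : k}
    (h : E.Tight p d δ G Φ) : E.Tight p (p * d) (fun i => p * δ i) (fun i => G i ^ p) (Φ ^ p) := by
  obtain ⟨n, hn⟩ := h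
  refine ⟨n, fun e => ?_⟩
  obtain ⟨s, s', hs, hs', h1, h2⟩ := hn (e + 1)
  have hd : ∀ i, (p : ℤ) ^ e * (p * d - p * δ i) + n = (p : ℤ) ^ (e + 1) * (d - δ i) + n := by
    intro i; ring
  have hpow : ∀ x : k, (x ^ p) ^ p ^ e = x ^ p ^ (e + 1) := by
    intro x; rw [← pow_mul, ← pow_succ']
  refine ⟨s, s', fun i => ?_, fun i => ?_, ?_, ?_⟩
  · rw [hd]; exact hs i
  · rw [hd]; exact hs' i
  · simp only [hpow]; exact h1
  · simp only [hpow]; exact h2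

lemma Good.pow {r : ℕ} {d : ℤ} {δ : Fin r → ℤ} {G : Fin r → k} {h : k} {P : Fin r → E.A}
    (hg : E.Good d δ G h P) :
    E.Good (p * d) (fun i => p * δ i) (fun i => G i ^ p) (h ^ p) (fun i => P i ^ p) := by
  haveI : CharP k p := charP_of_injective_algebraMap (algebraMap K k).injective p
  refine ⟨E.N.pow_mem hg.1 p, fun i => ?_⟩
  obtain ⟨b, hb, h1⟩ := hg.2 i
  refine ⟨b ^ p, E.A'.pow_mem hb p, ?_⟩
  rw [← mul_pow, h1, add_pow_char, mul_pow, ← zpow_natCast (E.ξ ^ (δ i - d)), ← zpow_mul]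
  congr 2
  congr 1
  ring

/-- In the supersingular case, a class `h Φ` whose components vanish at a point where the local
expansion of `α` has a nonzero linear term is zero. Here `α` is the first-chart part of `v₀ ^ p` for
a generator `v₀` of the first cohomology. If `h Φ` is `λ v₀` up to trivial classes, the first-chart
part of `(h Φ) ^ p` agrees up to a `p`-th power and a constant with `λ ^ p α`, whereas the tight
closure relations make it vanish to order `p`. -/
lemma Good.ρ_eq_zero_of_supersingular (hDed : IsDedekindDomain E.A) {v₀ : k} (hv₀N : v₀ ∈ E.N)
    (hv₀ : E.ρ v₀ = 1) {α α' : k} (hα : α ∈ E.A) (hα' : α' ∈ E.A') (hsplit : v₀ ^ p = α + α')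
    (ev : E.A →ₐ[K] K)
    (hev : (⟨α, hα⟩ : E.A) - algebraMap K E.A (ev ⟨α, hα⟩) ∉ (RingHom.ker ev) ^ 2)
    {r : ℕ} {d : ℤ} {δ : Fin r → ℤ} {G : Fin r → k} {Φ h : k} {P : Fin r → E.A}
    (hT : E.Tight p d δ G Φ) (hΦ : Φ ∈ E.S d) (hg : E.Good d δ G h P)
    (hP : ∀ i, ev (P i) = 0) : E.ρ (h * Φ) = 0 := by
  have hp : 1 < p := (Fact.out : p.Prime).one_lt
  haveI : CharP k p := charP_of_injective_algebraMap (algebraMap K k).injective p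
  haveI : CharP E.A p := charP_of_injective_algebraMap (algebraMap K E.A).injective p
  obtain ⟨e₀, he₀⟩ := Good.pow_split E hT hg ev hP
  obtain ⟨a, ha, b, hb, hab⟩ := he₀ (e₀ + 1) (by omega)
  have hN : h * Φ ∈ E.N := E.N.mul_mem hg.1 (E.A_le_N (E.mem_S.mp hΦ).1)
  set v := h * Φ with hv
  set lam := E.ρ v with hlam
  by_contra hne
  obtain ⟨a₁, ha₁, b₁, hb₁, h1⟩ := E.exists_split_of_ρ_eq_zero (v - lam • v₀)
    (E.N.sub_mem hN (E.N.smul_mem hv₀N _)) (by rw [map_sub, map_smul, hv₀, ← hlam]; simp)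
  set 𝔓 := RingHom.ker ev with h𝔓
  let x : E.A := ⟨α, hα⟩ - algebraMap K E.A (ev ⟨α, hα⟩)
  let y : E.A := ⟨a₁, ha₁⟩ - algebraMap K E.A (ev ⟨a₁, ha₁⟩)
  have hx : x ∈ 𝔓 := by simp [x, h𝔓, RingHom.mem_ker]
  have hy : y ∈ 𝔓 := by simp [y, h𝔓, RingHom.mem_ker]
  let x' : k := α' + algebraMap K k (ev ⟨α, hα⟩)
  let y' : k := b₁ + algebraMap K k (ev ⟨a₁, ha₁⟩)
  have hx' : x' ∈ E.A' := E.A'.add_mem hα' (E.A'.algebraMap_mem _)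
  have hy' : y' ∈ E.A' := E.A'.add_mem hb₁ (E.A'.algebraMap_mem _)
  have hxk : (x : k) = α - algebraMap K k (ev ⟨α, hα⟩) := rfl
  have hyk : (y : k) = a₁ - algebraMap K k (ev ⟨a₁, ha₁⟩) := rfl
  let z : E.A := algebraMap K E.A (lam ^ p) * x + y ^ p
  have hzk : (z : k) = algebraMap K k (lam ^ p) * x + (y : k) ^ p := rfl
  have hz : z ∈ 𝔓 := 𝔓.add_mem (𝔓.mul_mem_left _ hx) (𝔓.pow_mem_of_mem hy p (by omega))
  let z' : k := algebraMap K k (lam ^ p) * x' + y' ^ p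
  have hz' : z' ∈ E.A' :=
    E.A'.add_mem (E.A'.mul_mem (E.A'.algebraMap_mem _) hx') (E.A'.pow_mem hy' p)
  have hvp : v ^ p = z + z' := by
    have h2 : v = algebraMap K k lam * v₀ + (y + y') := by
      rw [hyk]; simp only [y']
      rw [Algebra.smul_def] at h1
      linear_combination h1
    rw [h2, add_pow_char, add_pow_char, mul_pow, hsplit, hzk, hxk, map_pow]
    simp only [z', x', map_pow]
    ring
  have hvq : v ^ p ^ (e₀ + 1) = (z : k) ^ p ^ e₀ + z' ^ p ^ e₀ := by
    rw [pow_succ', pow_mul, hvp, add_pow_char_pow]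
  have hpe : p ^ e₀ ≠ 0 := pow_ne_zero _ (by omega)
  -- Both are first-chart parts of the same function, so they differ by a constant, and both vanish
  -- at the point.
  have heq : z ^ p ^ e₀ = a := by
    obtain ⟨c, hc⟩ := E.const ((z ^ p ^ e₀ - a : E.A) : k) (z ^ p ^ e₀ - a).2 (by
      have h3 : ((z ^ p ^ e₀ - a : E.A) : k) = b - z' ^ p ^ e₀ := by
        push_cast
        linear_combination hab - hvq
      rw [h3]
      exact E.A'.sub_mem hb (E.A'.pow_mem hz' _))
    have hc' : algebraMap K E.A c = z ^ p ^ e₀ - a := Subtype.ext hc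
    have h4 : ev (algebraMap K E.A c) = 0 := by
      rw [hc']
      have h5 : a ∈ 𝔓 := Ideal.pow_le_self (pow_ne_zero _ (by omega)) ha
      exact 𝔓.sub_mem (𝔓.pow_mem_of_mem hz _ (Nat.pos_of_ne_zero hpe)) h5
    rw [AlgHom.commutes] at h4
    rw [show c = 0 from h4, map_zero] at hc'
    exact (sub_eq_zero.mp hc'.symm)
  have hz2 : z ∈ 𝔓 ^ p := by
    refine mem_of_pow_mem_pow _ z (p ^ e₀) hpe ?_
    rw [heq, ← pow_mul, ← pow_succ']
    exact ha
  have hx2 : algebraMap K E.A (lam ^ p) * x ∈ 𝔓 ^ 2 := by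
    have h6 := (𝔓 ^ p).sub_mem hz2 (Ideal.pow_mem_pow hy p)
    simp only [z, add_sub_cancel_right] at h6
    exact Ideal.pow_le_pow_right hp h6
  have h7 := (𝔓 ^ 2).mul_mem_left (algebraMap K E.A (lam ^ p)⁻¹) hx2
  rw [← mul_assoc, ← map_mul, inv_mul_cancel₀ (pow_ne_zero _ hne), map_one, one_mul] at h7
  exact hev h7

/-- In the supersingular case a Frobenius power of a tight closure relation is an honest one. The
induction is that of `exists_mem_W_aux`, with the covering replaced by a Frobenius pullback, which
kills all classes; independence is only needed at the single point `ev`. -/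
theorem exists_pow_mem_W [IsAlgClosed K] (hDed : IsDedekindDomain E.A)
    (hss : ∀ v ∈ E.N, E.ρ (v ^ p) = 0) {v₀ : k} (hv₀N : v₀ ∈ E.N)
    (hv₀ : E.ρ v₀ = 1) {α α' : k} (hα : α ∈ E.A) (hα' : α' ∈ E.A') (hsplit : v₀ ^ p = α + α')
    (ev : E.A →ₐ[K] K)
    (hev : (⟨α, hα⟩ : E.A) - algebraMap K E.A (ev ⟨α, hα⟩) ∉ (RingHom.ker ev) ^ 2)
    {r : ℕ} (n : ℕ) : ∀ (d : ℤ) (δ : Fin r → ℤ) (G : Fin r → k) (Φ : k)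
      (_ : ∀ i, G i ∈ E.S (δ i)) (_ : Φ ∈ E.S d) (_ : E.Tight p d δ G Φ) (m : ℕ)
      (_ : m + n = r + 1) (h : Fin m → k) (P : Fin m → Fin r → E.A)
      (_ : ∀ l, E.Good d δ G (h l) (P l)) (_ : ∀ l, E.ρ (h l * Φ) = 0)
      (_ : LinearIndependent K (fun l i => ev (P l i))),
      ∃ e : ℕ, Φ ^ p ^ e ∈
        E.W ((p ^ e : ℕ) * d) (fun i => (p ^ e : ℕ) * δ i) (fun i => G i ^ p ^ e) := by
  induction n with
  | zero =>
    intro d δ G Φ _ _ _ m hm h P _ _ hind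
    have := hind.fintype_card_le_finrank
    simp at this
    omega
  | succ n ih =>
    intro d δ G Φ hG hΦ hT m hm h P hgood hρ hind
    haveI : CharP k p := charP_of_injective_algebraMap (algebraMap K k).injective p
    by_cases hW : Φ ∈ E.W d δ G
    · exact ⟨0, by simpa using hW⟩
    obtain ⟨h', P', hg', hρ'⟩ := E.exists_good d δ G Φ hG hΦ hW
    let H : Fin (m + 1) → k := Fin.cons h' h
    let Q : Fin (m + 1) → Fin r → E.A := Fin.cons P' P
    have hHQ : ∀ l, E.Good d δ G (H l) (Q l) := by
      intro l
      refine Fin.cases ?_ (fun l => ?_) l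
      · exact hg'
      · exact hgood l
    have hQ : LinearIndependent K (fun l i => ev (Q l i)) := by
      have hcons : (fun l i => ev (Q l i)) =
          (Fin.cons (fun i => ev (P' i)) (fun l i => ev (P l i)) : Fin (m + 1) → Fin r → K) := by
        funext l
        refine Fin.cases ?_ (fun l => ?_) l <;> rfl
      rw [hcons, linearIndependent_finCons]
      refine ⟨hind, fun hspan => hρ' ?_⟩
      obtain ⟨c, hc⟩ := (Submodule.mem_span_range_iff_exists_fun K).mp hspan
      have h1 := Good.ρ_eq_zero_of_supersingular E hDed hv₀N hv₀ hα hα' hsplit ev hev hT hΦ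
        (hg'.sub_sum h P hgood c) (by
        intro i
        have h2 := congrFun hc i
        simp only [Finset.sum_apply, Pi.smul_apply] at h2
        simp [Finset.sum_apply, ← h2])
      rw [sub_mul, map_sub, Finset.sum_mul, map_sum, Finset.sum_eq_zero, sub_zero] at h1
      · exact h1
      · intro l _
        rw [smul_mul_assoc, map_smul, hρ l, smul_zero]
    have hQp : LinearIndependent K (fun l i => ev (Q l i ^ p)) := by
      rw [Fintype.linearIndependent_iff] at hQ ⊢
      intro c hc l
      have hp0 : 0 < p := (Fact.out : p.Prime).pos
      choose c' hc' using fun l => IsAlgClosed.exists_pow_nat_eq (c l) hp0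
      have h3 := hQ c' (by
        funext i
        have h4 := congrFun hc i
        simp only [Finset.sum_apply, Pi.smul_apply, Pi.zero_apply, smul_eq_mul, map_pow] at h4 ⊢
        apply eq_zero_of_pow_eq_zero (n := p)
        rw [sum_pow_char, ← h4]
        exact Finset.sum_congr rfl fun l _ => by rw [mul_pow, hc']) l
      rw [← hc', h3, zero_pow hp0.ne']
    obtain ⟨e, he⟩ := ih (p * d) (fun i => p * δ i) (fun i => G i ^ p) (Φ ^ p)
      (fun i => E.S_pow (hG i) p) (E.S_pow hΦ p) (Tight.pow E hT) (m + 1) (by omega)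
      (fun l => H l ^ p) (fun l i => Q l i ^ p) (fun l => Good.pow E (hHQ l))
      (fun l => by
        rw [← mul_pow]
        exact hss _ (E.N.mul_mem (hHQ l).1 (E.A_le_N (E.mem_S.mp hΦ).1))) hQp
    refine ⟨e + 1, ?_⟩
    have hpow : ∀ x : k, (x ^ p) ^ p ^ e = x ^ p ^ (e + 1) := by
      intro x; rw [← pow_mul, ← pow_succ']
    have hd : ∀ i : ℤ, ((p ^ e : ℕ) : ℤ) * (p * i) = (p ^ (e + 1) : ℕ) * i := by
      intro i; push_cast; ring
    simpa only [hpow, hd] using he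

end Level

/-! ### Plane cubic function fields -/

/-- An elliptic function field presented by a cubic equation for `ζ` over the rational function field
in `ξ`, the two affine charts `K[ξ, ζ]` and `K[ξ⁻¹, ζ/ξ]` being integrally closed. -/
structure CubicField (K : Type) [Field K] (k : Type) [Field k] [Algebra K k] where
  ξ : k
  ζ : k
  ξ_ne : ξ ≠ 0
  a : Fin 10 → K
  rel : ζ ^ 3 = -((a 1 • ξ + a 2 • 1) * ζ ^ 2 + (a 3 • ξ ^ 2 + a 4 • ξ + a 5 • 1) * ζ +
    (a 6 • ξ ^ 3 + a 7 • ξ ^ 2 + a 8 • ξ + a 9 • 1))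
  li : LinearIndependent K (fun j : ℤ × Fin 3 => ξ ^ j.1 * ζ ^ (j.2 : ℕ))
  int : ∀ a : k, IsIntegral (Algebra.adjoin K {ξ, ζ}) a → a ∈ Algebra.adjoin K {ξ, ζ}
  int' : ∀ a : k, IsIntegral (Algebra.adjoin K {ξ⁻¹, ξ⁻¹ * ζ}) a →
    a ∈ Algebra.adjoin K {ξ⁻¹, ξ⁻¹ * ζ}

namespace CubicField

variable {K : Type} [Field K] {k : Type} [Field k] [Algebra K k] (Q : CubicField K k)

/-- The monomial basis of the coordinate ring of the overlap of the two charts. -/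
def b (j : ℤ × Fin 3) : k := Q.ξ ^ j.1 * Q.ζ ^ (j.2 : ℕ)

/-- The span of the monomials with exponents in `s`. -/
def sp (s : Set (ℤ × Fin 3)) : Submodule K k := Submodule.span K (Set.image Q.b s)

/-- Exponents of the monomial basis of the first chart. -/
def T : Set (ℤ × Fin 3) := {j | 0 ≤ j.1}

/-- Exponents of the monomial basis of the second chart. -/
def T' : Set (ℤ × Fin 3) := {j | j.1 + (j.2 : ℕ) ≤ 0}

variable {Q} in
lemma b_mem {s : Set (ℤ × Fin 3)} {j : ℤ × Fin 3} (h : j ∈ s) : Q.b j ∈ Q.sp s :=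
  Submodule.subset_span ⟨j, h, rfl⟩

lemma zpow_mul_b (n : ℤ) (j : ℤ × Fin 3) : Q.ξ ^ n * Q.b j = Q.b (n + j.1, j.2) := by
  simp only [b]; rw [zpow_add₀ Q.ξ_ne, mul_assoc]

variable {Q} in
lemma sp_le {s : Set (ℤ × Fin 3)} {M : Submodule K k} (h : ∀ j ∈ s, Q.b j ∈ M) : Q.sp s ≤ M := by
  rw [sp, Submodule.span_le]
  rintro _ ⟨j, hj, rfl⟩
  exact h j hj

variable {Q} in
lemma mul_mem_of_sp {s : Set (ℤ × Fin 3)} {M : Submodule K k} {c : k}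
    (h : ∀ j ∈ s, c * Q.b j ∈ M) {a : k} (ha : a ∈ Q.sp s) : c * a ∈ M :=
  (sp_le (Q := Q) (M := M.comap (LinearMap.mulLeft K c)) h) ha

lemma zpow_mul_mem {s t : Set (ℤ × Fin 3)} (n : ℤ) (h : ∀ j ∈ s, (n + j.1, j.2) ∈ t) {a : k}
    (ha : a ∈ Q.sp s) : Q.ξ ^ n * a ∈ Q.sp t :=
  mul_mem_of_sp (fun j hj => by rw [zpow_mul_b]; exact b_mem (h j hj)) ha

lemma cube (n : ℤ) : Q.ξ ^ n * Q.ζ ^ 3 =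
    -(Q.a 1 • Q.b (n + 1, 2) + Q.a 2 • Q.b (n, 2) + Q.a 3 • Q.b (n + 2, 1) + Q.a 4 • Q.b (n + 1, 1) +
      Q.a 5 • Q.b (n, 1) + Q.a 6 • Q.b (n + 3, 0) + Q.a 7 • Q.b (n + 2, 0) + Q.a 8 • Q.b (n + 1, 0) +
      Q.a 9 • Q.b (n, 0)) := by
  have h := Q.ξ_ne
  rw [Q.rel]
  simp only [b, Algebra.smul_def, zpow_add₀ h, Fin.isValue, Fin.val_two, Fin.val_one, Fin.val_zero,
    pow_one, pow_zero, zpow_one, mul_one]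
  rw [show Q.ξ ^ (2 : ℤ) = Q.ξ ^ 2 from zpow_ofNat _ 2, show Q.ξ ^ (3 : ℤ) = Q.ξ ^ 3 from zpow_ofNat _ 3]
  ring

lemma cube_mem (n : ℤ) {s : Set (ℤ × Fin 3)}
    (h : ∀ j : ℤ × Fin 3, n ≤ j.1 → j.1 + (j.2 : ℕ) ≤ n + 3 → j ∈ s) :
    Q.ξ ^ n * Q.ζ ^ 3 ∈ Q.sp s := by
  rw [cube]
  refine Submodule.neg_mem _ ?_
  have h' : ∀ (c : K) (j : ℤ × Fin 3), n ≤ j.1 → j.1 + (j.2 : ℕ) ≤ n + 3 → c • Q.b j ∈ Q.sp s :=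
    fun c j h1 h2 => Submodule.smul_mem _ _ (b_mem (h j h1 h2))
  refine Submodule.add_mem _ (Submodule.add_mem _ (Submodule.add_mem _ (Submodule.add_mem _
    (Submodule.add_mem _ (Submodule.add_mem _ (Submodule.add_mem _ (Submodule.add_mem _
    ?_ ?_) ?_) ?_) ?_) ?_) ?_) ?_) ?_
  all_goals
    apply h'
    · simp
    · simp; try omega

lemma adjoin_le_of_mul_mem {s : Set k} {M : Submodule K k} (h1 : (1 : k) ∈ M)
    (hs : ∀ a ∈ s, ∀ m ∈ M, a * m ∈ M) : (Algebra.adjoin K s).toSubmodule ≤ M := by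
  let B : Subalgebra K k :=
    { carrier := {a | ∀ m ∈ M, a * m ∈ M}
      mul_mem' := fun {a b} ha hb m hm => by rw [mul_assoc]; exact ha _ (hb _ hm)
      add_mem' := fun {a b} ha hb m hm => by
        rw [add_mul]; exact M.add_mem (ha _ hm) (hb _ hm)
      algebraMap_mem' := fun r m hm => by
        rw [← Algebra.smul_def]; exact M.smul_mem _ hm }
  have hB : Algebra.adjoin K s ≤ B := Algebra.adjoin_le fun a ha => hs a ha
  intro a ha
  simpa using hB ha 1 h1

/-- The coordinate ring of the first chart. -/
def A : Subalgebra K k := Algebra.adjoin K {Q.ξ, Q.ζ}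

/-- The coordinate ring of the second chart. -/
def A' : Subalgebra K k := Algebra.adjoin K {Q.ξ⁻¹, Q.ξ⁻¹ * Q.ζ}

lemma ζ_mul_b (j : ℤ × Fin 3) : Q.ζ * Q.b j = Q.ξ ^ j.1 * Q.ζ ^ ((j.2 : ℕ) + 1) := by
  simp only [b]; ring

lemma A_eq : Q.A.toSubmodule = Q.sp T := by
  apply le_antisymm
  · apply adjoin_le_of_mul_mem
    · have : Q.b (0, 0) ∈ Q.sp T := b_mem (by simp [T])
      simpa [b] using this
    · rintro a (rfl | rfl) m hm
      · have := Q.zpow_mul_mem (t := T) 1 (by rintro j hj; simp only [T, Set.mem_setOf_eq] at *; omega) hm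
        simpa using this
      · refine mul_mem_of_sp (fun j hj => ?_) hm
        rw [ζ_mul_b]
        obtain ⟨n, i⟩ := j
        simp only [T, Set.mem_setOf_eq] at hj
        fin_cases i
        · exact b_mem (j := (n, 1)) hj
        · exact b_mem (j := (n, 2)) hj
        · exact Q.cube_mem n fun j h1 _ => le_trans hj h1
  · apply sp_le
    rintro ⟨n, i⟩ hj
    obtain ⟨m, rfl⟩ := Int.eq_ofNat_of_zero_le (show 0 ≤ n from hj)
    simp only [b, zpow_natCast]
    exact Q.A.mul_mem (Q.A.pow_mem (Algebra.subset_adjoin (by simp)) _)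
      (Q.A.pow_mem (Algebra.subset_adjoin (by simp)) _)

lemma A'_eq : Q.A'.toSubmodule = Q.sp T' := by
  apply le_antisymm
  · apply adjoin_le_of_mul_mem
    · have : Q.b (0, 0) ∈ Q.sp T' := b_mem (by simp [T'])
      simpa [b] using this
    · rintro a (rfl | rfl) m hm
      · have := Q.zpow_mul_mem (t := T') (-1)
          (by rintro j hj; simp only [T', Set.mem_setOf_eq] at *; omega) hm
        simpa using this
      · refine mul_mem_of_sp (fun j hj => ?_) hm
        rw [mul_assoc, ζ_mul_b, ← zpow_neg_one, ← mul_assoc, ← zpow_add₀ Q.ξ_ne]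
        obtain ⟨n, i⟩ := j
        simp only [T', Set.mem_setOf_eq] at hj
        fin_cases i
        · exact b_mem (j := (-1 + n, 1)) (by simp [T'] at *; omega)
        · exact b_mem (j := (-1 + n, 2)) (by simp [T'] at *; omega)
        · exact Q.cube_mem (-1 + n) fun j _ h2 => by simp [T'] at *; omega
  · apply sp_le
    rintro ⟨n, i⟩ hj
    obtain ⟨m, hm⟩ := Int.eq_ofNat_of_zero_le (show 0 ≤ -(n + (i : ℕ)) by simp [T'] at hj; omega)
    have h1 := Q.A'.mul_mem (Q.A'.pow_mem (Algebra.subset_adjoin (by simp) : Q.ξ⁻¹ ∈ Q.A') m)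
      (Q.A'.pow_mem (Algebra.subset_adjoin (by simp) : Q.ξ⁻¹ * Q.ζ ∈ Q.A') i)
    have h2 : Q.b (n, i) = Q.ξ⁻¹ ^ m * (Q.ξ⁻¹ * Q.ζ) ^ (i : ℕ) := by
      simp only [b]
      obtain rfl : n = -(m : ℤ) + -((i : ℕ) : ℤ) := by omega
      rw [zpow_add₀ Q.ξ_ne, mul_pow, zpow_neg, zpow_neg, zpow_natCast, zpow_natCast, inv_pow, inv_pow]
      ring
    rw [h2]; exact h1

lemma mem_A {a : k} : a ∈ Q.A ↔ a ∈ Q.sp T := by rw [← A_eq]; rfl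

lemma mem_A' {a : k} : a ∈ Q.A' ↔ a ∈ Q.sp T' := by rw [← A'_eq]; rfl

lemma sp_mono {s t : Set (ℤ × Fin 3)} (h : s ⊆ t) : Q.sp s ≤ Q.sp t :=
  Submodule.span_mono (Set.image_mono h)

lemma sp_inter {s t : Set (ℤ × Fin 3)} {a : k} (h1 : a ∈ Q.sp s) (h2 : a ∈ Q.sp t) :
    a ∈ Q.sp (s ∩ t) := by
  have hli : LinearIndependent K Q.b := Q.li
  simp only [sp, Finsupp.span_image_eq_map_linearCombination] at *
  obtain ⟨u, hu, rfl⟩ := h1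
  obtain ⟨v, hv, huv⟩ := h2
  obtain rfl : v = u := hli huv
  exact ⟨v, by
    rw [SetLike.mem_coe, Finsupp.mem_supported] at *
    exact Set.subset_inter hu hv, rfl⟩

lemma zpow_mul_mem_iff {s : Set (ℤ × Fin 3)} (n : ℤ) {a : k} :
    Q.ξ ^ n * a ∈ Q.sp s ↔ a ∈ Q.sp {j | (n + j.1, j.2) ∈ s} := by
  constructor
  · intro h
    have := Q.zpow_mul_mem (t := {j | (n + j.1, j.2) ∈ s}) (-n) (by
      rintro ⟨i, l⟩ hj
      simpa using hj) h
    rwa [← mul_assoc, ← zpow_add₀ Q.ξ_ne, neg_add_cancel, zpow_zero, one_mul] at this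
  · exact Q.zpow_mul_mem n fun j hj => hj

lemma mem_univ_iff {a : k} : a ∈ Q.sp Set.univ ↔ ∃ m : ℕ, Q.ξ ^ m * a ∈ Q.A := by
  constructor
  · intro h
    have key : ∀ a ∈ Q.sp Set.univ, ∃ m₀ : ℕ, ∀ m ≥ m₀, Q.ξ ^ m * a ∈ Q.A := by
      intro a ha
      refine Submodule.span_induction ?_ ⟨0, by simp⟩ ?_ ?_ ha
      · rintro _ ⟨j, -, rfl⟩
        refine ⟨j.1.natAbs, fun m hm => ?_⟩
        rw [mem_A, ← zpow_natCast, zpow_mul_b]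
        exact b_mem (by simp only [T, Set.mem_setOf_eq]; omega)
      · rintro x y - - ⟨m, hm⟩ ⟨n, hn⟩
        refine ⟨max m n, fun l hl => ?_⟩
        rw [mul_add]
        exact Q.A.add_mem (hm _ (le_trans (le_max_left _ _) hl)) (hn _ (le_trans (le_max_right _ _) hl))
      · rintro c x - ⟨m, hm⟩
        refine ⟨m, fun l hl => ?_⟩
        rw [mul_smul_comm]
        exact Q.A.smul_mem (hm l hl) c
    obtain ⟨m, hm⟩ := key a h
    exact ⟨m, hm m le_rfl⟩
  · rintro ⟨m, hm⟩
    rw [mem_A, ← zpow_natCast, zpow_mul_mem_iff] at hm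
    exact Q.sp_mono (Set.subset_univ _) hm

lemma exists_inv_pow_mul_mem {a : k} (h : a ∈ Q.sp Set.univ) : ∃ m : ℕ, Q.ξ⁻¹ ^ m * a ∈ Q.A' := by
  have key : ∀ a ∈ Q.sp Set.univ, ∃ m₀ : ℕ, ∀ m ≥ m₀, Q.ξ⁻¹ ^ m * a ∈ Q.A' := by
    intro a ha
    refine Submodule.span_induction ?_ ⟨0, by simp⟩ ?_ ?_ ha
    · rintro _ ⟨j, -, rfl⟩
      refine ⟨j.1.natAbs + 3, fun m hm => ?_⟩
      rw [mem_A', inv_pow, ← zpow_natCast, ← zpow_neg, zpow_mul_b]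
      exact b_mem (by
        have := j.2.isLt
        simp only [T', Set.mem_setOf_eq]; omega)
    · rintro x y - - ⟨m, hm⟩ ⟨n, hn⟩
      refine ⟨max m n, fun l hl => ?_⟩
      rw [mul_add]
      exact Q.A'.add_mem (hm _ (le_trans (le_max_left _ _) hl)) (hn _ (le_trans (le_max_right _ _) hl))
    · rintro c x - ⟨m, hm⟩
      refine ⟨m, fun l hl => ?_⟩
      rw [mul_smul_comm]
      exact Q.A'.smul_mem (hm l hl) c
  obtain ⟨m, hm⟩ := key a h
  exact ⟨m, hm m le_rfl⟩

/-- A global section of degree `n` is a combination of the monomials of degree at most `n`. -/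
lemma section_eq (n : ℤ) : Q.A.toSubmodule ⊓ Q.A'.toSubmodule.comap (LinearMap.mulLeft K (Q.ξ ^ (-n)))
    = Q.sp {j | 0 ≤ j.1 ∧ j.1 + (j.2 : ℕ) ≤ n} := by
  apply le_antisymm
  · rintro a ⟨h1, h2⟩
    rw [A_eq] at h1
    have h2' : Q.ξ ^ (-n) * a ∈ Q.sp T' := by rw [← A'_eq]; exact h2
    rw [zpow_mul_mem_iff] at h2'
    refine Q.sp_mono ?_ (Q.sp_inter h1 h2')
    rintro j ⟨h3, h4⟩
    simp only [T, T', Set.mem_setOf_eq] at *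
    exact ⟨h3, by omega⟩
  · intro a ha
    refine ⟨?_, ?_⟩
    · rw [A_eq]; exact Q.sp_mono (fun j hj => hj.1) ha
    · change Q.ξ ^ (-n) * a ∈ Q.A'.toSubmodule
      rw [A'_eq]
      refine Q.zpow_mul_mem _ (fun j hj => ?_) ha
      simp only [T', Set.mem_setOf_eq] at *
      omega

end CubicField

/-! ### The residue pairing on a plane cubic -/

namespace CubicField

variable {K : Type} [Field K] {k : Type} [Field k] [Algebra K k] (Q : CubicField K k)

lemma exists_residue : ∃ ρ : k →ₗ[K] K, ∀ j, ρ (Q.b j) = if j = (-1, 2) then 1 else 0 := by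
  have hli : LinearIndependent K Q.b := Q.li
  obtain ⟨g, hg⟩ := LinearMap.exists_leftInverse_of_injective (Finsupp.linearCombination K Q.b)
    (LinearMap.ker_eq_bot.mpr hli)
  refine ⟨Finsupp.lapply (-1, 2) ∘ₗ g, fun j => ?_⟩
  have := LinearMap.congr_fun hg (Finsupp.single j 1)
  simp only [LinearMap.comp_apply, Finsupp.linearCombination_single, one_smul, LinearMap.id_apply]
    at this
  rw [LinearMap.comp_apply, this]
  simp [Finsupp.single_apply]

/-- The residue functional: the coefficient of `ξ⁻¹ζ²`. -/
noncomputable def res : k →ₗ[K] K := Q.exists_residue.choose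

lemma res_b (j : ℤ × Fin 3) : Q.res (Q.b j) = if j = (-1, 2) then 1 else 0 :=
  Q.exists_residue.choose_spec j

lemma res_zero (n : ℤ) : Q.res (Q.ξ ^ n) = 0 := by
  have := Q.res_b (n, 0)
  simpa [b] using this

lemma res_one (n : ℤ) : Q.res (Q.ξ ^ n * Q.ζ) = 0 := by
  have := Q.res_b (n, 1)
  simpa [b] using this

lemma res_two (n : ℤ) : Q.res (Q.ξ ^ n * Q.ζ ^ 2) = if n = -1 then 1 else 0 := by
  have := Q.res_b (n, 2)
  simpa [b] using this

/-- The coefficient of `ζ ^ 2` in the cubic equation. -/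
def c₁ : k := Q.a 1 • Q.ξ + Q.a 2 • 1

/-- The coefficient of `ζ` in the cubic equation. -/
def c₂ : k := Q.a 3 • Q.ξ ^ 2 + Q.a 4 • Q.ξ + Q.a 5 • 1

/-- The constant term of the cubic equation. -/
def c₃ : k := Q.a 6 • Q.ξ ^ 3 + Q.a 7 • Q.ξ ^ 2 + Q.a 8 • Q.ξ + Q.a 9 • 1

lemma rel' : Q.ζ ^ 3 = -(Q.c₁ * Q.ζ ^ 2 + Q.c₂ * Q.ζ + Q.c₃) := Q.rel

lemma res_coeff {c : k} (hc : c ∈ Submodule.span K (Set.range fun m : ℕ => Q.ξ ^ m)) (n : ℤ) :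
    Q.res (Q.ξ ^ n * c) = 0 ∧ Q.res (Q.ξ ^ n * (c * Q.ζ)) = 0 := by
  refine Submodule.span_induction ?_ (by simp) ?_ ?_ hc
  · rintro _ ⟨m, rfl⟩
    dsimp only
    rw [← mul_assoc, ← zpow_natCast, ← zpow_add₀ Q.ξ_ne]
    exact ⟨Q.res_zero _, Q.res_one _⟩
  · intro x y _ _ h1 h2
    rw [mul_add, add_mul, mul_add, map_add, map_add, h1.1, h1.2, h2.1, h2.2]
    simp
  · intro r x _ h
    rw [smul_mul_assoc, mul_smul_comm, mul_smul_comm, map_smul, map_smul, h.1, h.2]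
    simp

lemma c_mem : Q.c₁ ∈ Submodule.span K (Set.range fun m : ℕ => Q.ξ ^ m) ∧
    Q.c₂ ∈ Submodule.span K (Set.range fun m : ℕ => Q.ξ ^ m) ∧
    Q.c₃ ∈ Submodule.span K (Set.range fun m : ℕ => Q.ξ ^ m) := by
  have h : ∀ (r : K) (m : ℕ), r • Q.ξ ^ m ∈ Submodule.span K (Set.range fun m : ℕ => Q.ξ ^ m) :=
    fun r m => Submodule.smul_mem _ _ (Submodule.subset_span ⟨m, rfl⟩)
  have h0 : ∀ r : K, r • (1 : k) ∈ Submodule.span K (Set.range fun m : ℕ => Q.ξ ^ m) := by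
    intro r; simpa using h r 0
  have h1 : ∀ r : K, r • Q.ξ ∈ Submodule.span K (Set.range fun m : ℕ => Q.ξ ^ m) := by
    intro r; simpa using h r 1
  refine ⟨add_mem (h1 _) (h0 _), add_mem (add_mem (h _ _) (h1 _)) (h0 _),
    add_mem (add_mem (add_mem (h _ _) (h _ _)) (h1 _)) (h0 _)⟩

/-- The basis of the cubic extension dual to `1, ζ, ζ²` under the residue. -/
def e : Fin 3 → k := ![Q.ζ ^ 2 + Q.c₁ * Q.ζ + Q.c₂, Q.ζ + Q.c₁, 1]

/-- The basis dual to the monomial basis under the residue pairing. -/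
def bs (j : ℤ × Fin 3) : k := Q.ξ ^ j.1 * Q.e j.2

lemma res_bs_mul_b (i j : ℤ × Fin 3) :
    Q.res (Q.bs i * Q.b j) = if i = (-1 - j.1, j.2) then 1 else 0 := by
  obtain ⟨m, i⟩ := i
  obtain ⟨n, j⟩ := j
  have h1 := fun n => (Q.res_coeff Q.c_mem.1 n)
  have h2 := fun n => (Q.res_coeff Q.c_mem.2.1 n)
  have h3 := fun n => (Q.res_coeff Q.c_mem.2.2 n)
  have hr := Q.rel'
  have hmn : m + n = -1 ↔ m = -1 - n := by omega
  have key : Q.bs (m, i) * Q.b (n, j) = Q.ξ ^ (m + n) * (Q.e i * Q.ζ ^ (j : ℕ)) := by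
    simp only [bs, b]; rw [zpow_add₀ Q.ξ_ne]; ring
  rw [key]
  generalize m + n = l at hmn ⊢
  have e0 : Q.e 0 = Q.ζ ^ 2 + Q.c₁ * Q.ζ + Q.c₂ := rfl
  have e1 : Q.e 1 = Q.ζ + Q.c₁ := rfl
  have e2 : Q.e 2 = 1 := rfl
  simp only [Prod.mk.injEq, ← hmn]
  fin_cases i <;> fin_cases j <;>
    simp only [Fin.zero_eta, Fin.mk_one, Fin.reduceFinMk, Fin.isValue, e0, e1, e2, Fin.val_zero,
      Fin.val_one, Fin.val_two, pow_zero, pow_one, mul_one, one_mul]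
  · rw [mul_add, mul_add, map_add, map_add, (h1 l).2, (h2 l).1, res_two]; simp
  · rw [show (Q.ζ ^ 2 + Q.c₁ * Q.ζ + Q.c₂) * Q.ζ = -Q.c₃ by linear_combination hr, mul_neg, map_neg,
      (h3 l).1]; simp
  · rw [show (Q.ζ ^ 2 + Q.c₁ * Q.ζ + Q.c₂) * Q.ζ ^ 2 = -(Q.c₃ * Q.ζ) by
      linear_combination Q.ζ * hr, mul_neg, map_neg, (h3 l).2]; simp
  · rw [mul_add, map_add, (h1 l).1, res_one]; simp
  · rw [add_mul, mul_add, map_add, (h1 l).2, ← sq, res_two]; simp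
  · rw [show (Q.ζ + Q.c₁) * Q.ζ ^ 2 = -(Q.c₂ * Q.ζ) + -Q.c₃ by linear_combination hr, mul_add,
      map_add, mul_neg, mul_neg, map_neg, map_neg, (h3 l).1, (h2 l).2]; simp
  · rw [res_zero]; simp
  · rw [res_one]; simp
  · rw [res_two]; simp

lemma bs_mem_of (n : ℤ) (i : Fin 3) {s : Set (ℤ × Fin 3)}
    (h : ∀ j : ℤ × Fin 3, n ≤ j.1 → j.1 + (j.2 : ℕ) + (i : ℕ) ≤ n + 2 → j ∈ s) :
    Q.bs (n, i) ∈ Q.sp s := by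
  have hξ := Q.ξ_ne
  have h' : ∀ (c : K) (j : ℤ × Fin 3), n ≤ j.1 → j.1 + (j.2 : ℕ) + (i : ℕ) ≤ n + 2 →
      c • Q.b j ∈ Q.sp s :=
    fun c j h1 h2 => Submodule.smul_mem _ _ (b_mem (h j h1 h2))
  fin_cases i
  · have : Q.bs (n, 0) = (1 : K) • Q.b (n, 2) + Q.a 1 • Q.b (n + 1, 1) + Q.a 2 • Q.b (n, 1) +
        Q.a 3 • Q.b (n + 2, 0) + Q.a 4 • Q.b (n + 1, 0) + Q.a 5 • Q.b (n, 0) := by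
      simp only [bs, e, c₁, c₂, b, Algebra.smul_def, zpow_add₀ hξ, Fin.isValue, Fin.val_two,
        Fin.val_one, Fin.val_zero, pow_one, pow_zero, zpow_one, mul_one, Matrix.cons_val_zero, map_one]
      rw [show Q.ξ ^ (2 : ℤ) = Q.ξ ^ 2 from zpow_ofNat _ 2]
      ring
    refine this ▸ add_mem (add_mem (add_mem (add_mem (add_mem ?_ ?_) ?_) ?_) ?_) ?_ <;>
      exact h' _ _ (by simp) (by simp; try omega)
  · have : Q.bs (n, 1) = (1 : K) • Q.b (n, 1) + Q.a 1 • Q.b (n + 1, 0) + Q.a 2 • Q.b (n, 0) := by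
      simp only [bs, e, c₁, b, Algebra.smul_def, zpow_add₀ hξ, Fin.isValue,
        Fin.val_one, Fin.val_zero, pow_one, pow_zero, zpow_one, mul_one, Matrix.cons_val_one, map_one,
        Matrix.cons_val_zero]
      ring
    refine this ▸ add_mem (add_mem ?_ ?_) ?_ <;>
      exact h' _ _ (by simp) (by simp; try omega)
  · have : Q.bs (n, 2) = (1 : K) • Q.b (n, 0) := by
      simp [bs, e, b]
    exact this ▸ h' _ _ (by simp) (by simp)

lemma bs_mem_A {j : ℤ × Fin 3} (h : 0 ≤ j.1) : Q.bs j ∈ Q.A := by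
  rw [mem_A]
  exact Q.bs_mem_of j.1 j.2 fun i h1 _ => le_trans h h1

lemma bs_mem_A' {j : ℤ × Fin 3} (h : j.1 + 2 ≤ (j.2 : ℕ)) : Q.bs j ∈ Q.A' := by
  rw [mem_A']
  exact Q.bs_mem_of j.1 j.2 fun i _ h2 => by simp only [T', Set.mem_setOf_eq]; omega

lemma zpow_mul_mem_span_bs (n : ℤ) {a : k} (ha : a ∈ Submodule.span K (Set.range Q.bs)) :
    Q.ξ ^ n * a ∈ Submodule.span K (Set.range Q.bs) := by
  refine Submodule.span_induction ?_ (by simp) ?_ ?_ ha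
  · rintro _ ⟨j, rfl⟩
    refine Submodule.subset_span ⟨(n + j.1, j.2), ?_⟩
    simp only [bs]; rw [zpow_add₀ Q.ξ_ne, mul_assoc]
  · intro x y _ _ h1 h2
    rw [mul_add]; exact add_mem h1 h2
  · intro r x _ h
    rw [mul_smul_comm]; exact Submodule.smul_mem _ _ h

lemma coeff_mul_mem_span_bs {c : k} (hc : c ∈ Submodule.span K (Set.range fun m : ℕ => Q.ξ ^ m))
    {a : k} (ha : a ∈ Submodule.span K (Set.range Q.bs)) :
    c * a ∈ Submodule.span K (Set.range Q.bs) := by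
  refine Submodule.span_induction ?_ (by simp) ?_ ?_ hc
  · rintro _ ⟨m, rfl⟩
    have := Q.zpow_mul_mem_span_bs m ha
    rwa [zpow_natCast] at this
  · intro x y _ _ h1 h2
    rw [add_mul]; exact add_mem h1 h2
  · intro r x _ h
    rw [smul_mul_assoc]; exact Submodule.smul_mem _ _ h

lemma sp_univ_le : Q.sp Set.univ ≤ Submodule.span K (Set.range Q.bs) := by
  have he : ∀ i, Q.e i ∈ Submodule.span K (Set.range Q.bs) := fun i =>
    Submodule.subset_span ⟨(0, i), by simp [bs]⟩
  have h0 : (1 : k) ∈ Submodule.span K (Set.range Q.bs) := he 2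
  have h1 : Q.ζ ∈ Submodule.span K (Set.range Q.bs) := by
    have : Q.ζ = Q.e 1 - Q.c₁ * 1 := by simp [e]
    rw [this]
    exact sub_mem (he 1) (Q.coeff_mul_mem_span_bs Q.c_mem.1 h0)
  have h2 : Q.ζ ^ 2 ∈ Submodule.span K (Set.range Q.bs) := by
    have : Q.ζ ^ 2 = Q.e 0 - Q.c₁ * Q.ζ - Q.c₂ * 1 := by simp [e]; ring
    rw [this]
    exact sub_mem (sub_mem (he 0) (Q.coeff_mul_mem_span_bs Q.c_mem.1 h1))
      (Q.coeff_mul_mem_span_bs Q.c_mem.2.1 h0)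
  apply sp_le
  rintro ⟨n, i⟩ -
  apply Q.zpow_mul_mem_span_bs
  fin_cases i
  · simpa using h0
  · simpa using h1
  · exact h2

/-- Expansion in the dual basis; the coefficients are residues. -/
lemma expand {h : k} (hh : h ∈ Q.sp Set.univ) : ∃ c : (ℤ × Fin 3) →₀ K,
    h = c.sum (fun j r => r • Q.bs j) ∧ ∀ j, Q.res (h * Q.b j) = c (-1 - j.1, j.2) := by
  obtain ⟨c, hc⟩ := (Finsupp.mem_span_range_iff_exists_finsupp).mp (Q.sp_univ_le hh)
  refine ⟨c, hc.symm, fun j => ?_⟩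
  rw [← hc, Finsupp.sum, Finset.sum_mul, map_sum]
  simp_rw [smul_mul_assoc, map_smul, res_bs_mul_b, smul_eq_mul, mul_ite, mul_one, mul_zero]
  rw [Finset.sum_ite_eq']
  split_ifs with h
  · rfl
  · exact (Finsupp.notMem_support_iff.mp h).symm

/-- Every functional vanishing on suitable shifts of the two charts is given by the residue pairing,
only finitely many coefficients of its representation in the dual basis being nonzero. -/
lemma exists_repr (ν : k →ₗ[K] K) (m : ℕ) (h1 : ∀ a ∈ Q.A, ν (Q.ξ ^ m * a) = 0)
    (h2 : ∀ a ∈ Q.A', ν (Q.ξ⁻¹ ^ m * a) = 0) :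
    ∃ h ∈ Q.sp Set.univ, ∀ w ∈ Q.sp Set.univ, ν w = Q.res (h * w) := by
  classical
  let s : Finset (ℤ × Fin 3) := (Finset.Icc (-(m : ℤ) - 2) m) ×ˢ Finset.univ
  have hs : ∀ j : ℤ × Fin 3, j ∉ s → ν (Q.b j) = 0 := by
    intro j hj
    simp only [s, Finset.mem_product, Finset.mem_Icc, Finset.mem_univ, and_true, not_and_or,
      not_le] at hj
    have hj2 := j.2.isLt
    rcases hj with hj | hj
    · have : Q.b j = Q.ξ⁻¹ ^ m * Q.b (m + j.1, j.2) := by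
        rw [inv_pow, ← zpow_natCast, ← zpow_neg, zpow_mul_b]; simp
      rw [this]
      refine h2 _ ((Q.mem_A').mpr (b_mem ?_))
      simp only [T', Set.mem_setOf_eq]; omega
    · have : Q.b j = Q.ξ ^ m * Q.b (-m + j.1, j.2) := by
        rw [← zpow_natCast, zpow_mul_b]; simp
      rw [this]
      refine h1 _ ((Q.mem_A).mpr (b_mem ?_))
      simp only [T, Set.mem_setOf_eq]; omega
  refine ⟨∑ j ∈ s, ν (Q.b j) • Q.bs (-1 - j.1, j.2), ?_, ?_⟩
  · refine Submodule.sum_mem _ fun j _ => Submodule.smul_mem _ _ ?_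
    exact Q.bs_mem_of _ _ fun _ _ _ => Set.mem_univ _
  · intro w hw
    let L : k →ₗ[K] K := ν - Q.res ∘ₗ LinearMap.mulLeft K
      (∑ j ∈ s, ν (Q.b j) • Q.bs (-1 - j.1, j.2))
    have hL : Q.sp Set.univ ≤ LinearMap.ker L := by
      apply sp_le
      intro j _
      rw [LinearMap.mem_ker]
      simp only [L, LinearMap.sub_apply, LinearMap.comp_apply, LinearMap.mulLeft_apply]
      rw [Finset.sum_mul, map_sum]
      simp_rw [smul_mul_assoc, map_smul, res_bs_mul_b, smul_eq_mul, mul_ite, mul_one, mul_zero]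
      have hij : ∀ i : ℤ × Fin 3, ((-1 - i.1, i.2) = ((-1 - j.1, j.2) : ℤ × Fin 3)) ↔ i = j := by
        intro i
        rw [Prod.ext_iff, Prod.ext_iff]
        simp
      simp_rw [hij]
      rw [Finset.sum_ite_eq']
      split_ifs with h
      · simp
      · rw [hs j h]; simp
    have := hL hw
    rw [LinearMap.mem_ker] at this
    exact sub_eq_zero.mp this

lemma fd (n : ℤ) : FiniteDimensional K
    (↥(Q.A.toSubmodule ⊓ Q.A'.toSubmodule.comap (LinearMap.mulLeft K (Q.ξ ^ (-n))))) := by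
  rw [section_eq]
  apply FiniteDimensional.span_of_finite
  apply Set.Finite.image
  refine Set.Finite.subset ((Finset.Icc (0 : ℤ) n) ×ˢ (Finset.univ : Finset (Fin 3))).finite_toSet ?_
  rintro j ⟨h1, h2⟩
  simp only [Finset.coe_product, Set.mem_prod, Finset.coe_Icc, Set.mem_Icc, Finset.coe_univ,
    Set.mem_univ, and_true]
  omega

/-- The smooth plane cubic curve as a `Level`. -/
noncomputable def level : Level K k where
  ξ := Q.ξ
  ξ_ne := Q.ξ_ne
  A := Q.A
  A' := Q.A'
  ξ_mem := Algebra.subset_adjoin (by simp)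
  ξ_inv_mem := Algebra.subset_adjoin (by simp)
  int := Q.int
  int' := Q.int'
  fg := Subalgebra.fg_def.mpr ⟨{Q.ξ, Q.ζ}, by simp, rfl⟩
  loc := fun a ha => Q.exists_inv_pow_mul_mem (Q.sp_mono (Set.subset_univ _) (Q.mem_A.mp ha))
  loc' := fun a ha => Q.mem_univ_iff.mp (Q.sp_mono (Set.subset_univ _) (Q.mem_A'.mp ha))
  const := by
    intro a h1 h2
    have h := Q.sp_inter (Q.mem_A.mp h1) (Q.mem_A'.mp h2)
    have hT : T ∩ T' ⊆ {((0, 0) : ℤ × Fin 3)} := by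
      rintro ⟨m, i⟩ ⟨h3, h4⟩
      simp only [T, T', Set.mem_setOf_eq] at h3 h4
      obtain rfl : m = 0 := by omega
      obtain rfl : i = 0 := Fin.ext (by simp at *; omega)
      rfl
    have h' := Q.sp_mono hT h
    rw [sp, Set.image_singleton, Submodule.mem_span_singleton] at h'
    obtain ⟨c, rfl⟩ := h'
    exact ⟨c, by simp [b, Algebra.smul_def]⟩
  fd := Q.fd
  ρ := Q.res
  ρ_A := by
    intro a ha
    have h : Q.sp T ≤ LinearMap.ker Q.res := sp_le fun j hj => by
      rw [LinearMap.mem_ker, res_b, if_neg]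
      rintro rfl
      simp [T] at hj
    exact h (Q.mem_A.mp ha)
  ρ_A' := by
    intro a ha
    have h : Q.sp T' ≤ LinearMap.ker Q.res := sp_le fun j hj => by
      rw [LinearMap.mem_ker, res_b, if_neg]
      rintro rfl
      simp [T'] at hj
    exact h (Q.mem_A'.mp ha)
  ρ_one := ⟨Q.b (-1, 2), Q.mem_univ_iff.mp (b_mem (Set.mem_univ _)), by simp [res_b]⟩
  repr := by
    intro ν m h1 h2
    obtain ⟨h, hh, hν⟩ := Q.exists_repr ν m h1 h2
    exact ⟨h, Q.mem_univ_iff.mp hh, fun w hw => hν w (Q.mem_univ_iff.mpr hw)⟩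
  dual := by
    intro h hh hA
    obtain ⟨c, rfl, hres⟩ := Q.expand (Q.mem_univ_iff.mpr hh)
    refine Subalgebra.sum_mem _ fun j hj => Subalgebra.smul_mem _ (Q.bs_mem_A ?_) _
    by_contra hneg
    have h1 := hres (-1 - j.1, j.2)
    rw [hA _ (Q.mem_A.mpr (b_mem (by simp only [T, Set.mem_setOf_eq]; omega)))] at h1
    rw [Finsupp.mem_support_iff] at hj
    simp at h1
    exact hj h1.symm
  dual' := by
    intro h hh hA
    obtain ⟨c, rfl, hres⟩ := Q.expand (Q.mem_univ_iff.mpr hh)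
    refine Subalgebra.sum_mem _ fun j hj => Subalgebra.smul_mem _ (Q.bs_mem_A' ?_) _
    by_contra hneg
    have h1 := hres (-1 - j.1, j.2)
    rw [hA _ (Q.mem_A'.mpr (b_mem (by simp only [T', Set.mem_setOf_eq]; omega)))] at h1
    rw [Finsupp.mem_support_iff] at hj
    simp at h1
    exact hj h1.symm

end CubicField

/-! ### Normality of affine charts -/

/-- Degree-zero parts of localizations of normal graded domains are integrally closed. The grading
enters through the dehomogenization `D`, which sets the homogeneous element `w` equal to one. -/
lemma dehomogenization_integrallyClosed {K R L : Type} [Field K] [CommRing R] [IsDomain R]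
    [IsIntegrallyClosed R] [Field L] [Algebra R L] [IsFractionRing R L] [Algebra K L]
    (A : Subalgebra K L) (w : R) (hw : w ≠ 0) (D : R →+* L) (hDw : D w = 1) (hDA : ∀ r, D r ∈ A)
    (hA : ∀ a ∈ A, ∃ (r : R) (n : ℕ), a * algebraMap R L w ^ n = algebraMap R L r ∧ D r = a)
    (a : L) (ha : IsIntegral A a) : a ∈ A := by
  have hM : Submonoid.powers w ≤ nonZeroDivisors R := powers_le_nonZeroDivisors_of_noZeroDivisors hw
  have hwL : algebraMap R L w ≠ 0 := by
    simpa using hw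
  let j : Localization.Away w →+* L :=
    IsLocalization.Away.lift (S := Localization.Away w) w (g := algebraMap R L) (isUnit_iff_ne_zero.mpr hwL)
  let DL : Localization.Away w →+* L :=
    IsLocalization.Away.lift (S := Localization.Away w) w (g := D) (by rw [hDw]; exact isUnit_one)
  have hj : ∀ r, j (algebraMap _ _ r) = algebraMap R L r := fun r => IsLocalization.Away.lift_eq _ _ _
  have hDL : ∀ r, DL (algebraMap _ _ r) = D r := fun r => IsLocalization.Away.lift_eq _ _ _
  letI : Algebra (Localization.Away w) L := j.toAlgebra
  haveI : IsScalarTower R (Localization.Away w) L := IsScalarTower.of_algebraMap_eq fun r => (hj r).symm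
  haveI : IsFractionRing (Localization.Away w) L :=
    IsFractionRing.isFractionRing_of_isDomain_of_isLocalization (Submonoid.powers w) _ _
  haveI : IsDomain (Localization.Away w) := IsLocalization.isDomain_localization hM
  haveI : IsIntegrallyClosed (Localization.Away w) :=
    isIntegrallyClosed_of_isLocalization (R := R) _ (Submonoid.powers w) hM
  have hinj : Function.Injective j := IsFractionRing.injective (Localization.Away w) L
  have hfix : ∀ a ∈ A, ∃ t, j t = a ∧ DL t = a := by
    intro a ha
    obtain ⟨r, n, h1, h2⟩ := hA a ha
    refine ⟨IsLocalization.mk' _ r (⟨w ^ n, n, rfl⟩ : Submonoid.powers w), ?_, ?_⟩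
    · have := congrArg j (IsLocalization.mk'_spec (Localization.Away w) r
        (⟨w ^ n, n, rfl⟩ : Submonoid.powers w))
      rw [map_mul, hj, hj, map_pow, ← h1] at this
      exact mul_right_cancel₀ (pow_ne_zero n hwL) this
    · have := congrArg DL (IsLocalization.mk'_spec (Localization.Away w) r
        (⟨w ^ n, n, rfl⟩ : Submonoid.powers w))
      rw [map_mul, hDL, hDL, map_pow, hDw, one_pow, mul_one, h2] at this
      exact this
  let s₀ : A → Localization.Away w := fun x => (hfix x x.2).choose
  have hs₀ : ∀ x : A, j (s₀ x) = x ∧ DL (s₀ x) = x := fun x => (hfix x x.2).choose_spec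
  let s : A →+* Localization.Away w :=
    { toFun := s₀
      map_one' := hinj (by rw [(hs₀ _).1]; simp)
      map_zero' := hinj (by rw [(hs₀ _).1]; simp)
      map_mul' := fun x y => hinj (by rw [map_mul, (hs₀ _).1, (hs₀ _).1, (hs₀ _).1]; simp)
      map_add' := fun x y => hinj (by rw [map_add, (hs₀ _).1, (hs₀ _).1, (hs₀ _).1]; simp) }
  have hs : ∀ x : A, j (s x) = x ∧ DL (s x) = x := hs₀
  have hjs : j.comp s = algebraMap A L := RingHom.ext fun x => (hs x).1
  letI : Algebra A (Localization.Away w) := s.toAlgebra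
  haveI : IsScalarTower A (Localization.Away w) L := IsScalarTower.of_algebraMap_eq fun x => (hs x).1.symm
  obtain ⟨t, rfl⟩ := IsIntegrallyClosed.isIntegral_iff.mp (ha.tower_top (A := Localization.Away w))
  have ht : IsIntegral A t := (isIntegral_algebraMap_iff hinj).mp ha
  have hDt : DL t ∈ A := by
    obtain ⟨⟨r, ⟨_, n, rfl⟩⟩, h⟩ := IsLocalization.surj (Submonoid.powers w) t
    have := congrArg DL h
    simp only [map_mul, hDL, map_pow, hDw, one_pow, mul_one] at this
    rw [this]; exact hDA r
  by_contra hnot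
  have hb : t - s ⟨DL t, hDt⟩ ≠ 0 := by
    intro h
    apply hnot
    rw [sub_eq_zero.mp h]
    change j _ ∈ A
    rw [(hs _).1]
    exact hDt
  have hb' : t - s ⟨DL t, hDt⟩ ∈ RingHom.ker DL := by
    rw [RingHom.mem_ker, map_sub, (hs _).2, sub_self]
  apply Ideal.comap_ne_bot_of_integral_mem (R := A) hb hb' (ht.sub isIntegral_algebraMap)
  rw [eq_bot_iff]
  intro x hx
  have h0 : DL (s x) = 0 := hx
  rw [(hs x).2] at h0
  exact Subtype.ext h0

/-! ### Dehomogenization of the cubic ring -/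

section

open MvPolynomial

lemma aeval_mul_eq {K L : Type} [Field K] [CommRing L] [Algebra K L] {g : MvPolynomial (Fin 3) K} {n : ℕ}
    (hg : g.IsHomogeneous n) (c : L) (v : Fin 3 → L) :
    aeval (fun i => c * v i) g = c ^ n * aeval v g := by
  simp only [aeval_def, eval₂_eq', Finset.mul_sum]
  refine Finset.sum_congr rfl fun d hd => ?_
  have h := hg (mem_support_iff.mp hd)
  rw [Finsupp.weight_apply, Finsupp.sum_fintype _ _ (by simp)] at h
  simp only [Pi.one_apply, smul_eq_mul, mul_one] at h
  simp only [mul_pow, Finset.prod_mul_distrib]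
  rw [Finset.prod_pow_eq_pow_sum, h]
  ring

lemma three_le_degreeOf {K : Type} [Field K] {F : MvPolynomial (Fin 3) K} (hF : F.IsHomogeneous 3)
    (hz : eval (Pi.single 2 1) F ≠ 0) : 3 ≤ degreeOf 2 F := by
  rw [eval_eq'] at hz
  obtain ⟨d, hd, hne⟩ := Finset.exists_ne_zero_of_sum_ne_zero hz
  have h0 := right_ne_zero_of_mul hne
  rw [Finset.prod_ne_zero_iff] at h0
  have hd0 : d 0 = 0 := by
    by_contra h
    exact h0 0 (Finset.mem_univ _) (by simp [h])
  have hd1 : d 1 = 0 := by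
    by_contra h
    exact h0 1 (Finset.mem_univ _) (by simp [h])
  have h := hF (mem_support_iff.mp hd)
  rw [Finsupp.weight_apply, Finsupp.sum_fintype _ _ (by simp), Fin.sum_univ_three, hd0, hd1] at h
  simp only [Pi.one_apply, smul_eq_mul, mul_one] at h
  have := monomial_le_degreeOf 2 hd
  omega

section

variable {K : Type} [Field K] (F : MvPolynomial (Fin 3) K)
  (L : Type) [Field L] [Algebra (MvPolynomial (Fin 3) K ⧸ Ideal.span {F}) L] [Algebra K L]
  [IsScalarTower K (MvPolynomial (Fin 3) K ⧸ Ideal.span {F}) L]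

/-- The map from polynomials to the fraction field of the homogeneous coordinate ring. -/
noncomputable def emb : MvPolynomial (Fin 3) K →ₐ[K] L :=
  (IsScalarTower.toAlgHom K (MvPolynomial (Fin 3) K ⧸ Ideal.span {F}) L).comp
    (Ideal.Quotient.mkₐ K (Ideal.span {F}))

lemma emb_apply (g : MvPolynomial (Fin 3) K) :
    emb F L g = algebraMap _ L (Ideal.Quotient.mk (Ideal.span {F}) g) := rfl

/-- Dehomogenization with respect to the `i`-th variable. -/
noncomputable def dehom (i : Fin 3) : MvPolynomial (Fin 3) K →ₐ[K] L :=
  aeval fun j => emb F L (X j) / emb F L (X i)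

lemma dehom_X (i j : Fin 3) : dehom F L i (X j) = emb F L (X j) / emb F L (X i) := by
  simp [dehom]

lemma emb_eq {i : Fin 3} (hi : emb F L (X i) ≠ 0) {g : MvPolynomial (Fin 3) K} {n : ℕ}
    (hg : g.IsHomogeneous n) : emb F L g = emb F L (X i) ^ n * dehom F L i g := by
  rw [dehom, ← aeval_mul_eq hg]
  have : emb F L = aeval fun j => emb F L (X j) := aeval_unique _
  conv_lhs => rw [this]
  congr 2
  funext j
  field_simp

lemma exists_homogenization (i : Fin 3) (hi : emb F L (X i) ≠ 0) (g : MvPolynomial (Fin 3) K) :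
    ∃ (n : ℕ) (r : MvPolynomial (Fin 3) K), r.IsHomogeneous n ∧ dehom F L i r = dehom F L i g := by
  have hX : dehom F L i (X i) = 1 := by rw [dehom_X, div_self hi]
  induction g using MvPolynomial.induction_on with
  | C a => exact ⟨0, C a, isHomogeneous_C _ _, rfl⟩
  | add p q hp hq =>
    obtain ⟨m, r, hr, hr'⟩ := hp
    obtain ⟨n, s, hs, hs'⟩ := hq
    refine ⟨m + n, r * X i ^ n + s * X i ^ m, ?_, ?_⟩
    · refine (hr.mul ?_).add (add_comm n m ▸ hs.mul ?_)
      · simpa using (isHomogeneous_X K i).pow n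
      · simpa using (isHomogeneous_X K i).pow m
    · simp [hX, hr', hs']
  | mul_X p j hp =>
    obtain ⟨m, r, hr, hr'⟩ := hp
    exact ⟨m + 1, r * X j, hr.mul (isHomogeneous_X K j), by simp [hr']⟩

variable {F}

lemma dehom_F (hF : F.IsHomogeneous 3) {i : Fin 3} (hi : emb F L (X i) ≠ 0) : dehom F L i F = 0 := by
  have h := emb_eq F L hi hF
  rw [emb_apply, Ideal.Quotient.eq_zero_iff_mem.mpr (Ideal.mem_span_singleton_self F), map_zero] at h
  rcases mul_eq_zero.mp h.symm with h | h
  · exact absurd h (pow_ne_zero _ hi)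
  · exact h

lemma emb_eq_zero [IsDomain (MvPolynomial (Fin 3) K ⧸ Ideal.span {F})]
    [IsFractionRing (MvPolynomial (Fin 3) K ⧸ Ideal.span {F}) L] {g : MvPolynomial (Fin 3) K} :
    emb F L g = 0 ↔ F ∣ g := by
  rw [emb_apply, map_eq_zero_iff _ (IsFractionRing.injective
    (MvPolynomial (Fin 3) K ⧸ Ideal.span {F}) L), Ideal.Quotient.eq_zero_iff_mem,
    Ideal.mem_span_singleton]

lemma emb_X_ne_zero (hF : F.IsHomogeneous 3) (hF0 : F ≠ 0)
    [IsDomain (MvPolynomial (Fin 3) K ⧸ Ideal.span {F})]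
    [IsFractionRing (MvPolynomial (Fin 3) K ⧸ Ideal.span {F}) L] (i : Fin 3) :
    emb F L (X i) ≠ 0 := by
  intro h
  rw [emb_apply, map_eq_zero_iff _ (IsFractionRing.injective
    (MvPolynomial (Fin 3) K ⧸ Ideal.span {F}) L)] at h
  have := eq_zero_of_dvd_of_totalDegree_lt hF hF0 (by simp) h
  exact X_ne_zero i this

lemma chart_integrallyClosed (hF : F.IsHomogeneous 3) (hF0 : F ≠ 0)
    [IsDomain (MvPolynomial (Fin 3) K ⧸ Ideal.span {F})]
    [IsIntegrallyClosed (MvPolynomial (Fin 3) K ⧸ Ideal.span {F})]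
    [IsFractionRing (MvPolynomial (Fin 3) K ⧸ Ideal.span {F}) L] (i : Fin 3) (a : L)
    (ha : IsIntegral (dehom F L i).range a) : a ∈ (dehom F L i).range := by
  have hX := emb_X_ne_zero L hF hF0 i
  have hDF : ∀ g ∈ Ideal.span {F}, (dehom F L i : MvPolynomial (Fin 3) K →+* L) g = 0 := by
    intro g hg
    obtain ⟨h, rfl⟩ := Ideal.mem_span_singleton.mp hg
    simp [dehom_F L hF hX]
  refine dehomogenization_integrallyClosed (R := MvPolynomial (Fin 3) K ⧸ Ideal.span {F})
    (dehom F L i).range (Ideal.Quotient.mk _ (X i)) ?_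
    (Ideal.Quotient.lift (Ideal.span {F}) (dehom F L i : MvPolynomial (Fin 3) K →+* L) hDF) ?_ ?_ ?_ a ha
  · intro h
    rw [emb_apply, h, map_zero] at hX
    exact hX rfl
  · rw [Ideal.Quotient.lift_mk]
    exact (dehom_X F L i i).trans (div_self hX)
  · intro r
    obtain ⟨g, rfl⟩ := Ideal.Quotient.mk_surjective r
    rw [Ideal.Quotient.lift_mk]
    exact ⟨g, rfl⟩
  · rintro _ ⟨g, rfl⟩
    obtain ⟨n, r, hr, hr'⟩ := exists_homogenization F L i hX g
    refine ⟨Ideal.Quotient.mk _ r, n, ?_, ?_⟩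
    · rw [← emb_apply, ← emb_apply, emb_eq F L hX hr, hr']
      exact mul_comm _ _
    · rw [Ideal.Quotient.lift_mk]; exact hr'

/-- The monomials `(x/y)^m (z/y)^i` with `i < 3` are linearly independent, since `F` has degree three
in `z`. -/
lemma chart_linearIndependent (hF : F.IsHomogeneous 3) (hz : eval (Pi.single 2 1) F ≠ 0)
    [IsDomain (MvPolynomial (Fin 3) K ⧸ Ideal.span {F})]
    [IsFractionRing (MvPolynomial (Fin 3) K ⧸ Ideal.span {F}) L] :
    LinearIndependent K (fun j : ℤ × Fin 3 => (emb F L (X 0) / emb F L (X 1)) ^ j.1 *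
      (emb F L (X 2) / emb F L (X 1)) ^ (j.2 : ℕ)) := by
  have hF0 : F ≠ 0 := by rintro rfl; simp at hz
  have hx := emb_X_ne_zero L hF hF0 0
  have hy := emb_X_ne_zero L hF hF0 1
  rw [linearIndependent_iff']
  intro s c hc j₀ hj₀
  obtain ⟨M, hM⟩ : ∃ M : ℕ, ∀ j ∈ s, j.1.natAbs ≤ M :=
    ⟨s.sup fun j => j.1.natAbs, fun j hj => Finset.le_sup (f := fun j : ℤ × Fin 3 => j.1.natAbs) hj⟩
  let e : ℤ × Fin 3 → (Fin 3 →₀ ℕ) := fun j => Finsupp.equivFunOnFinite.symm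
    ![(M + j.1).toNat, (M + 2 - j.1 - (j.2 : ℕ)).toNat, (j.2 : ℕ)]
  let r : MvPolynomial (Fin 3) K := ∑ j ∈ s, monomial (e j) (c j)
  have hr : emb F L r = 0 := by
    have h1 : emb F L r = emb F L (X 0) ^ M * emb F L (X 1) ^ (M + 2) *
        ∑ j ∈ s, c j • ((emb F L (X 0) / emb F L (X 1)) ^ j.1 *
      (emb F L (X 2) / emb F L (X 1)) ^ (j.2 : ℕ)) := by
      rw [map_sum, Finset.mul_sum]
      refine Finset.sum_congr rfl fun j hj => ?_
      have hj' := hM j hj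
      have hj2 := j.2.isLt
      have h2 : emb F L (monomial (e j) (c j)) = c j • (emb F L (X 0) ^ (M + j.1).toNat *
          emb F L (X 1) ^ (M + 2 - j.1 - (j.2 : ℕ)).toNat * emb F L (X 2) ^ (j.2 : ℕ)) := by
        rw [monomial_eq, map_mul, Finsupp.prod_fintype _ _ (by simp), Fin.prod_univ_three]
        simp only [e, Finsupp.coe_equivFunOnFinite_symm, Matrix.cons_val_zero, Matrix.cons_val_one,
          Matrix.cons_val, map_mul, map_pow]
        rw [Algebra.smul_def, ← MvPolynomial.algebraMap_eq, AlgHom.commutes]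
      rw [h2, mul_smul_comm]
      congr 1
      rw [← zpow_natCast (emb F L (X 0)) (M + j.1).toNat, ← zpow_natCast (emb F L (X 1)) (_ : ℤ).toNat,
        Int.toNat_of_nonneg (by omega), Int.toNat_of_nonneg (by omega), div_pow, div_zpow,
        zpow_add₀ hx, zpow_sub₀ hy, zpow_sub₀ hy, zpow_add₀ hy]
      simp only [zpow_natCast]
      rw [show emb F L (X 1) ^ (2 : ℤ) = emb F L (X 1) ^ 2 from zpow_ofNat _ 2]
      field_simp
      ring
    rw [h1, hc, mul_zero]
  rw [emb_eq_zero] at hr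
  have hr0 : r = 0 := by
    obtain ⟨h, hh⟩ := hr
    by_contra hne
    have hh0 : h ≠ 0 := by rintro rfl; exact hne (by rw [hh, mul_zero])
    have h1 : degreeOf 2 r = degreeOf 2 F + degreeOf 2 h := by rw [hh, degreeOf_mul_eq hF0 hh0]
    have h2 := three_le_degreeOf hF hz
    have h3 : degreeOf 2 r ≤ 2 := by
      refine (degreeOf_sum_le 2 s _).trans (Finset.sup_le fun j _ => ?_)
      refine degreeOf_le_iff.mpr fun m hm => ?_
      have := Finset.mem_singleton.mp (support_monomial_subset hm)
      subst this
      have := j.2.isLt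
      simp only [e, Finsupp.coe_equivFunOnFinite_symm, Matrix.cons_val]
      omega
    omega
  have h1 := congrArg (coeff (e j₀)) hr0
  simp only [r, coeff_sum, coeff_monomial, coeff_zero] at h1
  rw [Finset.sum_eq_single j₀] at h1
  · simpa using h1
  · intro j hj hne
    rw [if_neg]
    intro he
    apply hne
    have h2 := DFunLike.congr_fun he 0
    have h3 := DFunLike.congr_fun he 2
    simp only [e, Finsupp.coe_equivFunOnFinite_symm, Matrix.cons_val, Matrix.cons_val_zero] at h2 h3
    have := hM j hj
    have := hM j₀ hj₀
    exact Prod.ext (by omega) (Fin.ext h3)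
  · intro h; exact absurd hj₀ h

lemma range_dehom_one (hX : emb F L (X 1) ≠ 0) : (dehom F L 1).range =
    Algebra.adjoin K {emb F L (X 0) / emb F L (X 1), emb F L (X 2) / emb F L (X 1)} := by
  rw [dehom, ← Algebra.adjoin_range_eq_range_aeval]
  apply le_antisymm
  · refine Algebra.adjoin_le ?_
    rintro _ ⟨j, rfl⟩
    fin_cases j
    · exact Algebra.subset_adjoin (by simp)
    · simp only [Fin.mk_one, Fin.isValue, div_self hX]; exact one_mem _
    · exact Algebra.subset_adjoin (by simp)
  · refine Algebra.adjoin_mono ?_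
    rintro a (rfl | rfl)
    · exact ⟨0, rfl⟩
    · exact ⟨2, rfl⟩

lemma range_dehom_zero (hX : emb F L (X 0) ≠ 0) (hX1 : emb F L (X 1) ≠ 0) : (dehom F L 0).range =
    Algebra.adjoin K {(emb F L (X 0) / emb F L (X 1))⁻¹,
      (emb F L (X 0) / emb F L (X 1))⁻¹ * (emb F L (X 2) / emb F L (X 1))} := by
  have h1 : (emb F L (X 0) / emb F L (X 1))⁻¹ = emb F L (X 1) / emb F L (X 0) := inv_div _ _
  have h2 : (emb F L (X 0) / emb F L (X 1))⁻¹ * (emb F L (X 2) / emb F L (X 1)) =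
      emb F L (X 2) / emb F L (X 0) := by field_simp
  rw [h1, ← h1, h2, h1, dehom, ← Algebra.adjoin_range_eq_range_aeval]
  apply le_antisymm
  · refine Algebra.adjoin_le ?_
    rintro _ ⟨j, rfl⟩
    fin_cases j
    · simp only [Fin.zero_eta, Fin.isValue, div_self hX]; exact one_mem _
    · exact Algebra.subset_adjoin (by simp)
    · exact Algebra.subset_adjoin (by simp)
  · refine Algebra.adjoin_mono ?_
    rintro a (rfl | rfl)
    · exact ⟨1, rfl⟩
    · exact ⟨2, rfl⟩

/-- The degree-zero functions `x/y` and `z/y` present the plane cubic as a `CubicField`. The function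
field is realized inside the fraction field `L` of the homogeneous coordinate ring; `L` is larger, but
the two charts and the monomial basis only involve degree-zero elements. -/
lemma exists_cubicField (hF : F.IsHomogeneous 3) (hz : eval (Pi.single 2 1) F ≠ 0)
    [IsDomain (MvPolynomial (Fin 3) K ⧸ Ideal.span {F})]
    [IsIntegrallyClosed (MvPolynomial (Fin 3) K ⧸ Ideal.span {F})]
    [IsFractionRing (MvPolynomial (Fin 3) K ⧸ Ideal.span {F}) L] :
    ∃ Q : CubicField K L, Q.ξ = emb F L (X 0) / emb F L (X 1) ∧ Q.ζ = emb F L (X 2) / emb F L (X 1) ∧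
      ∃ u, dehom F L 1 (pderiv 2 F) = u * (3 * Q.ζ ^ 2 + 2 * Q.c₁ * Q.ζ + Q.c₂) := by
  have hF0 : F ≠ 0 := by rintro rfl; simp at hz
  have hx := emb_X_ne_zero L hF hF0 0
  have hy := emb_X_ne_zero L hF hF0 1
  obtain ⟨a₀, a₁, a₂, a₃, a₄, a₅, a₆, a₇, a₈, a₉, hFe⟩ := cubic_expansion hF
  have ha₀ : a₀ ≠ 0 := by
    intro h
    apply hz
    rw [hFe]
    simp [h]
  have hD := dehom_F L hF hy
  have hintg := chart_integrallyClosed L hF hF0 1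
  have hintg' := chart_integrallyClosed L hF hF0 0
  rw [range_dehom_one L hy] at hintg
  rw [range_dehom_zero L hx hy] at hintg'
  have hD := (congrArg (dehom F L 1) hFe).symm.trans hD
  have hD' := (congrArg (fun g => dehom F L 1 (pderiv 2 g)) hFe)
  have hC : ∀ a : K, dehom F L 1 (C a) = algebraMap K L a := fun a => by
    rw [← MvPolynomial.algebraMap_eq, AlgHom.commutes]
  have ha₀' : algebraMap K L a₀ ≠ 0 := by simpa using ha₀
  refine ⟨⟨_, _, div_ne_zero hx hy, ![1, a₁ / a₀, a₂ / a₀, a₃ / a₀, a₄ / a₀, a₅ / a₀, a₆ / a₀,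
    a₇ / a₀, a₈ / a₀, a₉ / a₀], ?_, chart_linearIndependent L hF hz, hintg, hintg'⟩, rfl, rfl,
    algebraMap K L a₀, ?_⟩
  · simp only [map_add, map_mul, map_pow, hC, dehom_X, div_self hy] at hD
    simp only [Matrix.cons_val, Matrix.cons_val_one, Algebra.smul_def, map_div₀]
    generalize emb F L (X 0) / emb F L (X 1) = ξ at hD ⊢
    generalize emb F L (X 2) / emb F L (X 1) = ζ at hD ⊢
    field_simp
    linear_combination hD
  · refine hD'.trans ?_
    have h02 : pderiv 2 (X 0 : MvPolynomial (Fin 3) K) = 0 := pderiv_X_of_ne (by decide)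
    have h12 : pderiv 2 (X 1 : MvPolynomial (Fin 3) K) = 0 := pderiv_X_of_ne (by decide)
    simp only [CubicField.c₁, CubicField.c₂, Derivation.leibniz, Derivation.leibniz_pow, pderiv_C,
      pderiv_X_self, h02, h12, smul_zero, map_add, map_mul, map_pow, hC, dehom_X, div_self hy,
      smul_eq_mul, Matrix.cons_val, Matrix.cons_val_one, map_nsmul, map_one, map_zero, nsmul_eq_mul,
      map_natCast]
    simp only [Algebra.smul_def, map_div₀]
    push_cast
    field_simp
    ring

end

end

/-! ### The Hasse invariant -/

namespace Level

variable {K : Type} [Field K] {k : Type} [Field k] [Algebra K k] (E : Level K k)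

/-- Frobenius acts on the one-dimensional first cohomology of the structure sheaf by a scalar, the
Hasse invariant. -/
lemma ρ_pow {p : ℕ} [Fact p.Prime] [CharP k p] {v₀ : k} (hN : v₀ ∈ E.N) (h₀ : E.ρ v₀ = 1) (v : k)
    (hv : v ∈ E.N) : E.ρ (v ^ p) = E.ρ (v₀ ^ p) * E.ρ v ^ p := by
  obtain ⟨a, ha, b, hb, h⟩ := E.exists_split_of_ρ_eq_zero (v - E.ρ v • v₀)
    (E.N.sub_mem hv (E.N.smul_mem hN _)) (by rw [map_sub, map_smul, h₀]; simp)
  have h1 : v = a + b + E.ρ v • v₀ := by rw [← h]; ring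
  have h2 : v ^ p = a ^ p + b ^ p + E.ρ v ^ p • v₀ ^ p := by
    conv_lhs => rw [h1]
    rw [add_pow_char, add_pow_char, smul_pow]
  rw [h2, map_add, map_add, E.ρ_A _ (E.A.pow_mem ha p), E.ρ_A' _ (E.A'.pow_mem hb p), map_smul,
    smul_eq_mul]
  ring

/-- Replace the residue functional by a nonzero multiple. -/
def rescale (c : K) (hc : c ≠ 0) : Level K k where
  ξ := E.ξ
  ξ_ne := E.ξ_ne
  A := E.A
  A' := E.A'
  ξ_mem := E.ξ_mem
  ξ_inv_mem := E.ξ_inv_mem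
  int := E.int
  int' := E.int'
  fg := E.fg
  loc := E.loc
  loc' := E.loc'
  const := E.const
  fd := E.fd
  ρ := c • E.ρ
  ρ_A := fun a ha => by simp [E.ρ_A a ha]
  ρ_A' := fun a ha => by simp [E.ρ_A' a ha]
  ρ_one := by
    obtain ⟨v, hv, h1⟩ := E.ρ_one
    refine ⟨c⁻¹ • v, E.N.smul_mem hv _, ?_⟩
    simp [h1, hc]
  repr := fun ν m h h' => by
    obtain ⟨g, hg, hν⟩ := E.repr ν m h h'
    refine ⟨c⁻¹ • g, E.N.smul_mem hg _, fun w hw => ?_⟩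
    rw [hν w hw]
    simp [hc]
  dual := fun h hN h0 => E.dual h hN fun a ha => by simpa [hc] using h0 a ha
  dual' := fun h hN h0 => E.dual' h hN fun a ha => by simpa [hc] using h0 a ha

/-- Either Frobenius kills the first cohomology of the structure sheaf, or the residue functional can
be normalized so that it commutes with Frobenius. -/
lemma supersingular_or_ordinary (p : ℕ) [Fact p.Prime] [CharP k p] [IsAlgClosed K] :
    (∀ v ∈ E.N, E.ρ (v ^ p) = 0) ∨ ∃ E₁ : Level K k, E₁.ξ = E.ξ ∧ E₁.A = E.A ∧ E₁.A' = E.A' ∧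
      E₁.Ordinary p := by
  obtain ⟨v₀, hN, h₀⟩ := E.ρ_one
  have hp := (Fact.out : p.Prime)
  by_cases hκ : E.ρ (v₀ ^ p) = 0
  · left
    intro v hv
    rw [E.ρ_pow hN h₀ v hv, hκ, zero_mul]
  · right
    obtain ⟨c, hc⟩ := IsAlgClosed.exists_pow_nat_eq (E.ρ (v₀ ^ p)) (n := p - 1)
      (by have := hp.two_le; omega)
    have hc0 : c ≠ 0 := by
      rintro rfl
      have := hp.two_le
      rw [zero_pow (by omega)] at hc
      exact hκ hc.symm
    refine ⟨E.rescale c hc0, rfl, rfl, rfl, fun v hv => ?_⟩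
    change c • E.ρ (v ^ p) = (c • E.ρ v) ^ p
    rw [E.ρ_pow hN h₀ v hv, ← hc, smul_eq_mul, smul_eq_mul, mul_pow, ← mul_assoc,
      mul_pow_sub_one hp.ne_zero]

end Level

open Polynomial in
lemma CubicField.isDedekindDomain {K : Type} [Field K] {k : Type} [Field k] [Algebra K k]
    (Q : CubicField K k) : IsDedekindDomain Q.level.A := by
  have hN : IsNoetherianRing Q.level.A := Q.level.isNoetherianRing
  letI : Algebra K[X] k := (aeval Q.ξ : K[X] →ₐ[K] k).toAlgebra
  have hmap : ∀ g : K[X], algebraMap K[X] k g = aeval Q.ξ g := fun g => rfl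
  haveI : IsScalarTower K K[X] k := IsScalarTower.of_algebraMap_eq fun c => by
    rw [hmap, Polynomial.algebraMap_eq, aeval_C]
  have hintg : Q.level.A ≤ (integralClosure K[X] k).restrictScalars K := by
    change Algebra.adjoin K {Q.ξ, Q.ζ} ≤ _
    rw [Algebra.adjoin_le_iff]
    have hξ : Q.ξ = algebraMap K[X] k X := by rw [hmap, aeval_X]
    rintro _ (rfl | rfl)
    · change IsIntegral K[X] Q.ξ
      rw [hξ]; exact isIntegral_algebraMap
    · change IsIntegral K[X] Q.ζ
      refine ⟨X ^ 3 + (C (C (Q.a 1) * X + C (Q.a 2)) * X ^ 2 +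
        C (C (Q.a 3) * X ^ 2 + C (Q.a 4) * X + C (Q.a 5)) * X +
        C (C (Q.a 6) * X ^ 3 + C (Q.a 7) * X ^ 2 + C (Q.a 8) * X + C (Q.a 9))), ?_, ?_⟩
      · monicity!
      · have := Q.rel
        simp only [Algebra.smul_def, mul_one] at this
        simp only [eval₂_add, eval₂_mul, eval₂_pow, eval₂_X, eval₂_C, hmap, map_add, map_mul,
          map_pow, aeval_X, aeval_C]
        linear_combination this
  letI : Algebra K[X] Q.level.A :=
    (aeval (⟨Q.ξ, Q.level.ξ_mem⟩ : Q.level.A) : K[X] →ₐ[K] Q.level.A).toAlgebra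
  have hcoe : ∀ g : K[X], ((algebraMap K[X] Q.level.A g : Q.level.A) : k) = algebraMap K[X] k g := by
    intro g
    exact (aeval_algHom_apply Q.level.A.val (⟨Q.ξ, Q.level.ξ_mem⟩ : Q.level.A) g).symm
  haveI : IsScalarTower K[X] Q.level.A k := IsScalarTower.of_algebraMap_eq fun g => (hcoe g).symm
  haveI : Algebra.IsIntegral K[X] Q.level.A := ⟨fun a =>
    (isIntegral_algebraMap_iff (A := Q.level.A) (B := k) Subtype.val_injective).mp (hintg a.2)⟩
  have hdim : Ring.DimensionLEOne Q.level.A := by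
    refine ⟨fun {P} hP hPp => ?_⟩
    refine Ideal.isMaximal_of_isIntegral_of_isMaximal_comap (R := K[X]) P ?_
    obtain ⟨a, haP, ha0⟩ := Submodule.exists_mem_ne_zero_of_ne_bot hP
    exact IsPrime.to_maximal_ideal (hpi := Ideal.IsPrime.comap _)
      (Ideal.comap_ne_bot_of_integral_mem ha0 haP (Algebra.IsIntegral.isIntegral a))
  haveI : IsIntegrallyClosedIn Q.level.A k :=
    isIntegrallyClosedIn_iff.mpr ⟨Subtype.val_injective, fun {x} hx => ⟨⟨x, Q.level.int x hx⟩, rfl⟩⟩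
  have hic : IsIntegrallyClosed Q.level.A := IsIntegrallyClosed.of_isIntegrallyClosedIn _ k
  exact { hN, hdim, hic with }

/-! ### Functions with vanishing differential -/

open Polynomial IntermediateField in
/-- Over a perfect field, a function on a curve whose differential vanishes is a `p`-th power. The
curve is given by a separable cubic equation for `ζ` over `K(ξ)`, and the differential is detected by
a derivation `D` not killing `ξ`. The point is that `L^p(ξ)` has prime degree `p` over `L^p` and
contains `ζ`. -/
lemma exists_pow_eq_of_derivation {K L : Type} [Field K] [IsAlgClosed K] [Field L] [Algebra K L]
    (p : ℕ) [Fact p.Prime] [CharP L p] (D : Derivation K L L) {ξ ζ c₁ c₂ c₃ : L}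
    (h₁ : c₁ ∈ Algebra.adjoin K {ξ}) (h₂ : c₂ ∈ Algebra.adjoin K {ξ})
    (h₃ : c₃ ∈ Algebra.adjoin K {ξ}) (hrel : ζ ^ 3 + c₁ * ζ ^ 2 + c₂ * ζ + c₃ = 0)
    (hsep : 3 * ζ ^ 2 + 2 * c₁ * ζ + c₂ ≠ 0) (hξ : D ξ ≠ 0) {α : L}
    (hα : α ∈ Algebra.adjoin K {ξ, ζ}) (hDα : D α = 0) : ∃ c, c ^ p = α := by
  have hp := (Fact.out : p.Prime)
  let M : Subfield L := (frobenius L p).fieldRange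
  have hM : ∀ a : L, a ∈ M ↔ ∃ c, c ^ p = a := fun a => by
    simp only [M, RingHom.mem_fieldRange, frobenius_def]
  haveI : CharP M p := (algebraMap M L).charP (algebraMap M L).injective p
  have hDM : ∀ a ∈ M, D a = 0 := by
    intro a ha
    obtain ⟨c, rfl⟩ := (hM a).mp ha
    rw [Derivation.leibniz_pow]
    simp
  have hK : ∀ c : K, algebraMap K L c ∈ M := by
    intro c
    obtain ⟨d, hd⟩ := IsAlgClosed.exists_pow_nat_eq c hp.pos
    exact (hM _).mpr ⟨algebraMap K L d, by rw [← map_pow, hd]⟩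
  have hadj : ∀ (T : IntermediateField M L) (s : Set L), s ⊆ T →
      ∀ a ∈ Algebra.adjoin K s, a ∈ T := by
    intro T s hs a ha
    induction ha using Algebra.adjoin_induction with
    | mem x hx => exact hs hx
    | algebraMap c => exact T.algebraMap_mem ⟨_, hK c⟩
    | add x y _ _ hx hy => exact T.add_mem hx hy
    | mul x y _ _ hx hy => exact T.mul_mem hx hy
  let T : IntermediateField M L := M⟮ξ⟯
  have hξT : ξ ∈ T := mem_adjoin_simple_self M ξ
  have hadjξ := hadj T {ξ} (by simpa using hξT)
  haveI : CharP T p := (algebraMap T L).charP (algebraMap T L).injective p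
  have hζT : ζ ∈ T := by
    let f : T[X] := X ^ 3 + C ⟨c₁, hadjξ _ h₁⟩ * X ^ 2 + C ⟨c₂, hadjξ _ h₂⟩ * X + C ⟨c₃, hadjξ _ h₃⟩
    have hf : aeval ζ f = 0 := by
      simp only [f, map_add, map_mul, map_pow, aeval_X, aeval_C]
      exact hrel
    have hf' : aeval ζ (derivative f) ≠ 0 := by
      simp only [f, derivative_add, derivative_mul, derivative_C, derivative_X_pow, derivative_X,
        map_add, map_mul, map_pow, aeval_X, aeval_C, zero_mul, zero_add, mul_one, map_zero, add_zero]
      intro h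
      apply hsep
      rw [map_natCast, map_natCast] at h
      change _ + c₁ * _ + c₂ = 0 at h
      push_cast at h
      linear_combination h
    have hintg : IsIntegral T ζ := by
      refine ⟨f, ?_, hf⟩
      simp only [f]
      monicity!
    have hs : ζ ∈ separableClosure T L := by
      rw [mem_separableClosure_iff, IsSeparable,
        separable_iff_derivative_ne_zero (minpoly.irreducible hintg)]
      intro h0
      obtain ⟨g, hg⟩ := minpoly.dvd T ζ hf
      apply hf'
      rw [hg, derivative_mul, h0, zero_mul, zero_add, map_mul, minpoly.aeval, zero_mul]
    have hi : ζ ∈ perfectClosure T L := by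
      rw [mem_perfectClosure_iff_pow_mem p]
      refine ⟨1, ⟨ζ ^ p, ?_⟩, by simp⟩
      exact T.algebraMap_mem ⟨ζ ^ p, (hM _).mpr ⟨ζ, rfl⟩⟩
    have hb : ζ ∈ separableClosure T L ⊓ perfectClosure T L := ⟨hs, hi⟩
    rw [separableClosure_inf_perfectClosure, IntermediateField.mem_bot] at hb
    obtain ⟨t, rfl⟩ := hb
    exact t.2
  have hαT : α ∈ T := hadj T {ξ, ζ} (by
    rintro _ (rfl | rfl)
    · exact hξT
    · exact hζT) α hα
  have hξM : ξ ∉ M := fun h => hξ (hDM ξ h)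
  let a : M := ⟨ξ ^ p, (hM _).mpr ⟨ξ, rfl⟩⟩
  have hirr : Irreducible (X ^ p - C a : M[X]) := by
    refine X_pow_sub_C_irreducible_of_prime hp fun b hb => hξM ?_
    have h1 : (b : L) ^ p = ξ ^ p := congrArg Subtype.val hb
    have h2 : (b : L) = ξ := frobenius_inj L p h1
    exact h2 ▸ b.2
  have hroot : aeval ξ (X ^ p - C a : M[X]) = 0 := by
    simp only [map_sub, map_pow, aeval_X, aeval_C]
    exact sub_self _
  have hintξ : IsIntegral M ξ := ⟨_, monic_X_pow_sub_C a hp.ne_zero, hroot⟩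
  have hrank : Module.finrank M T = p := by
    rw [adjoin.finrank hintξ, ← minpoly.eq_of_irreducible_of_monic hirr hroot
      (monic_X_pow_sub_C a hp.ne_zero), natDegree_X_pow_sub_C]
  haveI : FiniteDimensional M T := adjoin.finiteDimensional hintξ
  have hle : M⟮α⟯ ≤ T := by rwa [adjoin_simple_le_iff]
  have hDadj : ∀ x ∈ M⟮α⟯, D x = 0 := by
    intro x hx
    induction hx using adjoin_induction with
    | mem x hx => rw [Set.mem_singleton_iff.mp hx]; exact hDα
    | algebraMap x => exact hDM _ x.2
    | add x y _ _ hx hy => rw [map_add, hx, hy, add_zero]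
    | inv x _ hx => rw [Derivation.leibniz_inv, hx, smul_zero]
    | mul x y _ _ hx hy => rw [Derivation.leibniz, hx, hy, smul_zero, smul_zero, add_zero]
  have hdvd : Module.finrank M M⟮α⟯ ∣ p := hrank ▸ finrank_dvd_of_le_right hle
  rcases (Nat.dvd_prime hp).mp hdvd with h | h
  · rw [IntermediateField.finrank_eq_one_iff, adjoin_simple_eq_bot_iff, IntermediateField.mem_bot] at h
    obtain ⟨t, rfl⟩ := h
    exact (hM _).mp t.2
  · have := IntermediateField.eq_of_le_of_finrank_eq hle (h.trans hrank.symm)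
    exact absurd (hDadj ξ (this ▸ hξT)) hξ

/-- A nonzero differential does not vanish at some point. -/
lemma exists_ev_notMem_sq {K L : Type} [Field K] [IsAlgClosed K] [Field L] [Algebra K L]
    (E : Level K L) (D : Derivation K L L) (hD : ∀ a ∈ E.A, D a ∈ E.A) {α : L} (hα : α ∈ E.A)
    (hDα : D α ≠ 0) : ∃ ev : E.A →ₐ[K] K,
      ⟨α, hα⟩ - algebraMap K E.A (ev ⟨α, hα⟩) ∉ (RingHom.ker ev) ^ 2 := by
  haveI : Algebra.FiniteType K E.A := E.A.fg_iff_finiteType.mp E.fg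
  obtain ⟨ev, hev⟩ := exists_algHom_ne_zero K E.A ⟨D α, hD α hα⟩
    (fun h => hDα (congrArg Subtype.val h))
  refine ⟨ev, fun h => hev ?_⟩
  have key : ∀ x ∈ (RingHom.ker ev) ^ 2, ev ⟨D (x : L), hD _ x.2⟩ = 0 := by
    intro x hx
    rw [pow_two] at hx
    induction hx using Submodule.mul_induction_on' with
    | mem_mul_mem a ha b hb =>
      have h1 : (⟨D ((a * b : E.A) : L), hD _ (a * b).2⟩ : E.A) =
          a * ⟨D (b : L), hD _ b.2⟩ + b * ⟨D (a : L), hD _ a.2⟩ :=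
        Subtype.ext (by simp [Derivation.leibniz])
      rw [h1, map_add, map_mul, map_mul, (RingHom.mem_ker).mp ha, (RingHom.mem_ker).mp hb]
      simp
    | add a _ b _ ha hb =>
      have h1 : (⟨D ((a + b : E.A) : L), hD _ (a + b).2⟩ : E.A) =
          ⟨D (a : L), hD _ a.2⟩ + ⟨D (b : L), hD _ b.2⟩ := Subtype.ext (by simp)
      rw [h1, map_add, ha, hb, add_zero]
  have h1 := key _ h
  convert h1 using 3
  simp

/-! ### The invariant derivation -/

section

open MvPolynomial

section

variable {K : Type} [Field K] {F : MvPolynomial (Fin 3) K}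
  (L : Type) [Field L] [Algebra (MvPolynomial (Fin 3) K ⧸ Ideal.span {F}) L] [Algebra K L]
  [IsScalarTower K (MvPolynomial (Fin 3) K ⧸ Ideal.span {F}) L]

/-- The derivation dual to the invariant differential, obtained by lifting a homomorphism to the dual
numbers over the function field. -/
lemma exists_derivation (hF : F.IsHomogeneous 3) (hF0 : F ≠ 0)
    [IsDomain (MvPolynomial (Fin 3) K ⧸ Ideal.span {F})]
    [IsFractionRing (MvPolynomial (Fin 3) K ⧸ Ideal.span {F}) L] :
    ∃ D : Derivation K L L, D (emb F L (X 0) / emb F L (X 1)) = dehom F L 1 (pderiv 2 F) ∧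
      D (emb F L (X 2) / emb F L (X 1)) = -dehom F L 1 (pderiv 0 F) := by
  have hy := emb_X_ne_zero L hF hF0 1
  let w : Fin 3 → L := ![emb F L (pderiv 2 F) / emb F L (X 1), 0,
    -(emb F L (pderiv 0 F) / emb F L (X 1))]
  let Ψ : MvPolynomial (Fin 3) K →ₐ[K] TrivSqZeroExt L L :=
    aeval fun i => TrivSqZeroExt.inl (emb F L (X i)) + TrivSqZeroExt.inr (w i)
  have hΨX : ∀ i, Ψ (X i) = TrivSqZeroExt.inl (emb F L (X i)) + TrivSqZeroExt.inr (w i) :=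
    fun i => aeval_X _ i
  have hΨ1 : ∀ g, (Ψ g).fst = emb F L g := by
    intro g
    have : (TrivSqZeroExt.fstHom K L L).comp Ψ = emb F L := by
      apply MvPolynomial.algHom_ext
      intro i
      simp [hΨX]
    exact DFunLike.congr_fun this g
  have hΨ2 : ∀ g, (Ψ g).snd = ∑ i, emb F L (pderiv i g) * w i := by
    intro g
    induction g using MvPolynomial.induction_on with
    | C a =>
      rw [show (C a : MvPolynomial (Fin 3) K) = algebraMap K _ a from rfl, AlgHom.commutes]
      simp [TrivSqZeroExt.algebraMap_eq_inl']
    | add f g hf hg =>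
      simp only [map_add, TrivSqZeroExt.snd_add, hf, hg, add_mul, Finset.sum_add_distrib]
    | mul_X f j hf =>
      rw [map_mul, TrivSqZeroExt.snd_mul, hΨ1, hf, hΨ1, hΨX]
      simp only [Derivation.leibniz, pderiv_X, smul_eq_mul, map_add, map_mul, add_mul,
        Finset.sum_add_distrib, TrivSqZeroExt.snd_add, TrivSqZeroExt.snd_inl,
        TrivSqZeroExt.snd_inr, zero_add, op_smul_eq_smul, Finset.mul_sum]
      congr 1
      · rw [Finset.sum_eq_single j]
        · simp
        · intro b _ hb; simp [Pi.single_apply, hb.symm]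
        · simp
      · refine Finset.sum_congr rfl fun i _ => by ring
  have hΨF : Ψ F = 0 := by
    apply TrivSqZeroExt.ext
    · rw [hΨ1, emb_apply, Ideal.Quotient.eq_zero_iff_mem.mpr (Ideal.mem_span_singleton_self F),
        map_zero, TrivSqZeroExt.fst_zero]
    · rw [hΨ2, Fin.sum_univ_three, TrivSqZeroExt.snd_zero]
      simp [w]
      ring
  have hker : ∀ a ∈ Ideal.span {F}, Ψ a = 0 := by
    intro a ha
    obtain ⟨b, rfl⟩ := Ideal.mem_span_singleton.mp ha
    rw [map_mul, hΨF, zero_mul]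
  let ψ : (MvPolynomial (Fin 3) K ⧸ Ideal.span {F}) →ₐ[K] TrivSqZeroExt L L :=
    Ideal.Quotient.liftₐ (Ideal.span {F}) Ψ hker
  have hψ : ∀ g, ψ (Ideal.Quotient.mk _ g) = Ψ g := fun g => rfl
  have hψ1 : ∀ r, (ψ r).fst = algebraMap _ L r := by
    intro r
    obtain ⟨g, rfl⟩ := Ideal.Quotient.mk_surjective r
    rw [hψ, hΨ1, emb_apply]
  have hunit : ∀ s : nonZeroDivisors (MvPolynomial (Fin 3) K ⧸ Ideal.span {F}), IsUnit (ψ s) := by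
    intro s
    rw [TrivSqZeroExt.isUnit_iff_isUnit_fst, hψ1]
    exact IsLocalization.map_units L s
  let Θ : L →ₐ[K] TrivSqZeroExt L L := IsLocalization.liftAlgHom
    (M := nonZeroDivisors (MvPolynomial (Fin 3) K ⧸ Ideal.span {F})) (f := ψ) hunit
  have hΘ : ∀ r, Θ (algebraMap _ L r) = ψ r := fun r => IsLocalization.lift_eq hunit r
  have hΘ1 : ∀ a, (Θ a).fst = a := by
    intro a
    have : ((TrivSqZeroExt.fstHom K L L).comp Θ : L →+* L) = RingHom.id L := by
      refine IsLocalization.ringHom_ext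
        (nonZeroDivisors (MvPolynomial (Fin 3) K ⧸ Ideal.span {F})) ?_
      ext r
      · simp [hΘ, hψ1]
      · simp [hΘ, hψ1]
    exact DFunLike.congr_fun this a
  let D : Derivation K L L := Derivation.mk' (((TrivSqZeroExt.sndHom L L).restrictScalars K).comp Θ.toLinearMap) (by
    intro a b
    simp only [LinearMap.comp_apply, AlgHom.toLinearMap_apply, map_mul, LinearMap.coe_restrictScalars,
      TrivSqZeroExt.sndHom_apply, TrivSqZeroExt.snd_mul, hΘ1, op_smul_eq_smul])
  have hDX : ∀ i, D (emb F L (X i)) = w i := by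
    intro i
    change (Θ (emb F L (X i))).snd = w i
    rw [emb_apply, hΘ, hψ, hΨX]
    simp
  have h0 := hDX 0
  have h1 := hDX 1
  have h2 := hDX 2
  have hx2 := emb_eq F L hy (show (pderiv 2 F).IsHomogeneous 2 from hF.pderiv)
  have hx0 := emb_eq F L hy (show (pderiv 0 F).IsHomogeneous 2 from hF.pderiv)
  simp only [w, Matrix.cons_val_zero, Matrix.cons_val_one, Matrix.cons_val] at h0 h1 h2
  refine ⟨D, ?_, ?_⟩
  · rw [Derivation.leibniz_div, h0, h1, hx2]
    simp only [smul_eq_mul, mul_zero, sub_zero, zpow_neg, zpow_ofNat]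
    field_simp
  · rw [Derivation.leibniz_div, h2, h1, hx0]
    simp only [smul_eq_mul, mul_zero, sub_zero, zpow_neg, zpow_ofNat]
    field_simp

end

end

/-! ### Tight closure relations on plane cubics -/

namespace CubicField

variable {K : Type} [Field K] {k : Type} [Field k] [Algebra K k] (Q : CubicField K k)

lemma c_mem_adjoin : Q.c₁ ∈ Algebra.adjoin K {Q.ξ} ∧ Q.c₂ ∈ Algebra.adjoin K {Q.ξ} ∧
    Q.c₃ ∈ Algebra.adjoin K {Q.ξ} := by
  have h : Submodule.span K (Set.range fun m : ℕ => Q.ξ ^ m) ≤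
      (Algebra.adjoin K {Q.ξ}).toSubmodule := by
    rw [Submodule.span_le]
    rintro _ ⟨m, rfl⟩
    exact (Algebra.adjoin K {Q.ξ}).pow_mem (Algebra.subset_adjoin (Set.mem_singleton _)) m
  exact ⟨h Q.c_mem.1, h Q.c_mem.2.1, h Q.c_mem.2.2⟩

/-- In the supersingular case the first-chart part of the `p`-th power of the generating cohomology
class has nonvanishing differential, for otherwise the class itself would be trivial. -/
lemma exists_supersingular_data {p : ℕ} [Fact p.Prime] [CharP K p] [IsAlgClosed K]
    (D : Derivation K k k) (hξ : D Q.ξ ≠ 0) (hDA : ∀ a ∈ Q.level.A, D a ∈ Q.level.A)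
    (hsep : 3 * Q.ζ ^ 2 + 2 * Q.c₁ * Q.ζ + Q.c₂ ≠ 0)
    (hss : ∀ v ∈ Q.level.N, Q.level.ρ (v ^ p) = 0) :
    ∃ v₀ ∈ Q.level.N, Q.level.ρ v₀ = 1 ∧ ∃ (α : k) (hα : α ∈ Q.level.A), ∃ α' ∈ Q.level.A',
      v₀ ^ p = α + α' ∧ ∃ ev : Q.level.A →ₐ[K] K,
        (⟨α, hα⟩ : Q.level.A) - algebraMap K Q.level.A (ev ⟨α, hα⟩) ∉ (RingHom.ker ev) ^ 2 := by
  haveI : CharP k p := charP_of_injective_algebraMap (algebraMap K k).injective p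
  have hp := (Fact.out : p.Prime)
  obtain ⟨v₀, hN, h₀⟩ := Q.level.ρ_one
  obtain ⟨α, hα, α', hα', h⟩ := Q.level.exists_split_of_ρ_eq_zero (v₀ ^ p)
    (Q.level.N.pow_mem hN p) (hss v₀ hN)
  refine ⟨v₀, hN, h₀, α, hα, α', hα', h, exists_ev_notMem_sq Q.level D hDA hα fun hDα => ?_⟩
  obtain ⟨c, rfl⟩ := exists_pow_eq_of_derivation p D Q.c_mem_adjoin.1 Q.c_mem_adjoin.2.1
    Q.c_mem_adjoin.2.2 (by rw [Q.rel']; ring) hsep hξ hα hDα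
  have hc : c ∈ Q.level.A := by
    refine Q.level.int c (IsIntegral.of_pow hp.pos ?_)
    exact isIntegral_algebraMap (R := Q.level.A) (A := k) (x := ⟨c ^ p, hα⟩)
  have hc' : v₀ - c ∈ Q.level.A' := by
    refine Q.level.int' _ (IsIntegral.of_pow hp.pos ?_)
    rw [sub_pow_char, h, add_sub_cancel_left]
    exact isIntegral_algebraMap (R := Q.level.A') (A := k) (x := ⟨α', hα'⟩)
  have h1 := Q.level.ρ_A' _ hc'
  rw [map_sub, h₀, Q.level.ρ_A _ hc, sub_zero] at h1
  exact one_ne_zero h1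

/-- Tight closure relations on a smooth plane cubic become honest relations after a finite
covering and a Frobenius pull-back. -/
theorem exists_ext_pow_mem_W {p : ℕ} [Fact p.Prime] [CharP K p] [IsAlgClosed K]
    (D : Derivation K k k) (hξ : D Q.ξ ≠ 0) (hDA : ∀ a ∈ Q.level.A, D a ∈ Q.level.A)
    (hsep : 3 * Q.ζ ^ 2 + 2 * Q.c₁ * Q.ζ + Q.c₂ ≠ 0) {r : ℕ} (δ : Fin r → ℤ) (n : ℕ)
    (G : Fin r → k) (hG : ∀ i, G i ∈ Q.level.S (δ i)) (Φ : ℕ → k) (hΦ : ∀ d : ℕ, Φ d ∈ Q.level.S d)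
    (hT : ∀ d : ℕ, Q.level.Tight p d δ G (Φ d)) :
    ∃ (k' : Type) (_ : Field k') (_ : Algebra K k') (E' : Level K k') (f : k →ₐ[K] k') (e : ℕ),
      Level.Ext Q.level E' f ∧ ∀ d < n, f (Φ d) ^ p ^ e ∈
        E'.W ((p ^ e : ℕ) * d) (fun i => (p ^ e : ℕ) * δ i) (fun i => f (G i) ^ p ^ e) := by
  haveI : CharP k p := charP_of_injective_algebraMap (algebraMap K k).injective p
  rcases Q.level.supersingular_or_ordinary p with hss | ⟨E₁, h1, h2, h3, hord⟩
  · obtain ⟨v₀, hN, h₀, α, hα, α', hα', h, ev, hev⟩ :=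
      Q.exists_supersingular_data D hξ hDA hsep hss
    have key := fun d : ℕ => Q.level.exists_pow_mem_W Q.isDedekindDomain hss hN h₀ hα hα' h ev hev
      (r + 1) d δ G (Φ d) hG (hΦ d) (hT d) 0 (by omega) Fin.elim0 Fin.elim0
      (fun l => l.elim0) (fun l => l.elim0) linearIndependent_empty_type
    choose e he using key
    have hmono : ∀ (d e₁ j : ℕ), (Φ d) ^ p ^ e₁ ∈ Q.level.W ((p ^ e₁ : ℕ) * d)
        (fun i => (p ^ e₁ : ℕ) * δ i) (fun i => G i ^ p ^ e₁) → (Φ d) ^ p ^ (e₁ + j) ∈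
        Q.level.W ((p ^ (e₁ + j) : ℕ) * d) (fun i => (p ^ (e₁ + j) : ℕ) * δ i)
        (fun i => G i ^ p ^ (e₁ + j)) := by
      intro d e₁ j h
      induction j with
      | zero => exact h
      | succ j ih =>
        have h := Q.level.W_pow (p := p) ih
        have h1 : ∀ a : k, (a ^ p ^ (e₁ + j)) ^ p = a ^ p ^ (e₁ + (j + 1)) := fun a => by
          rw [← pow_mul, ← pow_succ, add_assoc]
        have h2 : ∀ a : ℤ, (p : ℤ) * ((p ^ (e₁ + j) : ℕ) * a) = (p ^ (e₁ + (j + 1)) : ℕ) * a :=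
          fun a => by push_cast; ring
        simp only [h1, h2] at h
        exact h
    refine ⟨k, inferInstance, inferInstance, Q.level, AlgHom.id K k, (Finset.range n).sup e,
      Level.Ext.refl _, fun d hd => ?_⟩
    have hle : e d ≤ (Finset.range n).sup e := Finset.le_sup (Finset.mem_range.mpr hd)
    have := hmono d (e d) ((Finset.range n).sup e - e d) (he d)
    rw [Nat.add_sub_cancel' hle] at this
    exact this
  · have hS : ∀ m, E₁.S m = Q.level.S m := by
      intro m; ext a; rw [Level.mem_S, Level.mem_S, h1, h2, h3]
    obtain ⟨k', _, _, E', f, -, hf, hW⟩ := Level.exists_mem_W_list (p := p) δ n k E₁ hord G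
      (fun i => by rw [hS]; exact hG i) Φ (fun d => by rw [hS]; exact hΦ d) (fun d => by
        obtain ⟨n, hn⟩ := hT d
        refine ⟨n, fun e => ?_⟩
        obtain ⟨s, s', hs, hs', h4, h5⟩ := hn e
        exact ⟨s, s', fun i => by rw [hS]; exact hs i, fun i => by rw [hS]; exact hs' i,
          by rw [h1]; exact h4, h5⟩)
    refine ⟨k', inferInstance, inferInstance, E', f, 0, ⟨?_, ?_, ?_⟩, fun d hd => ?_⟩
    · rw [← h1]; exact hf.ξ
    · intro a ha; exact hf.A a (h2 ▸ ha)
    · intro a ha; exact hf.A' a (h3 ▸ ha)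
    · simpa using hW d hd

end CubicField

/-! ### Section rings -/

namespace Level

variable {K : Type} [Field K] {k : Type} [Field k] [Algebra K k] (E : Level K k)

lemma one_mem_S {n : ℤ} (hn : 0 ≤ n) : (1 : k) ∈ E.S n := by
  rw [mem_S]
  exact ⟨E.A.one_mem, by rw [mul_one]; exact E.zpow_mem_A' _ (by omega)⟩

lemma ξ_mem_S : E.ξ ∈ E.S 1 := by
  rw [mem_S]
  refine ⟨E.ξ_mem, ?_⟩
  rw [zpow_neg_one, inv_mul_cancel₀ E.ξ_ne]
  exact E.A'.one_mem

open Polynomial in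
/-- The ring of sections of all powers of the line bundle of the divisor at infinity of `ξ`, realized
inside a polynomial ring over the function field. -/
def sectionRing : Subalgebra K k[X] where
  carrier := {w | ∀ m : ℕ, w.coeff m ∈ E.S m}
  mul_mem' := by
    intro a b ha hb m
    rw [coeff_mul]
    refine (E.S m).sum_mem fun x hx => ?_
    have h := E.S_mul (ha x.1) (hb x.2)
    rwa [← Nat.cast_add, Finset.HasAntidiagonal.mem_antidiagonal.mp hx] at h
  add_mem' := by
    intro a b ha hb m
    rw [coeff_add]
    exact (E.S m).add_mem (ha m) (hb m)
  algebraMap_mem' := by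
    intro c m
    rw [Polynomial.algebraMap_apply, coeff_C]
    split_ifs with h
    · rw [Algebra.algebraMap_eq_smul_one]
      exact (E.S m).smul_mem c (E.one_mem_S (by omega))
    · exact (E.S m).zero_mem

open Polynomial in
lemma mem_sectionRing {w : k[X]} : w ∈ E.sectionRing ↔ ∀ m : ℕ, w.coeff m ∈ E.S m := Iff.rfl

open Polynomial in
lemma monomial_mem {m : ℕ} {s : k} (hs : s ∈ E.S m) : monomial m s ∈ E.sectionRing := by
  intro n
  rw [coeff_monomial]
  split_ifs with h
  · rw [← h]; exact hs
  · exact (E.S n).zero_mem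

open Polynomial in
/-- The inclusion of the sections of degree `m` as homogeneous elements. -/
noncomputable def mon (m : ℕ) : E.S m →ₗ[K] E.sectionRing where
  toFun s := ⟨monomial m (s : k), E.monomial_mem s.2⟩
  map_add' s t := Subtype.ext (by simp)
  map_smul' c s := Subtype.ext (smul_monomial c m (s : k)).symm

open Polynomial in
lemma coe_mon {m : ℕ} (s : E.S m) : ((E.mon m s : E.sectionRing) : k[X]) = monomial m (s : k) := rfl

open Polynomial in
/-- The section ring is finite over every ring whose image contains the constants and the two
sections defining the finite map to the projective line. -/
lemma finite_sectionRing {R : Type} [CommRing R] [Algebra K R] (θ : R →ₐ[K] E.sectionRing) (x y : R)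
    (hx : ((θ x : E.sectionRing) : k[X]) = monomial 1 E.ξ)
    (hy : ((θ y : E.sectionRing) : k[X]) = monomial 1 1) :
    (θ : R →+* E.sectionRing).Finite := by
  letI : Algebra R E.sectionRing := (θ : R →+* E.sectionRing).toAlgebra
  haveI : IsScalarTower K R E.sectionRing := IsScalarTower.of_algebraMap_eq fun c =>
    (θ.commutes c).symm
  have hsmul : ∀ (a : R) (w : E.sectionRing), a • w = θ a * w := fun a w => rfl
  change Module.Finite R E.sectionRing
  have hfg : (LinearMap.range (E.mon 0) ⊔ LinearMap.range (E.mon 1) ⊔ LinearMap.range (E.mon 2)).FG := by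
    have : ∀ m : ℕ, (LinearMap.range (E.mon m)).FG := by
      intro m
      haveI : FiniteDimensional K (E.S m) := E.fd m
      exact Module.Finite.iff_fg.mp inferInstance
    exact ((this 0).sup (this 1)).sup (this 2)
  obtain ⟨t, ht⟩ := hfg
  refine ⟨⟨t, ?_⟩⟩
  have h2 : ∀ m : ℕ, m ≤ 2 → ∀ s : E.S m, E.mon m s ∈ Submodule.span R (t : Set E.sectionRing) := by
    intro m hm s
    apply Submodule.span_subset_span K R
    rw [SetLike.mem_coe, ht]
    have := LinearMap.mem_range_self (E.mon m) s
    interval_cases m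
    · exact Submodule.mem_sup_left (Submodule.mem_sup_left this)
    · exact Submodule.mem_sup_left (Submodule.mem_sup_right this)
    · exact Submodule.mem_sup_right this
  have hall : ∀ m : ℕ, ∀ s : E.S m, E.mon m s ∈ Submodule.span R (t : Set E.sectionRing) := by
    intro m
    induction m with
    | zero => exact h2 0 (by omega)
    | succ m ih =>
      intro s
      by_cases hm : m + 1 ≤ 2
      · exact h2 _ hm s
      obtain ⟨s₀, hs₀, s₁, hs₁, h⟩ := E.S_succ m (by omega) s (by exact_mod_cast s.2)
      have : E.mon (m + 1) s = y • E.mon m ⟨s₀, hs₀⟩ + x • E.mon m ⟨s₁, hs₁⟩ := by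
        apply Subtype.ext
        rw [hsmul, hsmul]
        change monomial (m + 1) (s : k) = (θ y : k[X]) * monomial m s₀ + (θ x : k[X]) * monomial m s₁
        rw [hx, hy, monomial_mul_monomial, monomial_mul_monomial, ← map_add, h, one_mul, add_comm 1 m]
      rw [this]
      exact Submodule.add_mem _ (Submodule.smul_mem _ _ (ih _)) (Submodule.smul_mem _ _ (ih _))
  rw [eq_top_iff]
  intro w _
  have hw : w = ∑ m ∈ (w : k[X]).support, E.mon m ⟨(w : k[X]).coeff m, w.2 m⟩ := by
    apply Subtype.ext
    rw [AddSubmonoidClass.coe_finset_sum]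
    exact (w : k[X]).as_sum_support
  rw [hw]
  exact Submodule.sum_mem _ fun m _ => hall m _

end Level

/-- Frobenius is finite on algebras of finite type over a perfect field. -/
lemma iterateFrobenius_finite {K R : Type} [Field K] [IsAlgClosed K] (p : ℕ) [Fact p.Prime]
    [CharP K p] [CommRing R] [IsDomain R] [Algebra K R] [CharP R p] [Algebra.FiniteType K R] (e : ℕ) :
    (iterateFrobenius R p e).Finite := by
  have hp := (Fact.out : p.Prime)
  rw [RingHom.finite_iff_isIntegral_and_finiteType]
  constructor
  · intro a
    refine ⟨Polynomial.X ^ p ^ e - Polynomial.C a,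
      Polynomial.monic_X_pow_sub_C a (pow_ne_zero _ hp.ne_zero), ?_⟩
    simp [iterateFrobenius_def]
  · apply RingHom.FiniteType.of_comp_finiteType (f := algebraMap K R)
    have : (iterateFrobenius R p e).comp (algebraMap K R) =
        (algebraMap K R).comp (iterateFrobenius K p e) := by
      ext c; simp [iterateFrobenius_def]
    rw [this]
    refine RingHom.FiniteType.comp ?_ (RingHom.FiniteType.of_surjective _ fun c => ?_)
    · exact RingHom.finiteType_algebraMap.mpr inferInstance
    · obtain ⟨d, hd⟩ := IsAlgClosed.exists_pow_nat_eq c (pow_pos hp.pos e)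
      exact ⟨d, by rw [iterateFrobenius_def, hd]⟩

/-! ### From cubic rings to curves -/

section

open MvPolynomial

section

variable {K : Type} [Field K] {F : MvPolynomial (Fin 3) K}
  (L : Type) [Field L] [Algebra (MvPolynomial (Fin 3) K ⧸ Ideal.span {F}) L] [Algebra K L]
  [IsScalarTower K (MvPolynomial (Fin 3) K ⧸ Ideal.span {F}) L]
  [IsDomain (MvPolynomial (Fin 3) K ⧸ Ideal.span {F})]
  [IsFractionRing (MvPolynomial (Fin 3) K ⧸ Ideal.span {F}) L]

/-- Forms of degree `n` dehomogenize to sections of degree `n`. -/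
lemma dehom_mem_S (hF : F.IsHomogeneous 3) (hF0 : F ≠ 0) (Q : CubicField K L)
    (hξ : Q.ξ = emb F L (X 0) / emb F L (X 1)) (hζ : Q.ζ = emb F L (X 2) / emb F L (X 1))
    {g : MvPolynomial (Fin 3) K} {n : ℕ} (hg : g.IsHomogeneous n) :
    dehom F L 1 g ∈ Q.level.S n := by
  have hx := emb_X_ne_zero L hF hF0 0
  have hy := emb_X_ne_zero L hF hF0 1
  rw [Level.mem_S]
  refine ⟨?_, ?_⟩
  · change _ ∈ Algebra.adjoin K {Q.ξ, Q.ζ}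
    rw [hξ, hζ, ← range_dehom_one L hy]
    exact ⟨g, rfl⟩
  · change Q.ξ ^ (-(n : ℤ)) * _ ∈ Algebra.adjoin K {Q.ξ⁻¹, Q.ξ⁻¹ * Q.ζ}
    rw [hξ, hζ, ← range_dehom_zero L hx hy]
    refine ⟨g, ?_⟩
    have h1 := emb_eq F L hy hg
    rw [emb_eq F L hx hg] at h1
    change dehom F L 0 g = _
    rw [zpow_neg, zpow_natCast, div_pow, inv_div, div_mul_eq_mul_div, ← h1]
    field_simp

lemma dehom_eq_zero (hF : F.IsHomogeneous 3) (hF0 : F ≠ 0) {g : MvPolynomial (Fin 3) K} {n : ℕ}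
    (hg : g.IsHomogeneous n) (h : dehom F L 1 g = 0) : F ∣ g := by
  rw [← emb_eq_zero (F := F) (L := L), emb_eq F L (emb_X_ne_zero L hF hF0 1) hg, h, mul_zero]

lemma dehom_eq_of_mk_eq (hF : F.IsHomogeneous 3) (hF0 : F ≠ 0) {g h : MvPolynomial (Fin 3) K}
    (hgh : Ideal.Quotient.mk (Ideal.span {F}) g = Ideal.Quotient.mk (Ideal.span {F}) h) :
    dehom F L 1 g = dehom F L 1 h := by
  rw [Ideal.Quotient.eq, Ideal.mem_span_singleton] at hgh
  obtain ⟨s, hs⟩ := hgh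
  have := congrArg (dehom F L 1) hs
  rw [map_sub, map_mul, dehom_F L hF (emb_X_ne_zero L hF hF0 1), zero_mul] at this
  exact sub_eq_zero.mp this

/-- The coefficients witnessing tight closure dehomogenize to sections. -/
lemma tight_dehom {p : ℕ} [Fact p.Prime] [CharP K p] (hF : F.IsHomogeneous 3) (hF0 : F ≠ 0)
    (Q : CubicField K L)
    (hξ : Q.ξ = emb F L (X 0) / emb F L (X 1)) (hζ : Q.ζ = emb F L (X 2) / emb F L (X 1))
    {r : ℕ} (G : Fin r → MvPolynomial (Fin 3) K) (d : Fin r → ℕ)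
    (hG : ∀ i, (G i).IsHomogeneous (d i)) (f : MvPolynomial (Fin 3) K) (N : ℕ)
    (h : ∀ (j : Fin 3) (e : ℕ), Ideal.Quotient.mk (Ideal.span {F}) (X j ^ N) *
        (Ideal.Quotient.mk (Ideal.span {F}) f) ^ p ^ e ∈
      bracketPow (Ideal.span (Set.range fun i => Ideal.Quotient.mk (Ideal.span {F}) (G i)))
        (p ^ e)) (n : ℕ) :
    Q.level.Tight p n (fun i => (d i : ℤ)) (fun i => dehom F L 1 (G i))
      (dehom F L 1 (homogeneousComponent n f)) := by
  have hy := emb_X_ne_zero L hF hF0 1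
  have key : ∀ (j : Fin 3) (e : ℕ), ∃ s : Fin r → L,
      (∀ i, s i ∈ Q.level.S ((p : ℤ) ^ e * ((n : ℤ) - d i) + N)) ∧
      dehom F L 1 (X j) ^ N * dehom F L 1 (homogeneousComponent n f) ^ p ^ e =
        ∑ i, s i * dehom F L 1 (G i) ^ p ^ e := by
    intro j e
    obtain ⟨s, hs, hsum⟩ := homogeneous_relation hF G d hG f N e j (h j e) n
    refine ⟨fun i => dehom F L 1 (s i), fun i => ?_, ?_⟩
    · rcases hs i with h0 | ⟨m, hm, hsm⟩
      · simp only [h0, map_zero]; exact Submodule.zero_mem _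
      · have := dehom_mem_S L hF hF0 Q hξ hζ hsm
        have hm' : (p : ℤ) ^ e * ((n : ℤ) - d i) + N = m := by
          have : (m : ℤ) + p ^ e * d i = p ^ e * n + N := by exact_mod_cast hm
          linear_combination -this
        rw [hm']; exact this
    · have := dehom_eq_of_mk_eq L hF hF0 hsum
      simpa only [map_mul, map_pow, map_sum] using this
  refine ⟨N, fun e => ?_⟩
  obtain ⟨s, hs, h1⟩ := key 0 e
  obtain ⟨s', hs', h2⟩ := key 1 e
  refine ⟨s, s', hs, hs', ?_, ?_⟩
  · rw [← h1, dehom_X]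
    change Q.ξ ^ N * _ = _
    rw [hξ]
  · rw [← h2, dehom_X, div_self hy, one_pow, one_mul]

end

section

variable {K : Type} [Field K] {F : MvPolynomial (Fin 3) K}
  {k' : Type} [Field k'] [Algebra K k']
  (L : Type) [Field L] [Algebra (MvPolynomial (Fin 3) K ⧸ Ideal.span {F}) L] [Algebra K L]
  [IsScalarTower K (MvPolynomial (Fin 3) K ⧸ Ideal.span {F}) L]

/-- The homogenization of a map of function fields: the image of a form `g` of degree `n` is the
monomial of degree `n` whose coefficient is the dehomogenization of `g`. -/
noncomputable def gradedMap (f : L →ₐ[K] k') :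
    MvPolynomial (Fin 3) K →ₐ[K] Polynomial k' :=
  aeval fun i => Polynomial.X * Polynomial.C (f (dehom F L 1 (X i)))

lemma gradedMap_of_homogeneous (f : L →ₐ[K] k')
    {g : MvPolynomial (Fin 3) K} {n : ℕ} (hg : g.IsHomogeneous n) :
    gradedMap (F := F) L f g = Polynomial.monomial n (f (dehom F L 1 g)) := by
  have h : (aeval (fun i => Polynomial.C (f (dehom F L 1 (X i)))) :
      MvPolynomial (Fin 3) K →ₐ[K] Polynomial k') =
      ((Polynomial.CAlgHom (R := k') (A := k')).restrictScalars K).comp (f.comp (dehom F L 1)) := by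
    ext i; simp
  rw [gradedMap, aeval_mul_eq hg, h]
  simp only [AlgHom.comp_apply, AlgHom.restrictScalars_apply, Polynomial.CAlgHom_apply]
  rw [mul_comm, Polynomial.C_mul_X_pow_eq_monomial]

lemma coeff_gradedMap (f : L →ₐ[K] k') (g : MvPolynomial (Fin 3) K) (n : ℕ) :
    (gradedMap (F := F) L f g).coeff n = f (dehom F L 1 (homogeneousComponent n g)) := by
  conv_lhs => rw [← sum_homogeneousComponent g]
  rw [map_sum, Polynomial.finset_sum_coeff]
  simp only [gradedMap_of_homogeneous L f (homogeneousComponent_isHomogeneous _ g),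
    Polynomial.coeff_monomial]
  rw [Finset.sum_ite_eq' ]
  split_ifs with h
  · rfl
  · rw [homogeneousComponent_eq_zero _ _ (by simpa using h), map_zero, map_zero]

end

/-- When `F(0,0,1) ≠ 0` and `∂F/∂z ≠ 0`, tight closure is contained in plus closure. The extension
is the section ring of a covering `E'` of the cubic curve, and the structure map `φ` is a power of
Frobenius followed by the pullback `θ` of forms. -/
lemma mem_plusClosure_of_generic {K : Type} [Field K] [IsAlgClosed K] {F : MvPolynomial (Fin 3) K}
    {p : ℕ} [Fact p.Prime] [CharP K p] (hF : F.IsHomogeneous 3)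
    (hz : eval (Pi.single 2 1) F ≠ 0) (hd : pderiv 2 F ≠ 0)
    (hdom : IsDomain (MvPolynomial (Fin 3) K ⧸ Ideal.span {F}))
    (hnorm : IsIntegrallyClosed (MvPolynomial (Fin 3) K ⧸ Ideal.span {F}))
    {r : ℕ} (G : Fin r → MvPolynomial (Fin 3) K) (d : Fin r → ℕ)
    (hG : ∀ i, (G i).IsHomogeneous (d i))
    (L : Type) [Field L] [Algebra (MvPolynomial (Fin 3) K ⧸ Ideal.span {F}) L] [Algebra K L]
    [IsScalarTower K (MvPolynomial (Fin 3) K ⧸ Ideal.span {F}) L]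
    [IsFractionRing (MvPolynomial (Fin 3) K ⧸ Ideal.span {F}) L]
    (f : MvPolynomial (Fin 3) K)
    (hf : Ideal.Quotient.mk (Ideal.span {F}) f ∈ tightClosure p
      (Ideal.span (Set.range fun i => Ideal.Quotient.mk (Ideal.span {F}) (G i)))) :
    Ideal.Quotient.mk (Ideal.span {F}) f ∈ plusClosure _
      (Ideal.span (Set.range fun i => Ideal.Quotient.mk (Ideal.span {F}) (G i))) := by
  have hF0 : F ≠ 0 := by rintro rfl; simp at hz
  have hp := (Fact.out : p.Prime)
  have hy := emb_X_ne_zero L hF hF0 1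
  haveI : CharP (MvPolynomial (Fin 3) K ⧸ Ideal.span {F}) p :=
    charP_of_injective_algebraMap
      (algebraMap K (MvPolynomial (Fin 3) K ⧸ Ideal.span {F})).injective p
  obtain ⟨Q, hξ, hζ, u, hu⟩ := exists_cubicField L hF hz
  obtain ⟨D, hD0, hD2⟩ := exists_derivation L hF hF0
  obtain ⟨N, hN⟩ := exists_X_pow_mul_mem (p := p) hF hF0 hdom hnorm
  have hd' : dehom F L 1 (pderiv 2 F) ≠ 0 := by
    intro h
    have h2 : (pderiv 2 F).IsHomogeneous 2 := hF.pderiv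
    have h1 := dehom_eq_zero L hF hF0 h2 h
    exact hd (eq_zero_of_dvd_of_totalDegree_lt hF hF0 (lt_of_le_of_lt h2.totalDegree_le (by omega))
      ((Ideal.Quotient.eq_zero_iff_dvd _ _).mpr h1))
  have hA : ∀ g, dehom F L 1 g ∈ Q.level.A := by
    intro g
    change _ ∈ Algebra.adjoin K {Q.ξ, Q.ζ}
    rw [hξ, hζ, ← range_dehom_one L hy]
    exact ⟨g, rfl⟩
  have hDA : ∀ a ∈ Q.level.A, D a ∈ Q.level.A := by
    intro a ha
    have ha' : a ∈ Algebra.adjoin K {Q.ξ, Q.ζ} := ha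
    induction ha' using Algebra.adjoin_induction with
    | mem x hx =>
      rcases hx with rfl | rfl
      · rw [hξ, hD0]; exact hA _
      · rw [hζ, hD2]; exact Q.level.A.neg_mem (hA _)
    | algebraMap c => rw [D.map_algebraMap]; exact Q.level.A.zero_mem
    | add x y hx hy h1 h2 => rw [map_add]; exact Q.level.A.add_mem (h1 hx) (h2 hy)
    | mul x y hx hy h1 h2 =>
      rw [D.leibniz, smul_eq_mul, smul_eq_mul]
      exact Q.level.A.add_mem (Q.level.A.mul_mem hx (h2 hy)) (Q.level.A.mul_mem hy (h1 hx))
  obtain ⟨k', _, _, E', fk, e, hE, hW⟩ := Q.exists_ext_pow_mem_W (p := p) D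
    (by rw [hξ, hD0]; exact hd') hDA (fun h => hd' (by rw [hu, h, mul_zero]))
    (fun i => (d i : ℤ)) (f.totalDegree + 1) (fun i => dehom F L 1 (G i))
    (fun i => dehom_mem_S L hF hF0 Q hξ hζ (hG i))
    (fun n => dehom F L 1 (homogeneousComponent n f))
    (fun n => dehom_mem_S L hF hF0 Q hξ hζ (homogeneousComponent_isHomogeneous n f))
    (fun n => tight_dehom L hF hF0 Q hξ hζ G d hG f N (fun j e => hN _ _ hf j e) n)
  have hmem : ∀ g, gradedMap (F := F) L fk g ∈ E'.sectionRing := by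
    intro g n
    rw [coeff_gradedMap]
    exact hE.S (dehom_mem_S L hF hF0 Q hξ hζ (homogeneousComponent_isHomogeneous n g))
  let θ : (MvPolynomial (Fin 3) K ⧸ Ideal.span {F}) →ₐ[K] E'.sectionRing :=
    Ideal.Quotient.liftₐ (Ideal.span {F}) ((gradedMap (F := F) L fk).codRestrict E'.sectionRing hmem) (by
      intro a ha
      obtain ⟨s, rfl⟩ := Ideal.mem_span_singleton.mp ha
      rw [map_mul]
      convert zero_mul _
      apply Subtype.ext
      change gradedMap (F := F) L fk F = 0
      rw [gradedMap_of_homogeneous L fk hF, dehom_F L hF hy, map_zero, map_zero])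
  have hθ : ∀ g, ((θ (Ideal.Quotient.mk (Ideal.span {F}) g) : E'.sectionRing) : Polynomial k') =
      gradedMap (F := F) L fk g := fun g => rfl
  have hθinj : Function.Injective θ := by
    rw [injective_iff_map_eq_zero]
    intro a ha
    obtain ⟨g, rfl⟩ := Ideal.Quotient.mk_surjective a
    have h0 : gradedMap (F := F) L fk g = 0 := by rw [← hθ, ha]; rfl
    rw [← sum_homogeneousComponent g, map_sum]
    refine Finset.sum_eq_zero fun n _ => ?_
    have h1 := coeff_gradedMap (F := F) L fk g n
    rw [h0, Polynomial.coeff_zero] at h1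
    rw [Ideal.Quotient.eq_zero_iff_dvd]
    exact dehom_eq_zero L hF hF0 (homogeneousComponent_isHomogeneous n g)
      ((map_eq_zero fk).mp h1.symm)
  have hθfin : (θ : (MvPolynomial (Fin 3) K ⧸ Ideal.span {F}) →+* E'.sectionRing).Finite := by
    refine E'.finite_sectionRing θ (Ideal.Quotient.mk _ (X 0)) (Ideal.Quotient.mk _ (X 1)) ?_ ?_
    · rw [hθ, gradedMap_of_homogeneous L fk (isHomogeneous_X _ _), dehom_X, ← hξ, ← hE.ξ]
      rfl
    · rw [hθ, gradedMap_of_homogeneous L fk (isHomogeneous_X _ _), dehom_X, div_self hy, map_one]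
  set φ : (MvPolynomial (Fin 3) K ⧸ Ideal.span {F}) →+* E'.sectionRing :=
    (θ : (MvPolynomial (Fin 3) K ⧸ Ideal.span {F}) →+* E'.sectionRing).comp (iterateFrobenius _ p e) with hφ
  have hφ' : ∀ a, φ a = θ a ^ p ^ e := by
    intro a
    rw [hφ, RingHom.comp_apply, iterateFrobenius_def, map_pow]; rfl
  refine ⟨E'.sectionRing, inferInstance, inferInstance, φ,
    hθinj.comp (iterateFrobenius_inj _ p e), hθfin.comp (iterateFrobenius_finite (K := K) p e), ?_⟩
  rw [← sum_homogeneousComponent f, map_sum, map_sum]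
  refine Ideal.sum_mem _ fun n hn => ?_
  obtain ⟨s, hs, hsum⟩ := hW n (Finset.mem_range.mp hn)
  -- The coefficients `s i` become homogeneous elements of degree `p ^ e * (n - d i)`; they vanish when
  -- this degree is negative.
  have hS : ∀ i, ∃ w : E'.sectionRing, (w : Polynomial k') *
      Polynomial.monomial (d i * p ^ e) (fk (dehom F L 1 (G i)) ^ p ^ e) =
        Polynomial.monomial (n * p ^ e) (s i * fk (dehom F L 1 (G i)) ^ p ^ e) := by
    intro i
    rcases lt_or_ge n (d i) with hlt | hge
    · refine ⟨0, ?_⟩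
      have : s i = 0 := by
        refine E'.S_neg ?_ (hs i)
        have h1 : 0 < p ^ e := pow_pos hp.pos e
        have : (p ^ e) * n < p ^ e * d i := Nat.mul_lt_mul_of_pos_left hlt h1
        rw [sub_neg]
        change ((p ^ e : ℕ) : ℤ) * (n : ℤ) < ((p ^ e : ℕ) : ℤ) * (d i : ℤ)
        exact_mod_cast this
      rw [this]; simp
    · obtain ⟨c, rfl⟩ := Nat.exists_eq_add_of_le hge
      refine ⟨⟨Polynomial.monomial (c * p ^ e) (s i), E'.monomial_mem ?_⟩, ?_⟩
      · convert hs i using 2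
        push_cast; ring
      · change Polynomial.monomial _ _ * _ = _
        rw [Polynomial.monomial_mul_monomial]
        congr 2
        ring
  choose w hw using hS
  have : φ (Ideal.Quotient.mk (Ideal.span {F}) (homogeneousComponent n f)) =
      ∑ i, w i * φ (Ideal.Quotient.mk (Ideal.span {F}) (G i)) := by
    apply Subtype.ext
    rw [AddSubmonoidClass.coe_finset_sum]
    simp only [hφ', MulMemClass.coe_mul, SubmonoidClass.coe_pow, hθ]
    simp only [gradedMap_of_homogeneous L fk (homogeneousComponent_isHomogeneous n f),
      gradedMap_of_homogeneous L fk (hG _), Polynomial.monomial_pow, hw]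
    rw [hsum, map_sum]
  rw [this]
  exact Ideal.sum_mem _ fun i _ => Ideal.mul_mem_left _ _
    (Ideal.mem_map_of_mem φ (Ideal.subset_span ⟨i, rfl⟩))

end

/-! ### Reduction to general position -/

section

open MvPolynomial

/-- Some partial derivative of `F` is nonzero: otherwise the Jacobian ideal of the smooth cubic would
reduce to `(F)`, which contains no power of a variable. -/
lemma exists_pderiv_ne_zero {K : Type} [Field K] [IsAlgClosed K] {F : MvPolynomial (Fin 3) K}
    (hF : F.IsHomogeneous 3) (hF0 : F ≠ 0)
    (hdom : IsDomain (MvPolynomial (Fin 3) K ⧸ Ideal.span {F}))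
    (hnorm : IsIntegrallyClosed (MvPolynomial (Fin 3) K ⧸ Ideal.span {F})) :
    ∃ i, pderiv i F ≠ 0 := by
  by_contra! h
  obtain ⟨N, hN⟩ := exists_X_pow_mem_jacobian hF hF0 hdom hnorm
  have h0 := hN 0
  have h1 : Ideal.span (insert F (Set.range fun j => pderiv j F)) ≤ Ideal.span {F} := by
    rw [Ideal.span_le]
    rintro _ (rfl | ⟨j, rfl⟩)
    · exact Ideal.mem_span_singleton_self _
    · simp only [h j]; exact Ideal.zero_mem _
  have h2 := Ideal.Quotient.eq_zero_iff_mem.mpr (h1 h0)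
  rw [map_pow] at h2
  exact X_ne_zero (R := K) 0 (eq_zero_of_dvd_of_totalDegree_lt hF hF0 (by simp)
    (eq_zero_of_pow_eq_zero h2))

/-- A direction in which `F` does not vanish and along which it has nonzero derivative. -/
lemma exists_good_direction {K : Type} [Field K] [IsAlgClosed K] {F : MvPolynomial (Fin 3) K}
    (hF : F.IsHomogeneous 3) (hF0 : F ≠ 0)
    (hdom : IsDomain (MvPolynomial (Fin 3) K ⧸ Ideal.span {F}))
    (hnorm : IsIntegrallyClosed (MvPolynomial (Fin 3) K ⧸ Ideal.span {F})) :
    ∃ v, eval v F ≠ 0 ∧ dirDeriv v F ≠ 0 := by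
  obtain ⟨v₀, hv₀⟩ := exists_eval_ne_zero hF0
  by_cases h : dirDeriv v₀ F = 0
  · obtain ⟨i, hi⟩ := exists_pderiv_ne_zero hF hF0 hdom hnorm
    obtain ⟨t, ht⟩ := exists_eval_add_ne_zero hF v₀ (Pi.single i 1) hv₀
    refine ⟨_, ht, ?_⟩
    have : dirDeriv (Pi.single i 1 + t • v₀) F = pderiv i F + C t * dirDeriv v₀ F := by
      simp only [dirDeriv, Pi.add_apply, Pi.smul_apply, smul_eq_mul, map_add, map_mul, add_mul,
        Finset.sum_add_distrib, Finset.mul_sum, mul_assoc]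
      congr 1
      rw [Finset.sum_eq_single i]
      · simp
      · intro j _ hj; simp [hj]
      · simp
    rwa [this, h, mul_zero, add_zero]
  · exact ⟨v₀, hv₀, h⟩

/-- A linear change of coordinates moves a direction `v` with `F(v) ≠ 0` and `∂F/∂v ≠ 0` to the
`z`-axis. -/
theorem tightClosure_subset_plusClosure {K : Type} [Field K] [IsAlgClosed K]
    {p : ℕ} [Fact p.Prime] [CharP K p]
    {F : MvPolynomial (Fin 3) K} (hF : F.IsHomogeneous 3) (hF0 : F ≠ 0)
    (hdom : IsDomain (MvPolynomial (Fin 3) K ⧸ Ideal.span {F}))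
    (hnorm : IsIntegrallyClosed (MvPolynomial (Fin 3) K ⧸ Ideal.span {F}))
    (I : Ideal (MvPolynomial (Fin 3) K ⧸ Ideal.span {F}))
    (hgen : ∃ S : Set (MvPolynomial (Fin 3) K), (∀ g ∈ S, ∃ dg, g.IsHomogeneous dg) ∧
      I = Ideal.span (Ideal.Quotient.mk (Ideal.span {F}) '' S)) :
    tightClosure p I ⊆ plusClosure (MvPolynomial (Fin 3) K ⧸ Ideal.span {F}) I := by
  intro a ha
  obtain ⟨S, hS, hI⟩ := hgen
  obtain ⟨r, G, d, hG, hIG⟩ := exists_finite_generators I S hS hI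
  obtain ⟨v, hv, hdv⟩ := exists_good_direction hF hF0 hdom hnorm
  have hv0 : v ≠ 0 := by rintro rfl; simp [dirDeriv] at hdv
  obtain ⟨M, N, hMN, hNM, hM⟩ := exists_matrix_col v hv0
  let φ := quotLinEquiv M N hMN hNM F
  have hMv : M.mulVec (Pi.single 2 1) = v := by
    ext i; simp [hM]
  have hinj : Function.Injective (linSubst M) := (linEquiv M N hMN hNM).injective
  have hdom' : IsDomain (MvPolynomial (Fin 3) K ⧸ Ideal.span {linSubst M F}) :=
    φ.symm.toMulEquiv.isDomain
  have hnorm' : IsIntegrallyClosed (MvPolynomial (Fin 3) K ⧸ Ideal.span {linSubst M F}) :=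
    IsIntegrallyClosed.of_equiv φ
  haveI : CharP (MvPolynomial (Fin 3) K ⧸ Ideal.span {F}) p :=
    charP_of_injective_algebraMap
      (algebraMap K (MvPolynomial (Fin 3) K ⧸ Ideal.span {F})).injective p
  haveI : CharP (MvPolynomial (Fin 3) K ⧸ Ideal.span {linSubst M F}) p :=
    charP_of_injective_algebraMap
      (algebraMap K (MvPolynomial (Fin 3) K ⧸ Ideal.span {linSubst M F})).injective p
  obtain ⟨f, rfl⟩ := Ideal.Quotient.mk_surjective a
  have hmap : I.map φ.toRingHom = Ideal.span (Set.range fun i =>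
      Ideal.Quotient.mk (Ideal.span {linSubst M F}) (linSubst M (G i))) := by
    rw [hIG, Ideal.map_span, ← Set.range_comp]
    rfl
  refine mem_plusClosure_of_map φ I _ ?_
  have h1 := mem_tightClosure_map p φ I _ ha
  rw [hmap] at h1 ⊢
  refine mem_plusClosure_of_generic (isHomogeneous_linSubst M hF) ?_ ?_ hdom' hnorm'
    (fun i => linSubst M (G i)) d (fun i => isHomogeneous_linSubst M (hG i))
    (FractionRing (MvPolynomial (Fin 3) K ⧸ Ideal.span {linSubst M F})) (linSubst M f) h1
  · rw [eval_linSubst, hMv]; exact hv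
  · rw [pderiv_linSubst]
    have : ∑ j, C (M j 2) * linSubst M (pderiv j F) = linSubst M (dirDeriv v F) := by
      simp [dirDeriv, map_sum, map_mul, linSubst_C, hM]
    rw [this]
    exact fun h => hdv (hinj (by rw [h, map_zero]))

/-- Every ideal of the polynomial ring itself is tightly closed. -/
lemma tightClosure_subset_of_eq_zero {K : Type} [Field K] [IsAlgClosed K]
    {p : ℕ} [Fact p.Prime] [CharP K p]
    (I : Ideal (MvPolynomial (Fin 3) K ⧸ Ideal.span {(0 : MvPolynomial (Fin 3) K)})) :
    tightClosure p I ⊆ I := by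
  intro a ha
  have hbij : Function.Bijective (Ideal.Quotient.mk (Ideal.span {(0 : MvPolynomial (Fin 3) K)})) := by
    refine ⟨?_, Ideal.Quotient.mk_surjective⟩
    rw [injective_iff_map_eq_zero]
    intro g hg
    simpa [Ideal.Quotient.eq_zero_iff_dvd] using hg
  let φ := (RingEquiv.ofBijective _ hbij).symm
  haveI : CharP (MvPolynomial (Fin 3) K ⧸ Ideal.span {(0 : MvPolynomial (Fin 3) K)}) p :=
    charP_of_injective_ringHom hbij.1 p
  obtain ⟨c, hc, e₀, h⟩ := mem_tightClosure_map p φ I a ha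
  have := mem_of_tight_polynomial _ c (φ a) hc e₀ h
  rw [Ideal.mem_map_iff_of_surjective φ.toRingHom φ.surjective] at this
  obtain ⟨b, hb, hab⟩ := this
  rwa [← φ.injective hab]

end

open MvPolynomial

/-- Let `K` be an algebraically closed field of characteristic `p > 0`
and `F ∈ K[x,y,z]` homogeneous of degree `3` such that `R = K[x,y,z]/(F)` is a normal
domain. Then for every ideal `I` of `R` generated by homogeneous elements whose radical is
the irrelevant maximal ideal `R_+` (the image of `(x,y,z)`), tight closure and plus
closure coincide: `I^* = I^+`. -/
theorem statement13 (K : Type) [Field K] [IsAlgClosed K]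
    (p : ℕ) [Fact p.Prime] [CharP K p]
    (F : MvPolynomial (Fin 3) K) (hF : F.IsHomogeneous 3)
    (hdom : IsDomain (MvPolynomial (Fin 3) K ⧸ Ideal.span {F}))
    (hnorm : IsIntegrallyClosed (MvPolynomial (Fin 3) K ⧸ Ideal.span {F}))
    (I : Ideal (MvPolynomial (Fin 3) K ⧸ Ideal.span {F}))
    (hgen : ∃ S : Set (MvPolynomial (Fin 3) K), (∀ g ∈ S, ∃ dg, g.IsHomogeneous dg) ∧
      I = Ideal.span (Ideal.Quotient.mk (Ideal.span {F}) '' S))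
    (hrad : I.radical =
      Ideal.span (Set.range fun i => Ideal.Quotient.mk (Ideal.span {F}) (X i))) :
    tightClosure p I = plusClosure (MvPolynomial (Fin 3) K ⧸ Ideal.span {F}) I := by
  haveI : CharP (MvPolynomial (Fin 3) K ⧸ Ideal.span {F}) p :=
    charP_of_injective_algebraMap
      (algebraMap K (MvPolynomial (Fin 3) K ⧸ Ideal.span {F})).injective p
  refine Set.Subset.antisymm ?_ (plusClosure_subset_tightClosure p I)
  by_cases hF0 : F = 0
  · subst hF0
    intro a ha
    exact ⟨_, inferInstance, hdom, RingHom.id _, Function.injective_id, RingHom.Finite.id _,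
      by rw [Ideal.map_id]; exact tightClosure_subset_of_eq_zero I ha⟩
  · exact tightClosure_subset_plusClosure hF hF0 hdom hnorm I hgen
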